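/- There exist constants C > 0 and Q₀ such that for every prime q ≥ Q₀ there is an integer a with 1 ≤ a < q and gcd(a,q) = 1 for which every partial quotient in the continued fraction expansion a/q = [0;c₁,…,c_s] satisfies c_j ≤ C · log q / log log q for all j = 1,…,s. -/

import Mathlib

/-- The value of the regular continued fraction `[0; c₁, …, c_s]`. -/
def cfVal (l : List ℕ) : ℚ :=
  l.foldr (fun c r => 1 / ((c : ℚ) + r)) 0

/-- `IsCFOf x l` means that `l = [c₁, …, c_s]` is the regular continued fraction
expansion of `x`, i.e. `x = [0; c₁, …, c_s]`, all partial quotients are positive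
integers and the last one is at least `2`. -/
def IsCFOf (x : ℚ) (l : List ℕ) : Prop :=
  (∀ c ∈ l, 1 ≤ c) ∧ (∀ h : l ≠ [], 2 ≤ l.getLast h) ∧ cfVal l = x

/-!
Fix a prime `p` and choose `m`, with `m + 3` a power of two, of size about `(log p) ^ (1 / 4)`, and
`N` of size about `p ^ (1 / m)`. All partial quotients of `r / p` are at most `M` as soon as
`x * |y| ≥ p / M` whenever `y ≡ r * x` modulo `p` and `0 < x < p`. There are three ranges to check.

For `x ≤ X`, where `X` is about `√p / N`, the inequality holds if `r` is within `N` of the set `A`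
of residues `a` for which `a / p` is close to a real number with bounded first digits. For `|y| ≤ X`
the same applies to `r⁻¹`. Between these ranges few residues fail: their number is at most a
constant times `p / M * log (p / X ^ 2)`, and this logarithm is `O(log p / m)`. With `M` of size
`log p / log log p` the density of `A` is only a small negative power of `log p`, but the factor
`1 / m` makes up for this loss. So it suffices that the residues `r` with both `r` and `r⁻¹` within
`N` of `A` are about as many as expected.

This follows from a spectral gap for the operator `T` on functions on the projective line that
averages over an interval of `N` translations, inverts, and averages back. A power of `T` is an
average of Möbius transformations given by products of digit matrices; its Hilbert–Schmidt norm
involves fixed point counts, hence values of the quadratic character of discriminants. The average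
over one further digit turns these into correlations of the character along an interval, whose high
moments Stepanov's method bounds, while words with parallel continuants modulo `p` are rare because
continuants of words of length `m` stay below `p`.
-/

namespace Korobov

open MulAction (fixedBy)
open Matrix (GeneralLinearGroup)
open Matrix.GeneralLinearGroup (upperRightHom)
open scoped MatrixGroups

/-! ### Stepanov's method for quadratic character sums -/

section Stepanov
open Polynomial

section TwistedDerivative
variable {R : Type*} [CommRing R]

/-- The `k`-th derivative of `f ^ e * r` with the factor `f ^ (e - k)` removed, as a linear
function of `r`. -/
noncomputable def twistedDerivative (f : R[X]) (e : ℕ) : ℕ → R[X] →ₗ[R] R[X]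
  | 0 => LinearMap.id
  | k + 1 => LinearMap.mulLeft R (C ((e : R) - k) * derivative f) ∘ₗ twistedDerivative f e k
      + LinearMap.mulLeft R f ∘ₗ derivative ∘ₗ twistedDerivative f e k

lemma twistedDerivative_succ_apply (f : R[X]) (e k : ℕ) (r : R[X]) :
    twistedDerivative f e (k + 1) r = C ((e : R) - k) * derivative f * twistedDerivative f e k r
      + f * derivative (twistedDerivative f e k r) := by
  simp [twistedDerivative, mul_assoc]

lemma iterate_derivative_pow_mul (f : R[X]) {e k : ℕ} (hk : k ≤ e) (r : R[X]) :
    derivative^[k] (f ^ e * r) = f ^ (e - k) * twistedDerivative f e k r := by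
  induction k with
  | zero => simp [twistedDerivative]
  | succ k ih =>
    rw [Function.iterate_succ_apply', ih (by omega), twistedDerivative_succ_apply]
    obtain ⟨t, rfl⟩ := Nat.exists_eq_add_of_le' hk
    rw [show t + (k + 1) - k = t + 1 by omega, Nat.add_sub_cancel, derivative_mul, derivative_pow]
    push_cast
    simp only [map_sub, map_add, map_natCast, map_one]
    ring

lemma natDegree_twistedDerivative_le (f : R[X]) (e k : ℕ) (r : R[X]) :
    (twistedDerivative f e k r).natDegree ≤ r.natDegree + k * f.natDegree := by
  induction k with
  | zero => simp [twistedDerivative]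
  | succ k ih =>
    rw [twistedDerivative_succ_apply, add_one_mul]
    refine (natDegree_add_le _ _).trans (max_le ?_ ?_) <;> refine natDegree_mul_le.trans ?_
    · have := (natDegree_C_mul_le ((e : R) - k) (derivative f)).trans (natDegree_derivative_le f)
      omega
    · have := natDegree_derivative_le (twistedDerivative f e k r)
      omega

lemma iterate_derivative_X_pow_char_mul (p : ℕ) [CharP R p] (j k : ℕ) (g : R[X]) :
    derivative^[k] (X ^ (p * j) * g) = X ^ (p * j) * derivative^[k] g := by
  induction k with
  | zero => rfl
  | succ k ih =>
    rw [Function.iterate_succ_apply', ih, Function.iterate_succ_apply', derivative_mul]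
    simp [derivative_X_pow]

end TwistedDerivative

section Domain
variable {R : Type*} [CommRing R] [IsDomain R]

lemma eq_zero_of_C_mul_sq_eq_mul_sq {f r s : R[X]} {c ρ : R} (hc : c ≠ 0)
    (hρ : Odd (f.rootMultiplicity ρ)) (h : C c * s ^ 2 = f * r ^ 2) : r = 0 ∧ s = 0 := by
  have hf : f ≠ 0 := by rintro rfl; simp at hρ
  have hC : C c ≠ 0 := C_ne_zero.mpr hc
  by_cases hr : r = 0
  · simpa [hr, hc] using h
  by_cases hs : s = 0
  · simp [hs, hf, hr] at h
  have hmult := congrArg (rootMultiplicity ρ) h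
  rw [pow_two, pow_two, rootMultiplicity_mul (mul_ne_zero hC (mul_ne_zero hs hs)),
    rootMultiplicity_mul (mul_ne_zero hf (mul_ne_zero hr hr)), rootMultiplicity_C,
    rootMultiplicity_mul (mul_ne_zero hr hr), rootMultiplicity_mul (mul_ne_zero hs hs)] at hmult
  obtain ⟨k, hk⟩ := hρ
  omega

lemma mul_card_le_natDegree {P : R[X]} {l : ℕ} {S : Finset R}
    (hS : ∀ x ∈ S, l ≤ P.rootMultiplicity x) : l * S.card ≤ P.natDegree := by
  classical
  calc l * S.card ≤ ∑ x ∈ S, P.roots.count x := by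
        rw [mul_comm, ← smul_eq_mul]
        exact S.card_nsmul_le_sum _ _ fun x hx => (count_roots P).symm ▸ hS x hx
    _ = (P.roots.filter (· ∈ S)).card := by
        rw [← Multiset.sum_count_eq_card fun x hx => (Multiset.mem_filter.mp hx).2]
        exact Finset.sum_congr rfl fun x hx => (Multiset.count_filter_of_pos hx).symm
    _ ≤ P.roots.card := Multiset.card_le_card (Multiset.filter_le _ _)
    _ ≤ P.natDegree := card_roots' P

end Domain

variable {p : ℕ} [Fact p.Prime]

lemma X_pow_dvd_pow_card_sub_C (f : (ZMod p)[X]) : X ^ p ∣ f ^ p - C (f.eval 0) := by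
  have hX : X ∣ f - C (f.eval 0) := by
    simpa using X_sub_C_dvd_sub_C_eval (a := (0 : ZMod p)) (p := f)
  rw [← ZMod.expand_card f]
  simpa [map_sub, expand_C, expand_X] using map_dvd (expand (ZMod p) p) hX

section Nonvanishing
variable {f : (ZMod p)[X]} {ρ : ZMod p} {c n : ℕ}

lemma eq_zero_of_X_pow_dvd_add_pow_mul {r s : (ZMod p)[X]} (h0 : f.eval 0 ≠ 0)
    (hρ : Odd (f.rootMultiplicity ρ)) (hc : p = 2 * c + 1) (hn : n + f.natDegree ≤ c)
    (hr : r.natDegree ≤ n) (hs : s.natDegree ≤ n) (hdvd : X ^ p ∣ r + f ^ c * s) :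
    r = 0 ∧ s = 0 := by
  refine eq_zero_of_C_mul_sq_eq_mul_sq h0 hρ (sub_eq_zero.mp ?_)
  -- Squaring `r ≡ -f ^ c * s` and using `f ^ (2 * c + 1) = f ^ p ≡ f(0)` modulo `X ^ p`.
  have hdvd' : X ^ p ∣ C (f.eval 0) * s ^ 2 - f * r ^ 2 := by
    have hfp : f ^ p = f * f ^ c * f ^ c := by
      rw [congrArg (f ^ ·) hc]; ring
    have : C (f.eval 0) * s ^ 2 - f * r ^ 2 =
        -(f ^ p - C (f.eval 0)) * s ^ 2 + (r + f ^ c * s) * (f * (f ^ c * s - r)) := by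
      rw [hfp]; ring
    rw [this]
    exact dvd_add ((dvd_neg.mpr (X_pow_dvd_pow_card_sub_C f)).mul_right _) (hdvd.mul_right _)
  have hdeg : (C (f.eval 0) * s ^ 2 - f * r ^ 2).natDegree ≤ 2 * c := by
    have hs2 := natDegree_pow_le (p := s) (n := 2)
    have hr2 := natDegree_pow_le (p := r) (n := 2)
    refine (natDegree_sub_le _ _).trans (max_le ?_ ?_)
    · exact (natDegree_C_mul_le _ _).trans (by omega)
    · exact natDegree_mul_le.trans (by omega)
  by_contra hne
  have := natDegree_le_of_dvd hdvd' hne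
  rw [natDegree_X_pow] at this
  omega

lemma eq_zero_of_sum_X_pow_mul_eq_zero {J : ℕ} {r s : Fin J → (ZMod p)[X]} (h0 : f.eval 0 ≠ 0)
    (hρ : Odd (f.rootMultiplicity ρ)) (hc : p = 2 * c + 1) (hn : n + f.natDegree ≤ c)
    (hr : ∀ j, (r j).natDegree ≤ n) (hs : ∀ j, (s j).natDegree ≤ n)
    (hsum : ∑ j : Fin J, X ^ (p * j) * (r j + f ^ c * s j) = 0) (j : Fin J) :
    r j = 0 ∧ s j = 0 := by
  induction j using WellFoundedLT.induction with
  | _ j ih =>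
    refine eq_zero_of_X_pow_dvd_add_pow_mul h0 hρ hc hn (hr j) (hs j) ?_
    suffices hdvd : X ^ (p * j) * X ^ p ∣ X ^ (p * (j : ℕ)) * (r j + f ^ c * s j) from
      (mul_dvd_mul_iff_left (pow_ne_zero _ X_ne_zero)).mp hdvd
    rw [← Finset.add_sum_erase _ _ (Finset.mem_univ j)] at hsum
    rw [eq_neg_of_add_eq_zero_left hsum, dvd_neg]
    refine Finset.dvd_sum fun i hi => ?_
    rcases lt_or_gt_of_ne (Finset.ne_of_mem_erase hi) with hij | hij
    · simp [ih i hij]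
    · rw [← pow_add, ← mul_add_one]
      exact (pow_dvd_pow _ (Nat.mul_le_mul_left _ hij)).mul_right _

end Nonvanishing

section Auxiliary
variable {J n : ℕ}

/-- Parameters `(r, s)` of Stepanov's auxiliary polynomial: `J` pairs of polynomials of degree less
than `n`. -/
abbrev StepanovParams (p J n : ℕ) [Fact p.Prime] : Type :=
  (Fin J → degreeLT (ZMod p) n) × (Fin J → degreeLT (ZMod p) n)

lemma natDegree_le_of_mem_degreeLT {R : Type*} [CommRing R] (r : degreeLT R n) :
    (r : R[X]).natDegree ≤ n :=
  natDegree_le_of_degree_le (mem_degreeLT.mp r.2).le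

/-- Stepanov's auxiliary polynomial, designed to vanish to order `l` wherever `f ^ c = a`. -/
noncomputable def stepanovPoly (f : (ZMod p)[X]) (c l : ℕ) (u : StepanovParams p J n) :
    (ZMod p)[X] :=
  ∑ j : Fin J, X ^ (p * j) * (f ^ l * (u.1 j : (ZMod p)[X]) + f ^ (l + c) * (u.2 j : (ZMod p)[X]))

/-- At points with `f ^ c = a`, the `k`-th derivative of `stepanovPoly f c l u` equals, up to a
power of `f`, this polynomial of much smaller degree, because `x ^ p = x`. -/
noncomputable def reducedDerivative (f : (ZMod p)[X]) (a : ZMod p) (c l k : ℕ) :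
    StepanovParams p J n →ₗ[ZMod p] (ZMod p)[X] :=
  ∑ j : Fin J, LinearMap.mulLeft (ZMod p) (X ^ (j : ℕ)) ∘ₗ
    (twistedDerivative f l k ∘ₗ (degreeLT (ZMod p) n).subtype ∘ₗ LinearMap.proj j ∘ₗ
        LinearMap.fst _ _ _ +
      a • twistedDerivative f (l + c) k ∘ₗ (degreeLT (ZMod p) n).subtype ∘ₗ LinearMap.proj j ∘ₗ
        LinearMap.snd _ _ _)

lemma reducedDerivative_apply (f : (ZMod p)[X]) (a : ZMod p) (c l k : ℕ)
    (u : StepanovParams p J n) :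
    reducedDerivative f a c l k u = ∑ j : Fin J, X ^ (j : ℕ) *
      (twistedDerivative f l k (u.1 j) + a • twistedDerivative f (l + c) k (u.2 j)) := by
  simp [reducedDerivative]

lemma natDegree_reducedDerivative_lt {f : (ZMod p)[X]} (hf : 1 ≤ f.natDegree) (a : ZMod p) (c : ℕ)
    {l k : ℕ} (hk : k < l) (u : StepanovParams p J n) :
    (reducedDerivative f a c l k u).natDegree < n + l * f.natDegree + J := by
  have hkl : k * f.natDegree + f.natDegree ≤ l * f.natDegree := by
    rw [← add_one_mul]; exact Nat.mul_le_mul_right _ hk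
  suffices (reducedDerivative f a c l k u).natDegree ≤ n + l * f.natDegree + J - 1 by omega
  rw [reducedDerivative_apply]
  refine natDegree_sum_le_of_forall_le _ _ fun j _ => natDegree_mul_le.trans ?_
  have hterm : (twistedDerivative f l k (u.1 j) +
      a • twistedDerivative f (l + c) k (u.2 j)).natDegree ≤ n + k * f.natDegree := by
    refine (natDegree_add_le _ _).trans (max_le ?_ ((natDegree_smul_le _ _).trans ?_)) <;>
      exact (natDegree_twistedDerivative_le _ _ _ _).trans
        (Nat.add_le_add_right (natDegree_le_of_mem_degreeLT _) _)
  rw [natDegree_X_pow]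
  omega

lemma exists_ne_zero_forall_reducedDerivative_eq_zero {f : (ZMod p)[X]} (hf : 1 ≤ f.natDegree)
    (a : ZMod p) (c : ℕ) {l : ℕ} (hrank : l * (n + l * f.natDegree + J) < 2 * (J * n)) :
    ∃ u : StepanovParams p J n, u ≠ 0 ∧ ∀ k < l, reducedDerivative f a c l k u = 0 := by
  set T := n + l * f.natDegree + J
  let coeffs : StepanovParams p J n →ₗ[ZMod p] (Fin l → Fin T → ZMod p) :=
    LinearMap.pi fun k => LinearMap.pi fun t =>
      lcoeff (ZMod p) (t : ℕ) ∘ₗ reducedDerivative f a c l k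
  have : Module.Finite (ZMod p) (degreeLT (ZMod p) n) :=
    Module.Finite.equiv (degreeLTEquiv (ZMod p) n).symm
  have hker : LinearMap.ker coeffs ≠ ⊥ := by
    apply LinearMap.ker_ne_bot_of_finrank_lt
    simp only [Module.finrank_prod, Module.finrank_pi_fintype, Module.finrank_self,
      (degreeLTEquiv (ZMod p) n).finrank_eq, Finset.sum_const, Finset.card_univ, Fintype.card_fin,
      smul_eq_mul, mul_one]
    omega
  obtain ⟨u, hu, hu0⟩ := Submodule.exists_mem_ne_zero_of_ne_bot hker
  refine ⟨u, hu0, fun k hk => ?_⟩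
  ext t
  by_cases ht : t < T
  · simpa [coeffs] using congrFun (congrFun (LinearMap.mem_ker.mp hu) ⟨k, hk⟩) ⟨t, ht⟩
  · rw [coeff_zero]
    have := natDegree_reducedDerivative_lt hf a c hk u
    exact coeff_eq_zero_of_natDegree_lt (by omega)

lemma stepanovPoly_ne_zero {f : (ZMod p)[X]} {ρ : ZMod p} {c : ℕ} (h0 : f.eval 0 ≠ 0)
    (hρ : Odd (f.rootMultiplicity ρ)) (hc : p = 2 * c + 1) (hn : n + f.natDegree ≤ c) (l : ℕ)
    {u : StepanovParams p J n} (hu : u ≠ 0) : stepanovPoly f c l u ≠ 0 := by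
  have hf : f ≠ 0 := by rintro rfl; simp at h0
  have hfactor : stepanovPoly f c l u =
      f ^ l * ∑ j : Fin J, X ^ (p * j) *
        ((u.1 j : (ZMod p)[X]) + f ^ c * (u.2 j : (ZMod p)[X])) := by
    rw [stepanovPoly, Finset.mul_sum]
    exact Finset.sum_congr rfl fun j _ => by ring
  intro hzero
  rw [hfactor, mul_eq_zero, or_iff_right (pow_ne_zero _ hf)] at hzero
  have hvanish := eq_zero_of_sum_X_pow_mul_eq_zero h0 hρ hc hn
    (fun j => natDegree_le_of_mem_degreeLT (u.1 j)) (fun j => natDegree_le_of_mem_degreeLT (u.2 j))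
    hzero
  exact hu (Prod.ext (funext fun j => Subtype.ext (hvanish j).1)
    (funext fun j => Subtype.ext (hvanish j).2))

lemma natDegree_stepanovPoly_le (f : (ZMod p)[X]) (c l : ℕ) (u : StepanovParams p J n) :
    (stepanovPoly f c l u).natDegree ≤ p * (J - 1) + (l + c) * f.natDegree + n := by
  refine natDegree_sum_le_of_forall_le _ _ fun j _ => natDegree_mul_le.trans ?_
  rw [natDegree_X_pow, add_assoc]
  refine Nat.add_le_add (Nat.mul_le_mul_left _ (by omega)) ?_
  refine (natDegree_add_le _ _).trans (max_le ?_ ?_) <;>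
    refine natDegree_mul_le.trans (Nat.add_le_add (natDegree_pow_le.trans ?_)
      (natDegree_le_of_mem_degreeLT _))
  · exact Nat.mul_le_mul_right _ (Nat.le_add_right l c)
  · exact le_rfl

lemma eval_iterate_derivative_stepanovPoly {f : (ZMod p)[X]} {a x : ZMod p} {c l k : ℕ}
    (hk : k ≤ l) (u : StepanovParams p J n) (hx : f.eval x ^ c = a) :
    (derivative^[k] (stepanovPoly f c l u)).eval x =
      f.eval x ^ (l - k) * (reducedDerivative f a c l k u).eval x := by
  have hderiv : derivative^[k] (stepanovPoly f c l u) = ∑ j : Fin J, X ^ (p * (j : ℕ)) *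
      (f ^ (l - k) * twistedDerivative f l k (u.1 j) +
        f ^ (l - k + c) * twistedDerivative f (l + c) k (u.2 j)) := by
    rw [stepanovPoly, iterate_derivative_sum]
    refine Finset.sum_congr rfl fun j _ => ?_
    rw [iterate_derivative_X_pow_char_mul, iterate_map_add, iterate_derivative_pow_mul _ hk,
      iterate_derivative_pow_mul _ (by omega), Nat.sub_add_comm hk]
  rw [hderiv, reducedDerivative_apply, eval_finsetSum, eval_finsetSum, Finset.mul_sum]
  refine Finset.sum_congr rfl fun j _ => ?_
  simp only [eval_mul, eval_add, eval_pow, eval_X, eval_smul, pow_add, hx, pow_mul, ZMod.pow_card,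
    smul_eq_mul]
  ring

lemma le_rootMultiplicity_stepanovPoly {f : (ZMod p)[X]} {a x : ZMod p} {c l : ℕ}
    {u : StepanovParams p J n} (hl0 : 0 < l) (hl : l < p) (hu : stepanovPoly f c l u ≠ 0)
    (hred : ∀ k < l, reducedDerivative f a c l k u = 0) (hx : f.eval x ^ c = a) :
    l ≤ (stepanovPoly f c l u).rootMultiplicity x := by
  obtain ⟨l, rfl⟩ := Nat.exists_eq_add_one.mpr hl0
  refine Nat.succ_le_of_lt
    (lt_rootMultiplicity_of_isRoot_iterate_derivative_of_mem_nonZeroDivisors hu ?_ ?_)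
  · intro k hk
    rw [IsRoot.def, eval_iterate_derivative_stepanovPoly (by omega) u hx, hred k (by omega),
      eval_zero, mul_zero]
  · rw [mem_nonZeroDivisors_iff_ne_zero, Ne, ZMod.natCast_eq_zero_iff,
      (Fact.out : p.Prime).dvd_factorial]
    omega

theorem mul_card_eval_pow_eq_le {f : (ZMod p)[X]} {ρ : ZMod p} {c l : ℕ} (h0 : f.eval 0 ≠ 0)
    (hρ : Odd (f.rootMultiplicity ρ)) (hc : p = 2 * c + 1) (hn : n + f.natDegree ≤ c)
    (hf : 1 ≤ f.natDegree) (hl0 : 0 < l) (hl : l < p)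
    (hrank : l * (n + l * f.natDegree + J) < 2 * (J * n)) (a : ZMod p) :
    l * (Finset.univ.filter fun x : ZMod p => f.eval x ^ c = a).card
      ≤ p * (J - 1) + (l + c) * f.natDegree + n := by
  obtain ⟨u, hu, hred⟩ := exists_ne_zero_forall_reducedDerivative_eq_zero hf a c hrank
  have hne := stepanovPoly_ne_zero h0 hρ hc hn l hu
  refine (mul_card_le_natDegree fun x hx => ?_).trans (natDegree_stepanovPoly_le f c l u)
  exact le_rootMultiplicity_stepanovPoly hl0 hl hne hred (Finset.mem_filter.mp hx).2

end Auxiliary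

section CharacterSums

lemma stepanov_rank_lt {l D n : ℕ} (hl : l * l ≤ 2 * (n + D) + 1) (hD : 1 ≤ D)
    (hDl : 100 * D ≤ l) :
    l * (n + l * D + (l / 2 + 2 * D + 3)) < 2 * ((l / 2 + 2 * D + 3) * n) := by
  obtain ⟨h, hh⟩ : ∃ h, h = l / 2 := ⟨_, rfl⟩
  rw [← hh]
  have hl_sq : 100 * l ≤ l * l := Nat.mul_le_mul_right _ (by omega)
  have hlD : l * l * D ≤ (2 * n + 2 * D + 1) * D := Nat.mul_le_mul_right _ (by omega)
  have hlD' : 100 * l * D ≤ (2 * n + 2 * D + 1) * D := Nat.mul_le_mul_right _ (by omega)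
  have hDD : 100 * D * D ≤ l * D := Nat.mul_le_mul_right _ hDl
  have hlh : l * (2 * h) ≤ l * l := Nat.mul_le_mul_left _ (by omega)
  have hln : l * n ≤ (2 * h + 1) * n := Nat.mul_le_mul_right _ (by omega)
  have hnD : n ≤ D * n := Nat.le_mul_of_pos_left _ (by omega)
  nlinarith

lemma stepanov_bound_le {l D w c n : ℝ} (hl : 1 ≤ l) (hD : 1 ≤ D) (hw : 1 ≤ w) (hwl : w ≤ l + 1)
    (hc : 2 * c ≤ w * w) (hn : n ≤ w * w) :
    w * w * (l / 2 + 2 * D + 2) + (l + c) * D + n ≤ l * (w * w / 2 + 16 * D * w) := by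
  have hww : w * w ≤ 2 * l * w := by nlinarith
  have hwwD : w * w * D ≤ 2 * l * w * D := by gcongr
  have hlD : l * D ≤ l * w * D := by
    nlinarith [mul_le_mul_of_nonneg_left hw (by positivity : 0 ≤ l * D)]
  have hDww : w * w ≤ w * w * D := le_mul_of_one_le_right (by positivity) hD
  have hcD : c * D ≤ w * w * D / 2 := by nlinarith
  nlinarith

variable {f : (ZMod p)[X]} {ρ : ZMod p}

lemma card_eval_pow_eq_le {c : ℕ} (h0 : f.eval 0 ≠ 0) (hρ : Odd (f.rootMultiplicity ρ))
    (hc : p = 2 * c + 1) (hf : 1 ≤ f.natDegree) (hbig : 100 * f.natDegree ≤ p.sqrt) (a : ZMod p) :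
    ((Finset.univ.filter fun x : ZMod p => f.eval x ^ c = a).card : ℝ)
      ≤ p / 2 + 16 * f.natDegree * √p := by
  set D := f.natDegree
  set l := p.sqrt
  have hl_le : l * l ≤ p := Nat.sqrt_le p
  have hl_sq : 100 * l ≤ l * l := Nat.mul_le_mul_right _ (by omega)
  obtain ⟨n, rfl⟩ : ∃ n, c = n + D := ⟨c - D, by omega⟩
  have hcount : l * (Finset.univ.filter fun x : ZMod p => f.eval x ^ (n + D) = a).card ≤
      p * (l / 2 + 2 * D + 2) + (l + (n + D)) * D + n :=
    mul_card_eval_pow_eq_le h0 hρ hc le_rfl hf (by omega) (by omega)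
      (stepanov_rank_lt (by omega) hf hbig) a
  have hw : √(p : ℝ) * √p = p := Real.mul_self_sqrt (by positivity)
  have hpR : (p : ℝ) = 2 * ((n + D : ℕ) : ℝ) + 1 := by exact_mod_cast hc
  have hbound := stepanov_bound_le (l := l) (D := D) (w := √p) (c := (n + D : ℕ)) (n := n)
    (by exact_mod_cast (by omega : 1 ≤ l)) (by exact_mod_cast hf)
    (Real.one_le_sqrt.mpr (by exact_mod_cast (by omega : 1 ≤ p)))
    (Real.real_sqrt_le_nat_sqrt_succ) (by rw [hw]; linarith)
    (by rw [hw]; exact_mod_cast (by omega : n ≤ p))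
  rw [hw] at hbound
  refine le_of_mul_le_mul_left (le_trans ?_ hbound)
    (by exact_mod_cast (by omega : 0 < l) : (0 : ℝ) < l)
  have hhalf : (p : ℝ) * ((l / 2 : ℕ) : ℝ) ≤ p * ((l : ℝ) / 2) := by
    gcongr; exact Nat.cast_div_le
  have hcountR := (Nat.cast_le (α := ℝ)).mpr hcount
  push_cast at hcountR ⊢
  linarith

lemma quadraticChar_eq_indicator_sub {c : ℕ} (hc : p = 2 * c + 1) (z : ZMod p) :
    quadraticChar (ZMod p) z = (if z ^ c = 1 then 1 else 0) - (if z ^ c = -1 then 1 else 0) := by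
  have hchar : ringChar (ZMod p) ≠ 2 := by rw [ZMod.ringChar_zmod_n]; omega
  have hpow := quadraticChar_eq_pow_of_char_ne_two' hchar z
  rw [ZMod.card, show p / 2 = c by omega] at hpow
  have hneg : (-1 : ZMod p) ≠ 1 := Ring.neg_one_ne_one_of_char_ne_two hchar
  rw [← hpow]
  rcases quadraticChar_isQuadratic (ZMod p) z with h | h | h <;> rw [h]
  · simp
  · simp [hneg.symm]
  · simp [hneg]

lemma card_le_card_eval_pow_add (hf : f ≠ 0) {c : ℕ} (hc : p = 2 * c + 1) :
    p ≤ (Finset.univ.filter fun x : ZMod p => f.eval x ^ c = 1).card +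
      (Finset.univ.filter fun x : ZMod p => f.eval x ^ c = -1).card + f.natDegree := by
  have hcover : (Finset.univ : Finset (ZMod p)) ⊆
      (Finset.univ.filter fun x : ZMod p => f.eval x ^ c = 1) ∪
        (Finset.univ.filter fun x : ZMod p => f.eval x ^ c = -1) ∪ f.roots.toFinset := by
    intro z _
    simp only [Finset.mem_union, Finset.mem_filter, Finset.mem_univ, true_and,
      Multiset.mem_toFinset, mem_roots hf, IsRoot.def]
    by_cases hz : f.eval z = 0
    · exact Or.inr hz
    · have := ZMod.pow_div_two_eq_neg_one_or_one p hz
      rw [show p / 2 = c by omega] at this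
      exact Or.inl this
  have hroots : f.roots.toFinset.card ≤ f.natDegree :=
    (Multiset.toFinset_card_le _).trans (card_roots' f)
  have hcard := (Finset.card_le_card hcover).trans
    ((Finset.card_union_le _ _).trans (Nat.add_le_add_right (Finset.card_union_le _ _) _))
  rw [Finset.card_univ, ZMod.card] at hcard
  omega

lemma abs_sum_quadraticChar_eval_le {c : ℕ} (h0 : f.eval 0 ≠ 0) (hρ : Odd (f.rootMultiplicity ρ))
    (hc : p = 2 * c + 1) (hf : 1 ≤ f.natDegree) (hbig : 100 * f.natDegree ≤ p.sqrt) :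
    |((∑ z : ZMod p, quadraticChar (ZMod p) (f.eval z) : ℤ) : ℝ)| ≤ 40 * f.natDegree * √p := by
  have hsum : ∑ z : ZMod p, quadraticChar (ZMod p) (f.eval z) =
      ((Finset.univ.filter fun x : ZMod p => f.eval x ^ c = 1).card : ℤ) -
        (Finset.univ.filter fun x : ZMod p => f.eval x ^ c = -1).card := by
    simp [quadraticChar_eq_indicator_sub hc, Finset.sum_sub_distrib]
  have hone := card_eval_pow_eq_le h0 hρ hc hf hbig 1
  have hneg := card_eval_pow_eq_le h0 hρ hc hf hbig (-1)
  have hcover := (Nat.cast_le (α := ℝ)).mpr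
    (card_le_card_eval_pow_add (f := f) (by rintro rfl; simp at h0) hc)
  have hw : 1 ≤ √(p : ℝ) := Real.one_le_sqrt.mpr (by exact_mod_cast (by omega : 1 ≤ p))
  have hDw : (f.natDegree : ℝ) ≤ f.natDegree * √p := le_mul_of_one_le_right (by positivity) hw
  rw [hsum, abs_le]
  push_cast at hcover ⊢
  constructor <;> linarith

lemma exists_forall_add_ne_zero {ι A : Type*} [Fintype ι] [Fintype A] [AddGroup A]
    (hcard : Fintype.card ι < Fintype.card A) (x : ι → A) : ∃ t, ∀ i, x i + t ≠ 0 := by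
  by_contra! hcon
  refine hcard.not_ge (Fintype.card_le_of_surjective (fun i => -x i) fun t => ?_)
  obtain ⟨i, hi⟩ := hcon t
  exact ⟨i, (eq_neg_of_add_eq_zero_right hi).symm⟩

lemma rootMultiplicity_prod_X_add_C {ι R : Type*} [Fintype ι] [CommRing R] [IsDomain R]
    {y : ι → R} {i₀ : ι} (hy : ∀ i, i ≠ i₀ → y i ≠ y i₀) :
    (∏ i, (X + C (y i))).rootMultiplicity (-y i₀) = 1 := by
  classical
  have hne : ∏ i, (X + C (y i)) ≠ 0 := Finset.prod_ne_zero_iff.mpr fun i _ => X_add_C_ne_zero _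
  have hfactor : ∏ i, (X + C (y i)) =
      (X - C (-y i₀)) * ∏ i ∈ Finset.univ.erase i₀, (X + C (y i)) := by
    rw [← Finset.mul_prod_erase _ _ (Finset.mem_univ i₀), map_neg, sub_neg_eq_add]
  rw [hfactor] at hne ⊢
  rw [rootMultiplicity_mul hne, rootMultiplicity_X_sub_C_self, rootMultiplicity_eq_zero]
  simp only [IsRoot.def, eval_prod, eval_add, eval_X, eval_C, Finset.prod_eq_zero_iff, not_exists,
    not_and]
  intro i hi hzero
  exact hy i (Finset.ne_of_mem_erase hi) (neg_add_eq_zero.mp hzero).symm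

theorem abs_sum_prod_quadraticChar_add_le {ι : Type*} [Fintype ι] {x : ι → ZMod p} {i₀ : ι}
    (hx : ∀ i, i ≠ i₀ → x i ≠ x i₀) (hbig : 100 * Fintype.card ι ≤ p.sqrt) :
    |((∑ z : ZMod p, ∏ i, quadraticChar (ZMod p) (z + x i) : ℤ) : ℝ)|
      ≤ 40 * Fintype.card ι * √p := by
  have hι : 1 ≤ Fintype.card ι := Fintype.card_pos_iff.mpr ⟨i₀⟩
  have hsqrt : p.sqrt * p.sqrt ≤ p := Nat.sqrt_le p
  have hsqrt' : 100 * p.sqrt ≤ p.sqrt * p.sqrt := Nat.mul_le_mul_right _ (by omega)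
  obtain ⟨c, hc⟩ : Odd p := (Fact.out : p.Prime).odd_of_ne_two (by omega)
  obtain ⟨t, ht⟩ := exists_forall_add_ne_zero (by rw [ZMod.card]; omega) x
  set f : (ZMod p)[X] := ∏ i, (X + C (x i + t)) with hf
  have hdeg : f.natDegree = Fintype.card ι := by
    rw [hf, natDegree_prod_of_monic _ _ fun i _ => monic_X_add_C _]
    simp only [natDegree_X_add_C, Finset.sum_const, Finset.card_univ, smul_eq_mul, mul_one]
  have heval (z : ZMod p) : f.eval z = ∏ i, (z + (x i + t)) := by simp [hf, eval_prod]
  have h0 : f.eval 0 ≠ 0 := by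
    rw [heval]
    exact Finset.prod_ne_zero_iff.mpr fun i _ => by simpa using ht i
  have hρ : f.rootMultiplicity (-(x i₀ + t)) = 1 :=
    rootMultiplicity_prod_X_add_C (y := fun i => x i + t) fun i hi => by simpa using hx i hi
  have hsum : ∑ z : ZMod p, ∏ i, quadraticChar (ZMod p) (z + x i) =
      ∑ z : ZMod p, quadraticChar (ZMod p) (f.eval z) := by
    rw [← Equiv.sum_comp (Equiv.addRight t)]
    refine Finset.sum_congr rfl fun z _ => ?_
    simp only [heval, map_prod, Equiv.coe_addRight, add_assoc, add_comm t]
  rw [hsum, ← hdeg]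
  exact abs_sum_quadraticChar_eval_le h0 (hρ ▸ odd_one) hc (by omega) (by omega)

end CharacterSums

end Stepanov

/-! ### High moments of character sums -/

section Moments
variable {p : ℕ} [Fact p.Prime]

/-- The quadratic character of `ZMod p`, with real values. -/
noncomputable def quadChi (x : ZMod p) : ℝ := ((quadraticChar (ZMod p) x : ℤ) : ℝ)

lemma quadChi_mul (x y : ZMod p) : quadChi (x * y) = quadChi x * quadChi y := by
  simp only [quadChi, map_mul, Int.cast_mul]

lemma abs_quadChi_le_one (x : ZMod p) : |quadChi x| ≤ 1 := by
  rcases quadraticChar_isQuadratic (ZMod p) x with h | h | h <;> simp [quadChi, h]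

section
variable {ι : Type*} [Fintype ι]

lemma sq_sum_prod_quadChi_le_of_isolated {x : ι → ZMod p} {i₀ : ι} (hx : ∀ i, i ≠ i₀ → x i ≠ x i₀)
    (hbig : 100 * Fintype.card ι ≤ p.sqrt) :
    (∑ z : ZMod p, ∏ i, quadChi (z + x i)) ^ 2 ≤ (40 * Fintype.card ι : ℝ) ^ 2 * p := by
  have hsum := abs_sum_prod_quadraticChar_add_le hx hbig
  push_cast at hsum
  calc (∑ z : ZMod p, ∏ i, quadChi (z + x i)) ^ 2 ≤ (40 * Fintype.card ι * √p : ℝ) ^ 2 := by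
        rw [← sq_abs]; gcongr; exact hsum
    _ = (40 * Fintype.card ι : ℝ) ^ 2 * p := by rw [mul_pow, Real.sq_sqrt (by positivity)]

lemma sq_sum_prod_quadChi_le (x : ι → ZMod p) :
    (∑ z : ZMod p, ∏ i, quadChi (z + x i)) ^ 2 ≤ (p : ℝ) ^ 2 := by
  refine sq_le_sq' (neg_le_of_abs_le ?_) (le_of_abs_le ?_) <;>
  · calc |∑ z : ZMod p, ∏ i, quadChi (z + x i)| ≤ ∑ z : ZMod p, |∏ i, quadChi (z + x i)| :=
          Finset.abs_sum_le_sum_abs _ _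
      _ ≤ ∑ _z : ZMod p, (1 : ℝ) := by
          refine Finset.sum_le_sum fun z _ => ?_
          rw [Finset.abs_prod]
          exact Finset.prod_le_one (fun i _ => abs_nonneg _) fun i _ => abs_quadChi_le_one _
      _ = p := by simp

end

section Tuples
variable {ι κ α : Type*} [Fintype ι] [Fintype κ] [DecidableEq α]

lemma two_mul_card_image_le {x : κ → α} (hx : ∀ k₀, ∃ k, k ≠ k₀ ∧ x k = x k₀) :
    2 * (Finset.univ.image x).card ≤ Fintype.card κ := by
  refine Finset.mul_card_image_le_card _ 2 fun b hb => ?_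
  obtain ⟨k₀, _, rfl⟩ := Finset.mem_image.mp hb
  obtain ⟨k, hk, hxk⟩ := hx k₀
  exact Finset.one_lt_card.mpr ⟨k, by simp [hxk], k₀, by simp, hk⟩

lemma card_le_of_card_image_le [Nonempty κ] {S : Finset α} {K : ℕ} {T : Finset (κ → α)}
    (hS : ∀ x ∈ T, ∀ k, x k ∈ S) (hK : ∀ x ∈ T, (Finset.univ.image x).card ≤ K) :
    T.card ≤ S.card ^ K * K ^ Fintype.card κ := by
  classical
  have hsub : T ⊆ (Finset.univ : Finset ((Fin K → S) × (κ → Fin K))).image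
      fun q k => (q.1 (q.2 k) : α) := by
    intro x hx
    let e := (Finset.univ.image x).equivFin
    have hmem (k : κ) : x k ∈ Finset.univ.image x := Finset.mem_image_of_mem _ (Finset.mem_univ k)
    have himage : ∀ y ∈ Finset.univ.image x, y ∈ S := by
      simpa using hS x hx
    refine Finset.mem_image.mpr ⟨⟨fun t => if h : (t : ℕ) < (Finset.univ.image x).card
      then ⟨e.symm ⟨t, h⟩, himage _ (e.symm ⟨t, h⟩).2⟩
      else ⟨x (Classical.arbitrary κ), hS x hx _⟩,
      fun k => Fin.castLE (hK x hx) (e ⟨x k, hmem k⟩)⟩, Finset.mem_univ _, ?_⟩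
    funext k
    simp
  refine (Finset.card_le_card hsub).trans (Finset.card_image_le.trans ?_)
  simp

lemma card_le_pow_mul_card_image_comp {f : ι → α} {φ : ℕ}
    (hφ : ∀ y, (Finset.univ.filter fun i => f i = y).card ≤ φ) (T : Finset (κ → ι)) :
    T.card ≤ φ ^ Fintype.card κ * (T.image fun t k => f (t k)).card := by
  classical
  refine Finset.card_le_mul_card_image _ _ fun y _ => ?_
  calc (T.filter fun t => (fun k => f (t k)) = y).card
      ≤ (Fintype.piFinset fun k : κ => Finset.univ.filter fun i => f i = y k).card := by
        refine Finset.card_le_card fun t ht => Fintype.mem_piFinset.mpr fun k => ?_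
        simp [← (Finset.mem_filter.mp ht).2]
    _ ≤ φ ^ Fintype.card κ := by
        rw [Fintype.card_piFinset]
        exact Finset.prod_le_pow_card _ _ φ fun k _ => hφ _

lemma card_filter_card_image_comp_le [DecidableEq κ] [Nonempty κ] {f : ι → α} {S : Finset α}
    (hS : ∀ i, f i ∈ S) {φ : ℕ} (hφ : ∀ y, (Finset.univ.filter fun i => f i = y).card ≤ φ)
    (K : ℕ) :
    (Finset.univ.filter fun t : κ → ι => (Finset.univ.image fun k => f (t k)).card ≤ K).card ≤
      φ ^ Fintype.card κ * (S.card ^ K * K ^ Fintype.card κ) := by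
  refine (card_le_pow_mul_card_image_comp hφ _).trans (Nat.mul_le_mul_left _ ?_)
  refine card_le_of_card_image_le ?_ ?_ <;> intro x hx <;>
    obtain ⟨t, ht, rfl⟩ := Finset.mem_image.mp hx
  · exact fun k => hS _
  · exact (Finset.mem_filter.mp ht).2

lemma sum_sum_sum_mul_pow {β : Type*} [Fintype β] (F : β → ι → ℝ) (n : ℕ) :
    ∑ z₁, ∑ z₂, (∑ i, F z₁ i * F z₂ i) ^ n = ∑ t : Fin n → ι, (∑ z, ∏ k, F z (t k)) ^ 2 := by
  simp only [Fintype.sum_pow, Finset.prod_mul_distrib, pow_two, Finset.sum_mul_sum]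
  rw [Finset.sum_comm (s := (Finset.univ : Finset (Fin n → ι)))]
  exact Finset.sum_congr rfl fun z₁ _ => Finset.sum_comm

end Tuples

theorem moment_correlation_le {ι : Type*} [Fintype ι] {f : ι → ZMod p} {S : Finset (ZMod p)}
    (hS : ∀ i, f i ∈ S) {φ : ℕ} (hφ : ∀ y, (Finset.univ.filter fun i => f i = y).card ≤ φ)
    {K : ℕ} (hK : 0 < K) (hbig : 200 * K ≤ p.sqrt) :
    ∑ z₁ : ZMod p, ∑ z₂ : ZMod p, (∑ i, quadChi (z₁ + f i) * quadChi (z₂ + f i)) ^ (2 * K) ≤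
      (p : ℝ) ^ 2 * ((S.card : ℝ) ^ K * K ^ (2 * K) * φ ^ (2 * K)) +
        (Fintype.card ι : ℝ) ^ (2 * K) * ((80 * K) ^ 2 * p) := by
  have : NeZero (2 * K) := ⟨by omega⟩
  rw [sum_sum_sum_mul_pow fun z i => quadChi (z + f i),
    ← Finset.sum_filter_add_sum_filter_not Finset.univ
      fun t : Fin (2 * K) → ι => (Finset.univ.image fun k => f (t k)).card ≤ K]
  refine add_le_add ?_ ?_
  · refine (Finset.sum_le_card_nsmul _ _ _ fun t _ => sq_sum_prod_quadChi_le _).trans ?_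
    rw [nsmul_eq_mul, mul_comm]
    gcongr
    have := (Nat.cast_le (α := ℝ)).mpr (card_filter_card_image_comp_le (κ := Fin (2 * K)) hS hφ K)
    push_cast [Fintype.card_fin] at this
    linarith
  · have hterm (t : Fin (2 * K) → ι) (ht : ¬(Finset.univ.image fun k => f (t k)).card ≤ K) :
        (∑ z : ZMod p, ∏ k, quadChi (z + f (t k))) ^ 2 ≤ (80 * K) ^ 2 * (p : ℝ) := by
      obtain ⟨k₀, hk₀⟩ : ∃ k₀, ∀ k, k ≠ k₀ → f (t k) ≠ f (t k₀) := by
        by_contra! hcon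
        have := two_mul_card_image_le hcon
        rw [Fintype.card_fin] at this
        omega
      convert sq_sum_prod_quadChi_le_of_isolated hk₀ (by rw [Fintype.card_fin]; omega) using 2
      push_cast [Fintype.card_fin]
      ring
    refine (Finset.sum_le_card_nsmul _ _ _ fun t ht => hterm t (Finset.mem_filter.mp ht).2).trans ?_
    rw [nsmul_eq_mul]
    gcongr
    exact_mod_cast (Finset.card_filter_le _ _).trans (by simp)

end Moments

/-! ### Continuants of digit words -/

section Continuants

/-- The continuants of a digit word `x`: the first column of the product of the matrices
`!![x i, 1; 1, 0]`, as a pair (upper entry, lower entry). -/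
def continuants : {m : ℕ} → (Fin m → ℤ) → ℤ × ℤ
  | 0, _ => (1, 0)
  | _ + 1, x =>
    (x 0 * (continuants (Fin.tail x)).1 + (continuants (Fin.tail x)).2,
      (continuants (Fin.tail x)).1)

/-- The continuants of a digit word, reduced modulo `p`. -/
def continuantsMod (p : ℕ) {m : ℕ} (x : Fin m → ℤ) : ZMod p × ZMod p :=
  ((continuants x).1, (continuants x).2)

/-- A digit word is good when its digits are at least `s` in absolute value and no multiple
`b ≤ B` of its upper continuant `Y` lies within `2 |Y| / (s - 1)` of a multiple of `p`. The second
condition keeps apart the digits that can be put in front of good words to reach one given pair of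
continuants modulo `p`. -/
def IsGoodWord (p s B : ℕ) {m : ℕ} (x : Fin m → ℤ) : Prop :=
  (∀ i, (s : ℤ) ≤ |x i|) ∧ ∀ b : ℕ, 1 ≤ b → b ≤ B → ∀ l : ℤ,
    2 * |(continuants x).1| < |b * (continuants x).1 - l * p| * (s - 1)

variable {m : ℕ}

lemma abs_continuants_le {N : ℤ} {x : Fin m → ℤ} (hx : ∀ i, |x i| + 1 ≤ N) :
    |(continuants x).1| ≤ N ^ m ∧ |(continuants x).2| ≤ N ^ m := by
  induction m with
  | zero => simp [continuants]
  | succ m ih =>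
    obtain ⟨hfst, hsnd⟩ := ih (x := Fin.tail x) fun i => hx _
    have hx₀ := hx 0
    have hN : 1 ≤ N := by linarith [abs_nonneg (x 0)]
    constructor
    · calc |x 0 * (continuants (Fin.tail x)).1 + (continuants (Fin.tail x)).2|
          ≤ |x 0| * |(continuants (Fin.tail x)).1| + |(continuants (Fin.tail x)).2| := by
            rw [← abs_mul]; exact abs_add_le _ _
        _ ≤ (N - 1) * N ^ m + N ^ m := by gcongr; linarith
        _ = N ^ (m + 1) := by ring
    · exact hfst.trans (pow_le_pow_right₀ hN m.le_succ)

lemma mul_abs_continuants_snd_le {s : ℤ} (hs : 2 ≤ s) {x : Fin m → ℤ} (hx : ∀ i, s ≤ |x i|) :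
    (s - 1) * |(continuants x).2| ≤ |(continuants x).1| ∧ (continuants x).1 ≠ 0 := by
  induction m with
  | zero => simp [continuants]
  | succ m ih =>
    obtain ⟨hsnd, hne⟩ := ih (x := Fin.tail x) fun i => hx _
    have hx₀ := hx 0
    set Y := (continuants (Fin.tail x)).1
    set U := (continuants (Fin.tail x)).2
    have hY : 0 < |Y| := abs_pos.mpr hne
    have hUY : |U| ≤ |Y| := by nlinarith [abs_nonneg U]
    have hgrow : (s - 1) * |Y| ≤ |x 0 * Y + U| := by
      have := abs_sub_abs_le_abs_sub (x 0 * Y) (-U)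
      rw [abs_mul, abs_neg, sub_neg_eq_add] at this
      nlinarith
    exact ⟨hgrow, abs_pos.mp (by change 0 < |x 0 * Y + U|; nlinarith)⟩

lemma continuants_injOn {s : ℤ} (hs : 4 ≤ s) :
    Set.InjOn continuants {x : Fin m → ℤ | ∀ i, s ≤ |x i|} := by
  induction m with
  | zero => exact fun x _ y _ _ => Subsingleton.elim x y
  | succ m ih =>
    intro x hx y hy h
    simp only [continuants, Prod.mk.injEq] at h
    obtain ⟨hupper, hlower⟩ := h
    obtain ⟨hU, hY⟩ := mul_abs_continuants_snd_le (by linarith) fun i : Fin m => hx i.succ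
    obtain ⟨hV, -⟩ := mul_abs_continuants_snd_le (by linarith) fun i : Fin m => hy i.succ
    change (s - 1) * |(continuants (Fin.tail x)).2| ≤ |(continuants (Fin.tail x)).1| at hU
    change (s - 1) * |(continuants (Fin.tail y)).2| ≤ |(continuants (Fin.tail y)).1| at hV
    change (continuants (Fin.tail x)).1 ≠ 0 at hY
    rw [← hlower] at hV hupper
    set Y := (continuants (Fin.tail x)).1
    set U := (continuants (Fin.tail x)).2
    set V := (continuants (Fin.tail y)).2
    have hYpos : 0 < |Y| := abs_pos.mpr hY
    have hdiff : (x 0 - y 0) * Y = V - U := by linarith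
    have hle : |x 0 - y 0| * |Y| ≤ |V| + |U| := by
      rw [← abs_mul, hdiff]; exact abs_sub _ _
    have hhead : x 0 = y 0 := by
      by_contra hne
      have : 1 ≤ |x 0 - y 0| := Int.one_le_abs (sub_ne_zero.mpr hne)
      nlinarith [abs_nonneg U, abs_nonneg V]
    have hUV : U = V := by rw [hhead] at hdiff; linarith
    have htail : Fin.tail x = Fin.tail y :=
      ih (fun i => hx i.succ) (fun i => hy i.succ) (Prod.ext hlower hUV)
    rw [← Fin.cons_self_tail x, ← Fin.cons_self_tail y, hhead, htail]

end Continuants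

section Collisions

lemma int_eq_of_zmod_eq {p : ℕ} {a b : ℤ} (h : (a : ZMod p) = b) (ha : 2 * |a| < p)
    (hb : 2 * |b| < p) : a = b := by
  rw [ZMod.intCast_eq_intCast_iff, Int.modEq_iff_dvd] at h
  have := Int.eq_zero_of_abs_lt_dvd h (by linarith [abs_sub b a])
  linarith

lemma card_le_of_lt_sub {Z : Finset ℤ} {N B : ℕ} (hN : ∀ d ∈ Z, |d| < N)
    (hB : ∀ d ∈ Z, ∀ d' ∈ Z, d' < d → (B : ℤ) < d - d') : Z.card ≤ 2 * N / (B + 1) + 1 := by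
  have hmaps : Set.MapsTo (fun d : ℤ => (d + N).toNat / (B + 1)) Z
      (Finset.range (2 * N / (B + 1) + 1)) := by
    intro d hd
    have := abs_lt.mp (hN d hd)
    simp only [Finset.coe_range, Set.mem_Iio]
    exact Nat.lt_succ_of_le (Nat.div_le_div_right (by omega))
  have hne {d d' : ℤ} (hd : d ∈ Z) (hd' : d' ∈ Z) (hlt : d' < d) :
      (d + N).toNat / (B + 1) ≠ (d' + N).toNat / (B + 1) := by
    intro heq
    have := abs_lt.mp (hN d hd)
    have := abs_lt.mp (hN d' hd')
    have := hB d hd d' hd' hlt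
    have hdiv := Nat.div_add_mod (d + N).toNat (B + 1)
    have := Nat.div_add_mod (d' + N).toNat (B + 1)
    have := Nat.mod_lt (d + N).toNat B.add_one_pos
    rw [heq] at hdiv
    omega
  have hinj : Set.InjOn (fun d : ℤ => (d + N).toNat / (B + 1)) Z := by
    intro d hd d' hd' heq
    rcases lt_trichotomy d d' with h | h | h
    · exact absurd heq.symm (hne hd' hd h)
    · exact h
    · exact absurd heq (hne hd hd' h)
  simpa using Finset.card_le_card_of_injOn _ hmaps hinj

variable {p N s B m : ℕ} {x y : Fin (m + 1) → ℤ}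

lemma continuants_tail_fst_eq_of_continuantsMod_eq (hp : 2 * N ^ m < p)
    (hx : ∀ i, |x i| + 1 ≤ N) (hy : ∀ i, |y i| + 1 ≤ N)
    (h : continuantsMod p x = continuantsMod p y) :
    (continuants (Fin.tail x)).1 = (continuants (Fin.tail y)).1 := by
  have : 2 * (N : ℤ) ^ m < p := mod_cast hp
  have hux := (abs_continuants_le (x := Fin.tail x) fun i => hx _).1
  have huy := (abs_continuants_le (x := Fin.tail y) fun i => hy _).1
  exact int_eq_of_zmod_eq (Prod.ext_iff.mp h).2 (by linarith) (by linarith)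

lemma eq_of_continuantsMod_eq (hp : 2 * N ^ m < p) (hs : 4 ≤ s)
    (hx : ∀ i, |x i| + 1 ≤ N) (hy : ∀ i, |y i| + 1 ≤ N)
    (hsx : ∀ i, (s : ℤ) ≤ |Fin.tail x i|) (hsy : ∀ i, (s : ℤ) ≤ |Fin.tail y i|)
    (h : continuantsMod p x = continuantsMod p y) (hhead : x 0 = y 0) : x = y := by
  have : 2 * (N : ℤ) ^ m < p := mod_cast hp
  have hux := (abs_continuants_le (x := Fin.tail x) fun i => hx _).2
  have huy := (abs_continuants_le (x := Fin.tail y) fun i => hy _).2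
  have hfst := continuants_tail_fst_eq_of_continuantsMod_eq hp hx hy h
  have hcast : (((continuants (Fin.tail x)).2 : ℤ) : ZMod p) = (continuants (Fin.tail y)).2 := by
    have := (Prod.ext_iff.mp h).1
    simp only [continuantsMod, continuants, hfst, hhead, Int.cast_add] at this
    exact add_left_cancel this
  have htail : Fin.tail x = Fin.tail y := continuants_injOn (mod_cast hs) hsx hsy
    (Prod.ext hfst (int_eq_of_zmod_eq hcast (by linarith) (by linarith)))
  rw [← Fin.cons_self_tail x, ← Fin.cons_self_tail y, hhead, htail]

lemma lt_sub_of_continuantsMod_eq (hp : 2 * N ^ m < p) (hs : 2 ≤ s)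
    (hx : ∀ i, |x i| + 1 ≤ N) (hy : ∀ i, |y i| + 1 ≤ N)
    (hgood : IsGoodWord p s B (Fin.tail x)) (hsy : ∀ i, (s : ℤ) ≤ |Fin.tail y i|)
    (h : continuantsMod p x = continuantsMod p y) (hlt : y 0 < x 0) : (B : ℤ) < x 0 - y 0 := by
  have hs' : (2 : ℤ) ≤ s := mod_cast hs
  have hfst := continuants_tail_fst_eq_of_continuantsMod_eq hp hx hy h
  obtain ⟨hlx, -⟩ := mul_abs_continuants_snd_le hs' hgood.1
  obtain ⟨hly, -⟩ := mul_abs_continuants_snd_le hs' hsy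
  by_contra! hle
  obtain ⟨b, hb⟩ := Int.eq_ofNat_of_zero_le (sub_nonneg.mpr hlt.le)
  obtain ⟨l, hl⟩ : (p : ℤ) ∣ (continuants y).1 - (continuants x).1 :=
    ((ZMod.intCast_eq_intCast_iff _ _ _).mp (Prod.ext_iff.mp h).1).dvd
  have hgap := hgood.2 b (by omega) (by omega) (-l)
  have hdiff : (b : ℤ) * (continuants (Fin.tail x)).1 - -l * p =
      (continuants (Fin.tail y)).2 - (continuants (Fin.tail x)).2 := by
    simp only [continuants, ← hfst] at hl
    rw [← hb]
    linarith
  rw [hdiff] at hgap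
  have := abs_sub (continuants (Fin.tail y)).2 (continuants (Fin.tail x)).2
  rw [← hfst] at hly
  nlinarith

lemma card_le_of_continuantsMod_eq (hp : 2 * N ^ m < p) (hs : 4 ≤ s) (v : ZMod p × ZMod p)
    {Z : Finset (Fin (m + 1) → ℤ)} (hN : ∀ x ∈ Z, ∀ i, |x i| + 1 ≤ N)
    (hgood : ∀ x ∈ Z, IsGoodWord p s B (Fin.tail x)) (hv : ∀ x ∈ Z, continuantsMod p x = v) :
    Z.card ≤ 2 * N / (B + 1) + 1 := by
  have hinj : Set.InjOn (fun x : Fin (m + 1) → ℤ => x 0) Z := fun x hx y hy =>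
    eq_of_continuantsMod_eq hp hs (hN x hx) (hN y hy) (hgood x hx).1 (hgood y hy).1
      ((hv x hx).trans (hv y hy).symm)
  rw [← Finset.card_image_of_injOn hinj]
  refine card_le_of_lt_sub ?_ ?_
  · simp only [Finset.forall_mem_image]
    exact fun x hx => Int.lt_of_add_one_le (hN x hx 0)
  · simp only [Finset.forall_mem_image]
    exact fun x hx y hy => lt_sub_of_continuantsMod_eq hp (by omega) (hN x hx) (hN y hy)
      (hgood x hx) (hgood y hy).1 ((hv x hx).trans (hv y hy).symm)

variable {I : Type*} [Fintype I] {dig : I → ℤ} {φ : ℕ}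

open Classical in
lemma card_filter_isGoodWord_continuantsMod_le
    (hφ : ∀ d, (Finset.univ.filter fun i => dig i = d).card ≤ φ) (hN : ∀ i, |dig i| + 1 ≤ N)
    (hp : 2 * N ^ m < p) (hs : 4 ≤ s) (v : ZMod p × ZMod p) :
    (Finset.univ.filter fun w : Fin (m + 1) → I => IsGoodWord p s B (Fin.tail (dig ∘ w)) ∧
      continuantsMod p (dig ∘ w) = v).card ≤ φ ^ (m + 1) * (2 * N / (B + 1) + 1) := by
  refine (card_le_pow_mul_card_image_comp hφ _).trans ?_
  rw [Fintype.card_fin]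
  refine Nat.mul_le_mul_left _ (card_le_of_continuantsMod_eq hp hs v ?_ ?_ ?_) <;>
    simp only [Finset.forall_mem_image, Finset.mem_filter]
  · exact fun w _ i => hN _
  · exact fun w hw => hw.2.1
  · exact fun w hw => hw.2.2

end Collisions

section BadWords

lemma card_le_of_sub_le {Z : Finset ℤ} {R : ℕ} (hZ : ∀ d ∈ Z, ∀ d' ∈ Z, d - d' ≤ R) :
    Z.card ≤ R + 1 := by
  rcases Z.eq_empty_or_nonempty with rfl | hne
  · simp
  have hsub : Z ⊆ Finset.Icc (Z.min' hne) (Z.min' hne + R) := fun d hd =>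
    Finset.mem_Icc.mpr ⟨Z.min'_le _ hd, by linarith [hZ d hd _ (Z.min'_mem hne)]⟩
  refine (Finset.card_le_card hsub).trans ?_
  rw [Int.card_Icc]
  omega

variable {p N s B m : ℕ}

lemma card_le_of_abs_sub_mul_le (hs : 2 ≤ s) {Y : ℤ} (hY : Y ≠ 0) (U : ℤ) {b : ℕ} (hb : 1 ≤ b)
    (c : ℤ) {Z : Finset ℤ}
    (hZ : ∀ d ∈ Z, |b * (d * Y + U) - c| * (s - 1) ≤ 2 * (N * |Y|)) :
    Z.card ≤ 4 * N / (s - 1) + 1 := by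
  refine card_le_of_sub_le fun d hd d' hd' => ?_
  rcases le_or_gt d d' with hle | hlt
  · exact (sub_nonpos.mpr hle).trans (Int.natCast_nonneg _)
  have : (1 : ℤ) ≤ s - 1 := by omega
  have : (1 : ℤ) ≤ b := mod_cast hb
  have hYpos : 0 < |Y| := abs_pos.mpr hY
  have hd₀ : 0 < d - d' := sub_pos.mpr hlt
  have hspread : (d - d') * |Y| ≤ |b * (d * Y + U) - c| + |b * (d' * Y + U) - c| := by
    calc (d - d') * |Y| ≤ (d - d') * (b * |Y|) := by gcongr; nlinarith
      _ = |b * (d * Y + U) - c - (b * (d' * Y + U) - c)| := by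
          rw [show b * (d * Y + U) - c - (b * (d' * Y + U) - c) = (d - d') * (b * Y) by ring,
            abs_mul, abs_mul, abs_of_pos hd₀, Nat.abs_cast]
      _ ≤ _ := abs_sub _ _
  have hmul : (d - d') * (s - 1) ≤ 4 * N := by
    refine le_of_mul_le_mul_right ?_ hYpos
    nlinarith [hZ d hd, hZ d' hd']
  push_cast [show 1 ≤ s by omega]
  exact (Int.le_ediv_iff_mul_le (by omega)).mpr hmul

lemma abs_le_of_abs_sub_mul_le (hs : 3 ≤ s) {W l : ℤ} (hW : |W| < p) {b : ℕ} (hb : b ≤ B)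
    (h : |b * W - l * p| * (s - 1) ≤ 2 * |W|) : |l| ≤ B := by
  have : (3 : ℤ) ≤ s := mod_cast hs
  have : (b : ℤ) ≤ B := mod_cast hb
  have hnear : |b * W - l * p| ≤ |W| := by nlinarith [abs_nonneg (b * W - l * p)]
  have hlt : |l| * p < (B + 1) * p := by
    calc |l| * p = |b * W - (b * W - l * p)| := by rw [sub_sub_cancel, abs_mul, Nat.abs_cast]
      _ ≤ |b * W| + |b * W - l * p| := abs_sub _ _
      _ ≤ (B + 1) * |W| := by rw [abs_mul, Nat.abs_cast]; nlinarith [abs_nonneg W]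
      _ < (B + 1) * p := by gcongr
  exact Int.lt_add_one_iff.mp (lt_of_mul_lt_mul_right hlt (by positivity))

lemma card_le_of_not_isGoodWord_cons (hs : 4 ≤ s) (hp : 2 * N ^ (m + 1) < p) {t : Fin m → ℤ}
    (hst : ∀ i, (s : ℤ) ≤ |t i|) (hNt : ∀ i, |t i| + 1 ≤ N) {Z : Finset ℤ}
    (hsZ : ∀ d ∈ Z, (s : ℤ) ≤ |d|) (hNZ : ∀ d ∈ Z, |d| + 1 ≤ N)
    (hbad : ∀ d ∈ Z, ¬IsGoodWord p s B (Fin.cons d t : Fin (m + 1) → ℤ)) :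
    Z.card ≤ B * (2 * B + 1) * (4 * N / (s - 1) + 1) := by
  have : 2 * (N : ℤ) ^ (m + 1) < p := mod_cast hp
  obtain ⟨hUY, hY⟩ := mul_abs_continuants_snd_le (s := s) (by omega) hst
  set Y := (continuants t).1
  set U := (continuants t).2
  have hUY' : |U| ≤ |Y| := by
    nlinarith [abs_nonneg U, (mod_cast hs : (4 : ℤ) ≤ s)]
  let near (q : ℕ × ℤ) : Finset ℤ :=
    Z.filter fun d => |q.1 * (d * Y + U) - q.2 * p| * (s - 1) ≤ 2 * (N * |Y|)
  have hcover : Z ⊆ (Finset.Icc 1 B ×ˢ Finset.Icc (-(B : ℤ)) B).biUnion near := by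
    intro d hd
    have hcons (i : Fin (m + 1)) : (s : ℤ) ≤ |(Fin.cons d t : Fin (m + 1) → ℤ) i| ∧
        |(Fin.cons d t : Fin (m + 1) → ℤ) i| + 1 ≤ N := by
      cases i using Fin.cases
      · exact ⟨hsZ d hd, hNZ d hd⟩
      · exact ⟨hst _, hNt _⟩
    have hW : |d * Y + U| ≤ N ^ (m + 1) := (abs_continuants_le fun i => (hcons i).2).1
    have hWY : |d * Y + U| ≤ N * |Y| := by
      have := abs_add_le (d * Y) U
      rw [abs_mul] at this
      nlinarith [hNZ d hd, abs_nonneg Y]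
    obtain ⟨b, hb₁, hbB, l, hl⟩ : ∃ b : ℕ, 1 ≤ b ∧ b ≤ B ∧ ∃ l : ℤ,
        |b * (d * Y + U) - l * p| * (s - 1) ≤ 2 * |d * Y + U| := by
      by_contra! hcon
      exact hbad d hd ⟨fun i => (hcons i).1, hcon⟩
    have hlB := abs_le.mp (abs_le_of_abs_sub_mul_le (by omega)
      (by linarith [abs_nonneg (d * Y + U)]) hbB hl)
    simp only [Finset.mem_biUnion, Finset.mem_product, Finset.mem_Icc, near, Finset.mem_filter]
    exact ⟨(b, l), ⟨⟨hb₁, hbB⟩, hlB⟩, hd, hl.trans (by linarith)⟩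
  refine (Finset.card_le_card hcover).trans ((Finset.card_biUnion_le_card_mul _ _
    (4 * N / (s - 1) + 1) fun q hq => ?_).trans (Nat.mul_le_mul_right _ ?_))
  · exact card_le_of_abs_sub_mul_le (by omega) hY U
      (Finset.mem_Icc.mp (Finset.mem_product.mp hq).1).1 (q.2 * p)
      fun d hd => (Finset.mem_filter.mp hd).2
  · rw [Finset.card_product, Nat.card_Icc, Int.card_Icc]
    exact Nat.mul_le_mul (by omega) (by omega)

variable {I : Type*} [Fintype I] {dig : I → ℤ} {φ : ℕ}

lemma card_filter_abs_digit_lt_le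
    (hφ : ∀ d, (Finset.univ.filter fun i => dig i = d).card ≤ φ) (s : ℕ) (i : Fin (m + 1)) :
    (Finset.univ.filter fun w : Fin (m + 1) → I => |dig (w i)| < s).card ≤
      φ * (2 * s) * Fintype.card I ^ m := by
  classical
  have hdigit : (Finset.univ.filter fun a => |dig a| < s).card ≤ φ * (2 * s) := by
    refine (Finset.card_le_mul_card_image_of_maps_to (f := dig) (t := Finset.Ioo (-(s : ℤ)) s)
      (fun a ha => ?_) φ fun d _ => ?_).trans (Nat.mul_le_mul_left _ ?_)
    · exact Finset.mem_Ioo.mpr (abs_lt.mp (Finset.mem_filter.mp ha).2)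
    · exact (Finset.card_le_card (Finset.filter_subset_filter _ (Finset.subset_univ _))).trans
        (hφ d)
    · rw [Int.card_Ioo]
      omega
  calc (Finset.univ.filter fun w : Fin (m + 1) → I => |dig (w i)| < s).card
      ≤ ((Finset.univ.filter fun a => |dig a| < s) ×ˢ
          (Finset.univ : Finset (Fin m → I))).card := by
        refine Finset.card_le_card_of_injOn (Fin.insertNthEquiv (fun _ => I) i).symm ?_
          (Equiv.injective _).injOn
        intro w hw
        simpa [Fin.insertNthEquiv] using hw
    _ ≤ φ * (2 * s) * Fintype.card I ^ m := by
        rw [Finset.card_product]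
        exact Nat.mul_le_mul hdigit (by simp)

open Classical in
lemma card_filter_not_isGoodWord_le_of_le_abs
    (hφ : ∀ d, (Finset.univ.filter fun i => dig i = d).card ≤ φ) (hN : ∀ i, |dig i| + 1 ≤ N)
    (hp : 2 * N ^ (m + 1) < p) (hs : 4 ≤ s) :
    (Finset.univ.filter fun w : Fin (m + 1) → I =>
      (∀ i, (s : ℤ) ≤ |dig (w i)|) ∧ ¬IsGoodWord p s B (dig ∘ w)).card ≤
      φ * (B * (2 * B + 1) * (4 * N / (s - 1) + 1)) * Fintype.card I ^ m := by
  set bad := Finset.univ.filter fun w : Fin (m + 1) → I =>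
      (∀ i, (s : ℤ) ≤ |dig (w i)|) ∧ ¬IsGoodWord p s B (dig ∘ w) with hbad
  have hfibre (t : Fin m → I) : (bad.filter fun w => Fin.tail w = t).card ≤
      φ * (B * (2 * B + 1) * (4 * N / (s - 1) + 1)) := by
    have hinj : Set.InjOn (fun w : Fin (m + 1) → I => w 0)
        (bad.filter fun w => Fin.tail w = t : Finset _) := by
      intro w hw w' hw' h
      rw [← Fin.cons_self_tail w, ← Fin.cons_self_tail w', (Finset.mem_filter.mp hw).2,
        (Finset.mem_filter.mp hw').2]
      exact congrArg (fun a : I => (Fin.cons a t : Fin (m + 1) → I)) h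
    rw [← Finset.card_image_of_injOn hinj]
    refine (Finset.card_le_mul_card_image (f := dig) _ φ fun d _ => ?_).trans
      (Nat.mul_le_mul_left _ ?_)
    · exact (Finset.card_le_card (Finset.filter_subset_filter _ (Finset.subset_univ _))).trans
        (hφ d)
    rcases (bad.filter fun w => Fin.tail w = t).eq_empty_or_nonempty with hempty | ⟨w, hw⟩
    · simp [hempty]
    have hst (i : Fin m) : (s : ℤ) ≤ |(dig ∘ t) i| := by
      rw [← (Finset.mem_filter.mp hw).2]
      exact (Finset.mem_filter.mp (Finset.mem_filter.mp hw).1).2.1 i.succ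
    refine card_le_of_not_isGoodWord_cons hs hp hst (fun i => hN _) ?_ ?_ ?_ <;>
      simp only [Finset.forall_mem_image, Finset.mem_filter, hbad, Finset.mem_univ, true_and]
    · exact fun w hw => hw.1.1 0
    · exact fun w _ => hN _
    · rintro w' ⟨⟨-, hw'⟩, rfl⟩
      rw [← Fin.cons_self_tail (dig ∘ w')] at hw'
      exact hw'
  refine (Finset.card_le_mul_card_image_of_maps_to (f := Fin.tail) (t := Finset.univ)
    (fun _ _ => Finset.mem_univ _) _ fun t _ => hfibre t).trans ?_
  simp

open Classical in
theorem card_filter_not_isGoodWord_le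
    (hφ : ∀ d, (Finset.univ.filter fun i => dig i = d).card ≤ φ) (hN : ∀ i, |dig i| + 1 ≤ N)
    (hp : 2 * N ^ (m + 1) < p) (hs : 4 ≤ s) :
    (Finset.univ.filter fun w : Fin (m + 1) → I => ¬IsGoodWord p s B (dig ∘ w)).card ≤
      (m + 1) * (φ * (2 * s) * Fintype.card I ^ m) +
        φ * (B * (2 * B + 1) * (4 * N / (s - 1) + 1)) * Fintype.card I ^ m := by
  have hsub : (Finset.univ.filter fun w : Fin (m + 1) → I => ¬IsGoodWord p s B (dig ∘ w)) ⊆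
      (Finset.univ.biUnion fun i => Finset.univ.filter fun w => |dig (w i)| < s) ∪
      Finset.univ.filter fun w =>
        (∀ i, (s : ℤ) ≤ |dig (w i)|) ∧ ¬IsGoodWord p s B (dig ∘ w) := by
    intro w hw
    have hw := (Finset.mem_filter.mp hw).2
    by_cases h : ∀ i, (s : ℤ) ≤ |dig (w i)|
    · exact Finset.mem_union_right _ (by simp [h, hw])
    · exact Finset.mem_union_left _ (by simpa using h)
  refine (Finset.card_le_card hsub).trans ((Finset.card_union_le _ _).trans (Nat.add_le_add ?_
    (card_filter_not_isGoodWord_le_of_le_abs hφ hN hp hs)))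
  refine (Finset.card_biUnion_le_card_mul _ _ _ fun i _ =>
    card_filter_abs_digit_lt_le hφ s i).trans ?_
  simp

end BadWords

/-! ### Collisions between matrices of equal determinant -/

section Collisions

/-- The lower left entry of `adj g' * g`; it vanishes exactly when the first columns of `g'` and
`g` are parallel. -/
def adjLowerLeft {F : Type*} [CommRing F] (g' g : Matrix (Fin 2) (Fin 2) F) : F :=
  g' 0 0 * g 1 0 - g' 1 0 * g 0 0

/-- The trace of `adj g' * g`, the polarization of the determinant. -/
def adjTrace {F : Type*} [CommRing F] (g' g : Matrix (Fin 2) (Fin 2) F) : F :=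
  g' 1 1 * g 0 0 - g' 0 1 * g 1 0 - g' 1 0 * g 0 1 + g' 0 0 * g 1 1

/-- The first column of a matrix, as a pair. -/
def firstCol {F : Type*} (g : Matrix (Fin 2) (Fin 2) F) : F × F := (g 0 0, g 1 0)

lemma card_filter_product_le_card_mul {α β : Type*} {A : Finset α} {B : Finset β}
    {P : α → β → Prop} [∀ a b, Decidable (P a b)] {k : ℕ}
    (h : ∀ a ∈ A, (B.filter fun b => P a b).card ≤ k) :
    ((A ×ˢ B).filter fun q => P q.1 q.2).card ≤ A.card * k := by
  calc ((A ×ˢ B).filter fun q => P q.1 q.2).card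
      = ∑ a ∈ A, (B.filter fun b => P a b).card := by
        simp only [Finset.card_filter, Finset.sum_product]
    _ ≤ A.card * k := Finset.sum_le_card_nsmul _ _ _ h

section Field

variable {F : Type*} [Field F]

lemma exists_eq_smul_of_mul_sub_mul_eq_zero {a c x z : F} (hac : (a, c) ≠ 0)
    (h : x * c - z * a = 0) : ∃ t : F, (x, z) = t • (a, c) := by
  by_cases ha : a = 0
  · subst ha
    have hc : c ≠ 0 := by rintro rfl; exact hac rfl
    have hx : x = 0 := by simpa [hc] using h
    exact ⟨z / c, by simp [hx, hc]⟩
  · refine ⟨x / a, Prod.ext (by simp [ha]) ?_⟩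
    simp only [Prod.smul_mk, smul_eq_mul]
    field_simp
    linear_combination -h

lemma adjLowerLeft_swap (g' g : Matrix (Fin 2) (Fin 2) F) :
    adjLowerLeft g' g = -adjLowerLeft g g' := by
  rw [adjLowerLeft, adjLowerLeft]
  ring

lemma firstCol_ne_zero {g : Matrix (Fin 2) (Fin 2) F} (hg : g.det ≠ 0) : firstCol g ≠ 0 := by
  intro h
  obtain ⟨h₀, h₁⟩ := Prod.mk.inj h
  exact hg (by rw [Matrix.det_fin_two, h₀, h₁]; ring)

lemma exists_firstCol_eq_smul {g' g : Matrix (Fin 2) (Fin 2) F} (hg' : firstCol g' ≠ 0)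
    (h : adjLowerLeft g' g = 0) : ∃ t : F, firstCol g = t • firstCol g' :=
  exists_eq_smul_of_mul_sub_mul_eq_zero hg' (by rwa [adjLowerLeft_swap, neg_eq_zero] at h)

lemma sq_mul_det_eq_neg_det {g h : Matrix (Fin 2) (Fin 2) F} {t : F}
    (htrace : adjTrace g h = 0) (ht : firstCol g = t • firstCol h) :
    t ^ 2 * h.det = -g.det := by
  obtain ⟨h₀, h₁⟩ := Prod.mk.inj ht
  simp only [firstCol, smul_eq_mul] at h₀ h₁
  rw [Matrix.det_fin_two, Matrix.det_fin_two]
  rw [adjTrace] at htrace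
  linear_combination t * htrace + (g 1 1 - t * h 1 1) * h₀ + (t * h 0 1 - g 0 1) * h₁

lemma exists_firstCol_eq_or_eq_neg {h : Matrix (Fin 2) (Fin 2) F} {d : F}
    (hd : d ≠ 0) (hh : firstCol h ≠ 0) :
    ∃ u : F × F, ∀ g : Matrix (Fin 2) (Fin 2) F, g.det = d → adjLowerLeft g h = 0 →
      adjTrace g h = 0 → firstCol g = u ∨ firstCol g = -u := by
  by_cases hex : ∃ t₀ : F, t₀ ^ 2 * h.det = -d
  · obtain ⟨t₀, ht₀⟩ := hex
    refine ⟨t₀ • firstCol h, fun g hg hlow htrace => ?_⟩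
    obtain ⟨t, ht⟩ := exists_firstCol_eq_smul hh
      (show adjLowerLeft h g = 0 by rw [adjLowerLeft_swap, hlow, neg_zero])
    have hhdet : h.det ≠ 0 := by
      intro h0; rw [h0, mul_zero] at ht₀; exact hd (neg_eq_zero.mp ht₀.symm)
    have hsq : t ^ 2 = t₀ ^ 2 := mul_right_cancel₀ hhdet
      ((sq_mul_det_eq_neg_det htrace ht).trans (by rw [hg, ht₀]))
    rcases sq_eq_sq_iff_eq_or_eq_neg.mp hsq with rfl | rfl
    · exact Or.inl ht
    · exact Or.inr (by rw [ht, neg_smul])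
  · refine ⟨0, fun g hg hlow htrace => (hex ?_).elim⟩
    obtain ⟨t, ht⟩ := exists_firstCol_eq_smul hh
      (show adjLowerLeft h g = 0 by rw [adjLowerLeft_swap, hlow, neg_zero])
    exact ⟨t, by rw [sq_mul_det_eq_neg_det htrace ht, hg]⟩

end Field

variable {F ω : Type*} [Field F] [DecidableEq F] {G : Finset ω}
  {mat : ω → Matrix (Fin 2) (Fin 2) F} {d : F} {σ : ℕ}

lemma card_filter_firstCol_eq_or_eq_neg_le
    (hσ : ∀ v, (G.filter fun g => firstCol (mat g) = v).card ≤ σ) (u : F × F) :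
    (G.filter fun g => firstCol (mat g) = u ∨ firstCol (mat g) = -u).card ≤ 2 * σ := by
  classical
  rw [Finset.filter_or, two_mul]
  exact (Finset.card_union_le _ _).trans (Nat.add_le_add (hσ u) (hσ (-u)))

lemma card_filter_adj_eq_le (hd : d ≠ 0) (hdet : ∀ g ∈ G, (mat g).det = d)
    (hσ : ∀ v, (G.filter fun g => firstCol (mat g) = v).card ≤ σ)
    {g₁ g₂ : Matrix (Fin 2) (Fin 2) F} (hne : firstCol g₁ ≠ firstCol g₂) :
    (G.filter fun g => adjLowerLeft (mat g) g₁ = adjLowerLeft (mat g) g₂ ∧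
      adjTrace (mat g) g₁ = adjTrace (mat g) g₂).card ≤ 2 * σ := by
  have hsub : firstCol (g₁ - g₂) ≠ 0 := fun h => hne (sub_eq_zero.mp h)
  obtain ⟨u, hu⟩ := exists_firstCol_eq_or_eq_neg hd hsub
  refine (Finset.card_le_card ?_).trans (card_filter_firstCol_eq_or_eq_neg_le hσ u)
  intro g hg
  obtain ⟨hgG, hlow, htrace⟩ := Finset.mem_filter.mp hg
  rw [adjLowerLeft, adjLowerLeft] at hlow
  rw [adjTrace, adjTrace] at htrace
  refine Finset.mem_filter.mpr ⟨hgG, hu (mat g) (hdet g hgG) ?_ ?_⟩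
  · simp only [adjLowerLeft, Matrix.sub_apply]
    linear_combination hlow
  · simp only [adjTrace, Matrix.sub_apply]
    linear_combination htrace

lemma card_adj_collisions_le (hd : d ≠ 0) (hdet : ∀ g ∈ G, (mat g).det = d)
    (hσ : ∀ v, (G.filter fun g => firstCol (mat g) = v).card ≤ σ) :
    (((G ×ˢ G) ×ˢ G).filter fun q =>
      adjLowerLeft (mat q.2) (mat q.1.1) = adjLowerLeft (mat q.2) (mat q.1.2) ∧
      adjTrace (mat q.2) (mat q.1.1) = adjTrace (mat q.2) (mat q.1.2)).card
      ≤ 3 * σ * G.card ^ 2 := by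
  have hfiber : ∀ a ∈ G ×ˢ G, (G.filter fun g =>
      adjLowerLeft (mat g) (mat a.1) = adjLowerLeft (mat g) (mat a.2) ∧
      adjTrace (mat g) (mat a.1) = adjTrace (mat g) (mat a.2)).card
      ≤ (if firstCol (mat a.2) = firstCol (mat a.1) then G.card else 0) + 2 * σ := by
    intro a _
    split_ifs with heq
    · exact (Finset.card_filter_le _ _).trans (Nat.le_add_right _ _)
    · exact (card_filter_adj_eq_le hd hdet hσ (Ne.symm heq)).trans (Nat.le_add_left _ _)
  have hdiag : ((G ×ˢ G).filter fun a => firstCol (mat a.2) = firstCol (mat a.1)).card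
      ≤ G.card * σ :=
    card_filter_product_le_card_mul (P := fun a b => firstCol (mat b) = firstCol (mat a))
      fun a _ => hσ (firstCol (mat a))
  calc (((G ×ˢ G) ×ˢ G).filter fun q =>
        adjLowerLeft (mat q.2) (mat q.1.1) = adjLowerLeft (mat q.2) (mat q.1.2) ∧
        adjTrace (mat q.2) (mat q.1.1) = adjTrace (mat q.2) (mat q.1.2)).card
      = ∑ a ∈ G ×ˢ G, (G.filter fun g =>
          adjLowerLeft (mat g) (mat a.1) = adjLowerLeft (mat g) (mat a.2) ∧
          adjTrace (mat g) (mat a.1) = adjTrace (mat g) (mat a.2)).card := by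
        simp only [Finset.card_filter, Finset.sum_product]
    _ ≤ ∑ a ∈ G ×ˢ G,
          ((if firstCol (mat a.2) = firstCol (mat a.1) then G.card else 0) + 2 * σ) :=
        Finset.sum_le_sum hfiber
    _ = ((G ×ˢ G).filter fun a => firstCol (mat a.2) = firstCol (mat a.1)).card * G.card
          + G.card * G.card * (2 * σ) := by
        rw [Finset.sum_add_distrib, ← Finset.sum_filter, Finset.sum_const, Finset.sum_const,
          Finset.card_product, smul_eq_mul, smul_eq_mul]
    _ ≤ G.card * σ * G.card + G.card * G.card * (2 * σ) := by gcongr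
    _ = 3 * σ * G.card ^ 2 := by ring

lemma card_filter_adjLowerLeft_eq_zero_le [Fintype F] (hdet : ∀ g ∈ G, (mat g).det ≠ 0)
    (hσ : ∀ v, (G.filter fun g => firstCol (mat g) = v).card ≤ σ) :
    ((G ×ˢ G).filter fun q => adjLowerLeft (mat q.1) (mat q.2) = 0).card
      ≤ G.card * (Fintype.card F * σ) := by
  classical
  refine card_filter_product_le_card_mul
    (P := fun a b => adjLowerLeft (mat a) (mat b) = 0) fun a ha => ?_
  have hsub : (G.filter fun b => adjLowerLeft (mat a) (mat b) = 0) ⊆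
      Finset.univ.biUnion fun t : F =>
        G.filter fun b => firstCol (mat b) = t • firstCol (mat a) := by
    intro b hb
    obtain ⟨hbG, hlow⟩ := Finset.mem_filter.mp hb
    obtain ⟨t, ht⟩ := exists_firstCol_eq_smul (firstCol_ne_zero (hdet a ha)) hlow
    exact Finset.mem_biUnion.mpr ⟨t, Finset.mem_univ t, Finset.mem_filter.mpr ⟨hbG, ht⟩⟩
  exact (Finset.card_le_card hsub).trans
    (Finset.card_biUnion_le_card_mul _ _ σ fun t _ => hσ _)

lemma card_filter_firstCol_eq_or_eq_neg_product_le
    (hσ : ∀ v, (G.filter fun g => firstCol (mat g) = v).card ≤ σ) :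
    ((G ×ˢ G).filter fun q => firstCol (mat q.2) = firstCol (mat q.1) ∨
      firstCol (mat q.2) = -firstCol (mat q.1)).card ≤ G.card * (2 * σ) :=
  card_filter_product_le_card_mul
    (P := fun a b => firstCol (mat b) = firstCol (mat a) ∨ firstCol (mat b) = -firstCol (mat a))
    fun a _ => card_filter_firstCol_eq_or_eq_neg_le hσ (firstCol (mat a))

end Collisions

section CauchySchwarz

variable {ω Z : Type*} [Fintype Z] [DecidableEq Z]

lemma sq_sum_filter_le_card_collisions (G : Finset ω) (P : ω → ω → Prop)
    [DecidableRel P] (ζ : ω → ω → Z)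
    (Ψ : Z → ℝ) :
    (∑ q ∈ (G ×ˢ G).filter (fun q => P q.1 q.2), Ψ (ζ q.1 q.2)) ^ 2 ≤
      G.card * (∑ z, Ψ z ^ 2) *
      (((G ×ˢ G) ×ˢ G).filter fun q =>
        P q.2 q.1.1 ∧ P q.2 q.1.2 ∧ ζ q.2 q.1.1 = ζ q.2 q.1.2).card := by
  let mult (x : ω × Z) : ℝ := ∑ g ∈ G, if P x.1 g ∧ ζ x.1 g = x.2 then 1 else 0
  have hsum : ∑ q ∈ (G ×ˢ G).filter (fun q => P q.1 q.2), Ψ (ζ q.1 q.2) =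
      ∑ x ∈ G ×ˢ (Finset.univ : Finset Z), Ψ x.2 * mult x := by
    rw [Finset.sum_filter, Finset.sum_product, Finset.sum_product]
    refine Finset.sum_congr rfl fun a _ => ?_
    simp only [mult, Finset.mul_sum]
    rw [Finset.sum_comm]
    refine Finset.sum_congr rfl fun b _ => ?_
    by_cases h : P a b <;> simp [h]
  have hweights : ∑ x ∈ G ×ˢ (Finset.univ : Finset Z), Ψ x.2 ^ 2 = G.card * ∑ z, Ψ z ^ 2 := by
    simp [Finset.sum_product]
  have hmult : ∑ x ∈ G ×ˢ (Finset.univ : Finset Z), mult x ^ 2 =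
      (((G ×ˢ G) ×ˢ G).filter fun q =>
        P q.2 q.1.1 ∧ P q.2 q.1.2 ∧ ζ q.2 q.1.1 = ζ q.2 q.1.2).card := by
    rw [Finset.natCast_card_filter, Finset.sum_product, Finset.sum_product_right]
    refine Finset.sum_congr rfl fun a _ => ?_
    simp only [mult, pow_two, Finset.sum_mul_sum]
    rw [Finset.sum_comm, Finset.sum_product]
    refine Finset.sum_congr rfl fun b _ => ?_
    rw [Finset.sum_comm]
    refine Finset.sum_congr rfl fun c _ => ?_
    by_cases h₁ : P a b <;> by_cases h₂ : P a c <;> simp [h₁, h₂]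
  rw [hsum, ← hweights, ← hmult]
  exact Finset.sum_mul_sq_le_sq_mul_sq _ _ _

end CauchySchwarz

/-! ### Permutation representations -/

section SqNorm

variable {X : Type*} [Fintype X]

/-- The squared `ℓ²` norm of a real function on a finite type. -/
def sqNorm (f : X → ℝ) : ℝ := ∑ x, f x ^ 2

lemma sqNorm_nonneg (f : X → ℝ) : 0 ≤ sqNorm f := Finset.sum_nonneg fun _ _ => sq_nonneg _

@[simp] lemma sqNorm_zero : sqNorm (0 : X → ℝ) = 0 := by simp [sqNorm]

lemma sqNorm_eq_zero_iff {f : X → ℝ} : sqNorm f = 0 ↔ f = 0 := by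
  simp [sqNorm, Finset.sum_eq_zero_iff_of_nonneg fun _ _ => sq_nonneg _, funext_iff]

lemma dotProduct_self_eq_sqNorm (f : X → ℝ) : f ⬝ᵥ f = sqNorm f :=
  Finset.sum_congr rfl fun _ _ => (pow_two _).symm

lemma dotProduct_sq_le (f h : X → ℝ) : (f ⬝ᵥ h) ^ 2 ≤ sqNorm f * sqNorm h :=
  Finset.sum_mul_sq_le_sq_mul_sq _ _ _

lemma sqNorm_smul (c : ℝ) (f : X → ℝ) : sqNorm (c • f) = c ^ 2 * sqNorm f := by
  simp [sqNorm, mul_pow, Finset.mul_sum]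

lemma sqNorm_add_le (f h : X → ℝ) : sqNorm (f + h) ≤ 2 * sqNorm f + 2 * sqNorm h := by
  rw [sqNorm, sqNorm, sqNorm, Finset.mul_sum, Finset.mul_sum, ← Finset.sum_add_distrib]
  refine Finset.sum_le_sum fun x _ => ?_
  rw [← mul_add]
  exact add_sq_le

lemma sqNorm_pow_sq_le {T : Module.End ℝ (X → ℝ)} (hT : ∀ f h, T f ⬝ᵥ h = f ⬝ᵥ T h)
    (f : X → ℝ) (k : ℕ) : sqNorm ((T ^ k) f) ^ 2 ≤ sqNorm f * sqNorm ((T ^ (2 * k)) f) := by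
  have hTk : ∀ f h, (T ^ k) f ⬝ᵥ h = f ⬝ᵥ (T ^ k) h := by
    induction k with
    | zero => simp
    | succ k ih =>
      intro f h
      rw [pow_succ, Module.End.mul_apply, ih, hT, ← Module.End.mul_apply, ← pow_succ', pow_succ]
  calc sqNorm ((T ^ k) f) ^ 2 = (f ⬝ᵥ (T ^ (2 * k)) f) ^ 2 := by
        rw [← dotProduct_self_eq_sqNorm, hTk, ← Module.End.mul_apply, ← pow_add, two_mul]
    _ ≤ sqNorm f * sqNorm ((T ^ (2 * k)) f) := dotProduct_sq_le _ _

lemma sqNorm_pow_two_pow_mul_le {T : Module.End ℝ (X → ℝ)} (hT : ∀ f h, T f ⬝ᵥ h = f ⬝ᵥ T h)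
    (f : X → ℝ) (s : ℕ) :
    sqNorm (T f) ^ 2 ^ s * sqNorm f ≤ sqNorm ((T ^ 2 ^ s) f) * sqNorm f ^ 2 ^ s := by
  have hf := sqNorm_nonneg f
  have hTf := sqNorm_nonneg (T f)
  induction s with
  | zero => simp
  | succ s ih =>
    rcases hf.eq_or_lt with h0 | hpos
    · simp [← h0]
    refine le_of_mul_le_mul_right ?_ hpos
    calc sqNorm (T f) ^ 2 ^ (s + 1) * sqNorm f * sqNorm f
        = (sqNorm (T f) ^ 2 ^ s * sqNorm f) ^ 2 := by ring
      _ ≤ (sqNorm ((T ^ 2 ^ s) f) * sqNorm f ^ 2 ^ s) ^ 2 := by gcongr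
      _ = sqNorm ((T ^ 2 ^ s) f) ^ 2 * sqNorm f ^ 2 ^ (s + 1) := by ring
      _ ≤ sqNorm f * sqNorm ((T ^ (2 * 2 ^ s)) f) * sqNorm f ^ 2 ^ (s + 1) := by
        gcongr
        exact sqNorm_pow_sq_le hT f _
      _ = sqNorm ((T ^ 2 ^ (s + 1)) f) * sqNorm f ^ 2 ^ (s + 1) * sqNorm f := by
        rw [← pow_succ']
        ring

end SqNorm

section PermRep

variable {Γ X : Type*} [Group Γ] [MulAction Γ X]

variable (Γ X) in
/-- The permutation representation of a group acting on `X`, on real functions on `X`. -/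
def permRep : Representation ℝ Γ (X → ℝ) where
  toFun g := LinearMap.funLeft ℝ ℝ fun x => g⁻¹ • x
  map_one' := by ext; simp
  map_mul' g h := by ext; simp [mul_smul]

lemma permRep_apply (g : Γ) (f : X → ℝ) (x : X) : permRep Γ X g f x = f (g⁻¹ • x) := rfl

lemma ncard_fixedBy_conj (g k : Γ) : (fixedBy X (k⁻¹ * g * k)).ncard = (fixedBy X g).ncard := by
  have h := MulAction.smul_fixedBy (α := X) g k⁻¹
  rw [inv_inv] at h
  rw [← h, Set.ncard_smul_set]

variable [Fintype X]

lemma sqNorm_permRep (g : Γ) (f : X → ℝ) : sqNorm (permRep Γ X g f) = sqNorm f :=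
  Equiv.sum_comp (MulAction.toPerm g⁻¹) fun x => f x ^ 2

lemma permRep_dotProduct (g : Γ) (f h : X → ℝ) :
    permRep Γ X g f ⬝ᵥ h = f ⬝ᵥ permRep Γ X g⁻¹ h := by
  rw [dotProduct, ← Equiv.sum_comp (MulAction.toPerm g)]
  simp [dotProduct, permRep_apply]

variable {ι : Type*}

lemma sqNorm_sum_permRep_le (S : Finset ι) (g : ι → Γ) (f : X → ℝ) :
    sqNorm ((∑ i ∈ S, permRep Γ X (g i)) f) ≤ (S.card : ℝ) ^ 2 * sqNorm f := by
  calc sqNorm ((∑ i ∈ S, permRep Γ X (g i)) f)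
      = ∑ x, (∑ i ∈ S, permRep Γ X (g i) f x) ^ 2 := by
        simp only [sqNorm, LinearMap.sum_apply, Finset.sum_apply]
    _ ≤ ∑ x, S.card * ∑ i ∈ S, permRep Γ X (g i) f x ^ 2 :=
        Finset.sum_le_sum fun x _ => sq_sum_le_card_mul_sum_sq
    _ = S.card * ∑ i ∈ S, sqNorm (permRep Γ X (g i) f) := by
        rw [← Finset.mul_sum, Finset.sum_comm]
        rfl
    _ = (S.card : ℝ) ^ 2 * sqNorm f := by
        simp only [sqNorm_permRep, Finset.sum_const, nsmul_eq_mul]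
        ring

open Classical in
lemma natCast_ncard_fixedBy (g : Γ) :
    ((fixedBy X g).ncard : ℝ) = ∑ x : X, if g • x = x then 1 else 0 := by
  rw [Set.ncard_eq_toFinset_card', Finset.sum_boole]
  congr 2
  ext x
  simp

open Classical in
/-- The matrix of `∑ i ∈ S, permRep Γ X (g i)`. -/
noncomputable def permKernel (S : Finset ι) (g : ι → Γ) (x y : X) : ℝ :=
  ∑ i ∈ S, if g i • y = x then 1 else 0

lemma sum_permRep_apply_eq_sum_permKernel (S : Finset ι) (g : ι → Γ) (f : X → ℝ) (x : X) :
    (∑ i ∈ S, permRep Γ X (g i)) f x = ∑ y, permKernel S g x y * f y := by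
  classical
  simp only [permKernel, Finset.sum_mul, LinearMap.sum_apply, Finset.sum_apply, permRep_apply]
  rw [Finset.sum_comm]
  refine Finset.sum_congr rfl fun i _ => ?_
  simp only [smul_eq_iff_eq_inv_smul, ite_mul, one_mul, zero_mul, Finset.sum_ite_eq',
    Finset.mem_univ, if_true]

lemma sum_permKernel (S : Finset ι) (g : ι → Γ) :
    ∑ x, ∑ y, permKernel (X := X) S g x y = S.card * Fintype.card X := by
  classical
  have hcol : ∀ y : X, ∑ x, permKernel S g x y = S.card := by
    intro y
    simp only [permKernel]
    rw [Finset.sum_comm]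
    simp
  rw [Finset.sum_comm]
  simp [hcol, mul_comm]

lemma sum_permKernel_sq (S : Finset ι) (g : ι → Γ) :
    ∑ x, ∑ y, permKernel (X := X) S g x y ^ 2 =
      ∑ i ∈ S, ∑ j ∈ S, ((fixedBy X ((g j)⁻¹ * g i)).ncard : ℝ) := by
  classical
  have hcol : ∀ y : X, ∑ x, permKernel S g x y ^ 2 =
      ∑ i ∈ S, ∑ j ∈ S, if ((g j)⁻¹ * g i) • y = y then 1 else 0 := by
    intro y
    simp only [permKernel, pow_two, Finset.sum_mul_sum]
    rw [Finset.sum_comm]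
    refine Finset.sum_congr rfl fun i _ => ?_
    rw [Finset.sum_comm]
    refine Finset.sum_congr rfl fun j _ => ?_
    simp [mul_smul, inv_smul_eq_iff, @eq_comm _ (g j • y)]
  rw [Finset.sum_comm]
  simp only [hcol, natCast_ncard_fixedBy]
  rw [Finset.sum_comm]
  exact Finset.sum_congr rfl fun i _ => Finset.sum_comm

/-- Hilbert–Schmidt bound: on mean-zero functions the kernel may be replaced by its difference
with its mean. -/
lemma sqNorm_sum_permRep_le_sum_fixedBy [Nonempty X] (S : Finset ι) (g : ι → Γ) {f : X → ℝ}
    (hf : ∑ x, f x = 0) :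
    sqNorm ((∑ i ∈ S, permRep Γ X (g i)) f) ≤
      (∑ i ∈ S, ∑ j ∈ S, ((fixedBy X ((g j)⁻¹ * g i)).ncard - 1 : ℝ)) * sqNorm f := by
  have hX : (Fintype.card X : ℝ) ≠ 0 := by exact_mod_cast Fintype.card_ne_zero
  set c : ℝ := S.card / Fintype.card X with hc
  have happly : ∀ x, (∑ i ∈ S, permRep Γ X (g i)) f x = ∑ y, (permKernel S g x y - c) * f y := by
    intro x
    simp only [sub_mul, Finset.sum_sub_distrib]
    rw [sum_permRep_apply_eq_sum_permKernel, ← Finset.mul_sum, hf, mul_zero, sub_zero]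
  have hvar : ∑ x : X, ∑ y, (permKernel S g x y - c) ^ 2 =
      ∑ i ∈ S, ∑ j ∈ S, ((fixedBy X ((g j)⁻¹ * g i)).ncard - 1 : ℝ) := by
    simp only [sub_sq, mul_right_comm _ _ c, Finset.sum_add_distrib, Finset.sum_sub_distrib,
      ← Finset.sum_mul, ← Finset.mul_sum, sum_permKernel, sum_permKernel_sq, Finset.sum_const,
      Finset.card_univ, nsmul_eq_mul, mul_one]
    rw [hc]
    field_simp
    ring
  rw [← hvar, Finset.sum_mul]
  refine Finset.sum_le_sum fun x _ => ?_
  rw [happly]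
  exact Finset.sum_mul_sq_le_sq_mul_sq _ _ _

end PermRep

/-! ### Fixed points on the projective line -/

section FixedPoints

variable {K : Type*} [Field K]

lemma ncard_setOf_quadratic_eq_zero [NeZero (2 : K)] {a b c : K} (ha : a ≠ 0) :
    {x : K | a * x ^ 2 + b * x + c = 0}.ncard = {y : K | y ^ 2 = discrim a b c}.ncard := by
  have h2a : 2 * a ≠ 0 := mul_ne_zero two_ne_zero ha
  have hpre : {x : K | a * x ^ 2 + b * x + c = 0} =
      (fun x => 2 * a * x + b) ⁻¹' {y : K | y ^ 2 = discrim a b c} := by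
    ext x
    simp only [Set.mem_ofPred_eq, Set.mem_preimage, pow_two x,
      quadratic_eq_zero_iff_discrim_eq_sq ha, eq_comm]
  rw [hpre]
  refine Set.ncard_preimage_of_injective_subset_range (fun x y hxy => ?_) fun y _ =>
    ⟨(y - b) / (2 * a), by field_simp; ring⟩
  exact mul_left_cancel₀ h2a (add_right_cancel hxy)

variable [DecidableEq K]

lemma natCast_ncard_fixedBy_onePoint [Finite K] (h : GL (Fin 2) K) :
    ((fixedBy (OnePoint K) h).ncard : ℝ) = (if h 1 0 = 0 then 1 else 0) +
      {x : K | h 1 0 * x ^ 2 + (h 1 1 - h 0 0) * x + -h 0 1 = 0}.ncard := by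
  have := Fintype.ofFinite K
  have hsum (φ : OnePoint K → ℝ) : ∑ x, φ x = φ OnePoint.infty + ∑ x : K, φ x :=
    Fintype.sum_option φ
  have hroot (x : K) : h • (x : OnePoint K) = x ↔
      h 1 0 * x ^ 2 + (h 1 1 - h 0 0) * x + -h 0 1 = 0 := by
    rw [← GeneralLinearGroup.fixpointPolynomial_aeval_eq_zero_iff]
    simp [GeneralLinearGroup.fixpointPolynomial, sub_eq_add_neg]
  classical
  rw [natCast_ncard_fixedBy, hsum, Set.ncard_eq_toFinset_card', Set.toFinset_ofPred,
    Finset.natCast_card_filter]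
  simp only [OnePoint.smul_infty_eq_self_iff, hroot]

lemma ncard_fixedBy_onePoint_sub_one_le [Fintype K] (h : GL (Fin 2) K) :
    ((fixedBy (OnePoint K) h).ncard : ℝ) - 1 ≤ Fintype.card K := by
  have hle : (fixedBy (OnePoint K) h).ncard ≤ Fintype.card K + 1 := by
    rw [← Fintype.card_option, ← Nat.card_eq_fintype_card]
    exact Set.ncard_le_card _
  rw [sub_le_iff_le_add]
  exact_mod_cast hle

lemma ncard_fixedBy_onePoint_sub_one_le_one [Finite K] {h : GL (Fin 2) K}
    (hlow : h 1 0 = 0) (hscalar : ¬(h 1 1 = h 0 0 ∧ h 0 1 = 0)) :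
    ((fixedBy (OnePoint K) h).ncard : ℝ) - 1 ≤ 1 := by
  have hroots : {x : K | h 1 0 * x ^ 2 + (h 1 1 - h 0 0) * x + -h 0 1 = 0}.ncard ≤ 1 := by
    refine (Set.ncard_le_one (Set.toFinite _)).mpr fun x hx y hy => ?_
    simp only [Set.mem_ofPred_eq, hlow] at hx hy
    have hxy : (h 1 1 - h 0 0) * (x - y) = 0 := by linear_combination hx - hy
    rcases mul_eq_zero.mp hxy with heq | heq
    · rw [heq] at hx
      exact (hscalar ⟨sub_eq_zero.mp heq, by linear_combination -hx⟩).elim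
    · exact sub_eq_zero.mp heq
  rw [natCast_ncard_fixedBy_onePoint, if_pos hlow, add_sub_cancel_left]
  exact_mod_cast hroots

end FixedPoints

section QuadraticCharacter

variable {p : ℕ} [Fact p.Prime]

lemma ncard_fixedBy_onePoint_sub_one_eq_quadChi (hp : p ≠ 2) {h : GL (Fin 2) (ZMod p)}
    (hlow : h 1 0 ≠ 0) :
    ((fixedBy (OnePoint (ZMod p)) h).ncard : ℝ) - 1 =
      quadChi (h.val.trace ^ 2 - 4 * h.val.det) := by
  have hchar : ringChar (ZMod p) ≠ 2 := by rwa [ZMod.ringChar_zmod_n]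
  have : NeZero (2 : ZMod p) := ⟨Ring.two_ne_zero hchar⟩
  have hdisc : discrim (h 1 0) (h 1 1 - h 0 0) (-h 0 1) = h.val.trace ^ 2 - 4 * h.val.det := by
    rw [discrim, Matrix.trace_fin_two, Matrix.det_fin_two]
    ring
  have hsqrt := quadraticChar_card_sqrts hchar (h.val.trace ^ 2 - 4 * h.val.det)
  rw [natCast_ncard_fixedBy_onePoint, if_neg hlow, ncard_setOf_quadratic_eq_zero hlow, hdisc,
    zero_add, sub_eq_iff_eq_add, quadChi, Set.ncard_eq_toFinset_card']
  exact_mod_cast hsqrt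

end QuadraticCharacter

section DigitMatrices

variable {K : Type*} [Field K]

/-- The involution `x ↦ x⁻¹` of the projective line. -/
def swapGL : GL (Fin 2) K :=
  ⟨!![0, 1; 1, 0], !![0, 1; 1, 0], by simp [Matrix.one_fin_two], by simp [Matrix.one_fin_two]⟩

lemma swapGL_inv : (swapGL : GL (Fin 2) K)⁻¹ = swapGL := rfl

/-- The Möbius transformation `x ↦ d + x⁻¹`, which prepends the partial quotient `d`. -/
def digitGL (d : K) : GL (Fin 2) K := upperRightHom d * swapGL

lemma digitGL_val (d : K) : (digitGL d).val = !![d, 1; 1, 0] := by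
  simp [digitGL, swapGL]

lemma val_inv_mul_mul_upperRightHom (g g' : GL (Fin 2) K) (j : K) :
    (g'⁻¹ * g * upperRightHom j).val =
      g'.val.det⁻¹ • (g'.val.adjugate * g.val * !![1, j; 0, 1]) := by
  rw [Units.val_mul, Units.val_mul, Matrix.coe_units_inv, Matrix.inv_def, Ring.inverse_eq_inv',
    Matrix.smul_mul, Matrix.smul_mul]
  rfl

lemma inv_mul_mul_upperRightHom_apply_one_zero (g g' : GL (Fin 2) K) (j : K) :
    (g'⁻¹ * g * upperRightHom j) 1 0 = g'.val.det⁻¹ * adjLowerLeft g'.val g.val := by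
  rw [val_inv_mul_mul_upperRightHom, Matrix.smul_apply, smul_eq_mul, Matrix.adjugate_fin_two]
  congr 1
  simp only [Matrix.mul_apply, Fin.sum_univ_two, Matrix.of_apply, Matrix.cons_val,
    adjLowerLeft]
  ring

lemma trace_inv_mul_mul_upperRightHom (g g' : GL (Fin 2) K) (j : K) :
    (g'⁻¹ * g * upperRightHom j).val.trace =
      g'.val.det⁻¹ * (adjTrace g'.val g.val + adjLowerLeft g'.val g.val * j) := by
  rw [val_inv_mul_mul_upperRightHom, Matrix.trace_smul, Matrix.adjugate_fin_two,
    Matrix.trace_fin_two, smul_eq_mul]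
  congr 1
  simp only [Matrix.mul_apply, Fin.sum_univ_two, Matrix.of_apply, Matrix.cons_val,
    adjLowerLeft, adjTrace]
  ring

lemma det_inv_mul_mul_upperRightHom {g g' : GL (Fin 2) K} (hdet : g.val.det = g'.val.det) (j : K) :
    (g'⁻¹ * g * upperRightHom j).val.det = 1 := by
  have hne : g'.val.det ≠ 0 := g'.det_ne_zero
  rw [val_inv_mul_mul_upperRightHom, Matrix.det_smul, Matrix.det_mul, Matrix.det_mul,
    Matrix.det_adjugate, hdet, Matrix.det_fin_two_of, Fintype.card_fin]
  field_simp
  ring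

lemma firstCol_eq_or_eq_neg_of_scalar {g g' : GL (Fin 2) K} (hdet : g.val.det = g'.val.det) {j : K}
    (hlow : (g'⁻¹ * g * upperRightHom j) 1 0 = 0)
    (hdiag : (g'⁻¹ * g * upperRightHom j) 1 1 = (g'⁻¹ * g * upperRightHom j) 0 0)
    (hup : (g'⁻¹ * g * upperRightHom j) 0 1 = 0) :
    firstCol g.val = firstCol g'.val ∨ firstCol g.val = -firstCol g'.val := by
  set h := g'⁻¹ * g * upperRightHom j with hh
  have hsq : h 0 0 ^ 2 = 1 := by
    rw [← det_inv_mul_mul_upperRightHom hdet j, Matrix.det_fin_two, ← hh, hlow, hdiag]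
    ring
  have hval : h.val = h 0 0 • 1 := by
    ext i k
    fin_cases i <;> fin_cases k <;> simp [hlow, hup, hdiag]
  have hmul : g.val * (upperRightHom j).val = h 0 0 • g'.val := by
    have : g * upperRightHom j = g' * h := by rw [hh]; group
    rw [← Units.val_mul, this, Units.val_mul]
    nth_rewrite 1 [hval]
    rw [Matrix.mul_smul, mul_one]
  have hcol : firstCol g.val = h 0 0 • firstCol g'.val := by
    have hfst := congrFun (congrFun hmul 0) 0
    have hsnd := congrFun (congrFun hmul 1) 0
    exact Prod.ext (by simpa [firstCol, Matrix.mul_apply, Fin.sum_univ_two] using hfst)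
      (by simpa [firstCol, Matrix.mul_apply, Fin.sum_univ_two] using hsnd)
  rcases sq_eq_one_iff.mp hsq with h1 | h1
  · exact Or.inl (by rw [hcol, h1, one_smul])
  · exact Or.inr (by rw [hcol, h1, neg_smul, one_smul])

lemma ncard_fixedBy_digitGL [DecidableEq K] (g g' : GL (Fin 2) K) (d d' : K) :
    (fixedBy (OnePoint K) ((g' * digitGL d')⁻¹ * (g * digitGL d))).ncard =
      (fixedBy (OnePoint K) (g'⁻¹ * g * upperRightHom (d - d'))).ncard := by
  have hconj : (g' * digitGL d')⁻¹ * (g * digitGL d) =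
      (digitGL d')⁻¹ * (g'⁻¹ * g * upperRightHom (d - d')) * digitGL d' := by
    rw [digitGL, digitGL, sub_eq_add_neg, AddChar.map_add_eq_mul, AddChar.map_neg_eq_inv]
    group
  rw [hconj, ncard_fixedBy_conj]

lemma ncard_fixedBy_digitGL_sub_one_le_one [DecidableEq K] [Finite K] {g g' : GL (Fin 2) K}
    (hdet : g.val.det = g'.val.det) (hlow : adjLowerLeft g'.val g.val = 0)
    (hcol : ¬(firstCol g.val = firstCol g'.val ∨ firstCol g.val = -firstCol g'.val)) (d d' : K) :
    ((fixedBy (OnePoint K) ((g' * digitGL d')⁻¹ * (g * digitGL d))).ncard : ℝ) - 1 ≤ 1 := by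
  have hlow' : (g'⁻¹ * g * upperRightHom (d - d')) 1 0 = 0 := by
    rw [inv_mul_mul_upperRightHom_apply_one_zero, hlow, mul_zero]
  rw [ncard_fixedBy_digitGL]
  exact ncard_fixedBy_onePoint_sub_one_le_one hlow' fun h =>
    hcol (firstCol_eq_or_eq_neg_of_scalar hdet hlow' h.1 h.2)

lemma ncard_fixedBy_digitGL_sub_one {p : ℕ} [Fact p.Prime] (hp : p ≠ 2)
    {g g' : GL (Fin 2) (ZMod p)} {D : ZMod p} (hg : g.val.det = D) (hg' : g'.val.det = D)
    (hlow : adjLowerLeft g'.val g.val ≠ 0) (d d' : ZMod p) :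
    ((fixedBy (OnePoint (ZMod p)) ((g' * digitGL d')⁻¹ * (g * digitGL d))).ncard : ℝ) - 1 =
      quadChi ((adjTrace g'.val g.val - 2 * D) / adjLowerLeft g'.val g.val + (d - d')) *
      quadChi ((adjTrace g'.val g.val + 2 * D) / adjLowerLeft g'.val g.val + (d - d')) := by
  have hD : D ≠ 0 := hg ▸ g.det_ne_zero
  have hsq : quadChi ((adjLowerLeft g'.val g.val / D) ^ 2) = 1 := by
    rw [quadChi, quadraticChar_sq_one' (div_ne_zero hlow hD), Int.cast_one]
  have hlow' : (g'⁻¹ * g * upperRightHom (d - d')) 1 0 ≠ 0 := by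
    rw [inv_mul_mul_upperRightHom_apply_one_zero, hg']
    exact mul_ne_zero (inv_ne_zero hD) hlow
  rw [ncard_fixedBy_digitGL, ncard_fixedBy_onePoint_sub_one_eq_quadChi hp hlow', ← quadChi_mul,
    ← one_mul (quadChi (_ * _)), ← hsq, ← quadChi_mul, trace_inv_mul_mul_upperRightHom,
    det_inv_mul_mul_upperRightHom (hg.trans hg'.symm), hg']
  congr 1
  field_simp
  ring

end DigitMatrices

/-! ### The Hilbert–Schmidt sum -/

section CorrelationShifts

variable {F : Type*} [Field F]

/-- For `g` and `g'` of determinant `D`, the negatives of the two values of `j` for which the fixed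
point equation of `g'⁻¹ * g * !![1, j; 0, 1]` has discriminant `0`. -/
def fixedPointShifts (D : F) (g' g : Matrix (Fin 2) (Fin 2) F) : F × F :=
  ((adjTrace g' g - 2 * D) / adjLowerLeft g' g, (adjTrace g' g + 2 * D) / adjLowerLeft g' g)

lemma adj_eq_of_fixedPointShifts_eq [NeZero (2 : F)] {D : F} (hD : D ≠ 0)
    {g' g h : Matrix (Fin 2) (Fin 2) F} (hg : adjLowerLeft g' g ≠ 0) (hh : adjLowerLeft g' h ≠ 0)
    (heq : fixedPointShifts D g' g = fixedPointShifts D g' h) :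
    adjLowerLeft g' g = adjLowerLeft g' h ∧ adjTrace g' g = adjTrace g' h := by
  have h4D : 2 * 2 * D ≠ 0 := mul_ne_zero (mul_ne_zero two_ne_zero two_ne_zero) hD
  obtain ⟨hsub, hadd⟩ := Prod.mk.inj heq
  rw [div_eq_div_iff hg hh] at hsub hadd
  have hlow : adjLowerLeft g' g = adjLowerLeft g' h :=
    mul_left_cancel₀ h4D (by linear_combination hsub - hadd)
  rw [← hlow] at hsub
  exact ⟨hlow, sub_left_injective (mul_right_cancel₀ hg hsub)⟩

end CorrelationShifts

lemma abs_le_add_abs_pow_div (x : ℝ) {t : ℝ} (ht : 0 < t) {K : ℕ} (hK : 0 < K) :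
    |x| ≤ t + |x| ^ K / t ^ (K - 1) := by
  rcases le_or_gt |x| t with hx | hx
  · exact hx.trans (le_add_of_nonneg_right (by positivity))
  · have hpow : |x| ≤ |x| ^ K / t ^ (K - 1) := by
      rw [le_div_iff₀ (by positivity), ← mul_pow_sub_one hK.ne' |x|]
      gcongr
    linarith

section HilbertSchmidt

variable {p : ℕ} [Fact p.Prime] {ι ω I : Type*} [Fintype ι] [Fintype I]

/-- The correlation `∑ i, χ(z₁ + f i) χ(z₂ + f i)` of the quadratic character `χ` modulo `p`. -/
noncomputable def quadCorrelation (f : ι → ZMod p) (z : ZMod p × ZMod p) : ℝ :=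
  ∑ i, quadChi (z.1 + f i) * quadChi (z.2 + f i)

variable {G : Finset ω} {mat : ω → GL (Fin 2) (ZMod p)} {D : ZMod p} {σ : ℕ}

lemma sum_ncard_fixedBy_digitGL_sub_one_le (hp : p ≠ 2) {g g' : GL (Fin 2) (ZMod p)}
    (hg : g.val.det = D) (hg' : g'.val.det = D) (δ : I → ZMod p) :
    ∑ i : I × I, (((fixedBy (OnePoint (ZMod p))
        ((g' * digitGL (δ i.2))⁻¹ * (g * digitGL (δ i.1)))).ncard : ℝ) - 1) ≤
      (if adjLowerLeft g'.val g.val ≠ 0 then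
        |quadCorrelation (fun i : I × I => δ i.1 - δ i.2) (fixedPointShifts D g'.val g.val)|
        else 0) +
      (if adjLowerLeft g'.val g.val = 0 then (Fintype.card I : ℝ) ^ 2 else 0) +
      (if firstCol g.val = firstCol g'.val ∨ firstCol g.val = -firstCol g'.val then
        p * (Fintype.card I : ℝ) ^ 2 else 0) := by
  have sum_le_mul_sq {F : I × I → ℝ} {c : ℝ} (hF : ∀ i, F i ≤ c) :
      ∑ i, F i ≤ c * (Fintype.card I : ℝ) ^ 2 := by
    calc ∑ i, F i ≤ Fintype.card (I × I) • c := Finset.sum_le_card_nsmul _ _ _ fun i _ => hF i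
      _ = c * (Fintype.card I : ℝ) ^ 2 := by
        rw [Fintype.card_prod, nsmul_eq_mul]
        push_cast
        ring
  by_cases hlow : adjLowerLeft g'.val g.val = 0
  · rw [if_neg (not_not.mpr hlow), if_pos hlow, zero_add]
    split_ifs with hcol
    · have hle := sum_le_mul_sq fun i : I × I => (ncard_fixedBy_onePoint_sub_one_le
        ((g' * digitGL (δ i.2))⁻¹ * (g * digitGL (δ i.1)))).trans_eq (by rw [ZMod.card])
      exact hle.trans (le_add_of_nonneg_left (by positivity))
    · have hle := sum_le_mul_sq fun i : I × I =>
        ncard_fixedBy_digitGL_sub_one_le_one (hg.trans hg'.symm) hlow hcol (δ i.1) (δ i.2)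
      rwa [one_mul, ← add_zero (_ ^ 2)] at hle
  · rw [if_pos hlow, if_neg hlow, add_zero]
    refine le_trans ?_ (le_add_of_nonneg_right (by positivity))
    refine le_trans (le_of_eq ?_) (le_abs_self _)
    exact Finset.sum_congr rfl fun i _ => ncard_fixedBy_digitGL_sub_one hp hg hg' hlow _ _

lemma sum_abs_pow_fixedPointShifts_le (hp : p ≠ 2) (hdet : ∀ g ∈ G, (mat g).val.det = D)
    (hσ : ∀ v, (G.filter fun g => firstCol (mat g).val = v).card ≤ σ)
    {Φ : ZMod p × ZMod p → ℝ} {K : ℕ} {M R : ℝ} (hM : ∑ z, Φ z ^ (2 * K) ≤ M) (hR : 0 ≤ R)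
    (hRM : (G.card : ℝ) ^ 3 * (3 * σ) * M ≤ R ^ 2) :
    ∑ q ∈ (G ×ˢ G).filter (fun q => adjLowerLeft (mat q.1).val (mat q.2).val ≠ 0),
      |Φ (fixedPointShifts D (mat q.1).val (mat q.2).val)| ^ K ≤ R := by
  have : NeZero (2 : ZMod p) := ⟨Ring.two_ne_zero (by rwa [ZMod.ringChar_zmod_n])⟩
  have hcoll : (((G ×ˢ G) ×ˢ G).filter fun q => adjLowerLeft (mat q.2).val (mat q.1.1).val ≠ 0 ∧
      adjLowerLeft (mat q.2).val (mat q.1.2).val ≠ 0 ∧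
      fixedPointShifts D (mat q.2).val (mat q.1.1).val =
        fixedPointShifts D (mat q.2).val (mat q.1.2).val).card ≤ 3 * σ * G.card ^ 2 := by
    rcases G.eq_empty_or_nonempty with rfl | ⟨g, hg⟩
    · simp
    have hD : D ≠ 0 := hdet g hg ▸ (mat g).det_ne_zero
    refine le_trans (Finset.card_le_card ?_)
      (card_adj_collisions_le (mat := fun g => (mat g).val) hD hdet hσ)
    exact Finset.monotone_filter_right _ fun q _ hq =>
      adj_eq_of_fixedPointShifts_eq hD hq.1 hq.2.1 hq.2.2
  have hsq : ∑ z, (|Φ z| ^ K) ^ 2 ≤ M := by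
    simpa only [← pow_mul, mul_comm K 2, (even_two_mul K).pow_abs] using hM
  have hM0 : 0 ≤ M := le_trans (by positivity) hsq
  refine le_of_sq_le_sq ?_ hR
  refine (sq_sum_filter_le_card_collisions G
    (fun a b => adjLowerLeft (mat a).val (mat b).val ≠ 0)
    (fun a b => fixedPointShifts D (mat a).val (mat b).val) fun z => |Φ z| ^ K).trans ?_
  calc _ ≤ (G.card : ℝ) * M * (3 * σ * G.card ^ 2 : ℕ) := by gcongr
    _ = (G.card : ℝ) ^ 3 * (3 * σ) * M := by push_cast; ring
    _ ≤ R ^ 2 := hRM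

lemma sum_abs_fixedPointShifts_le (hp : p ≠ 2) (hdet : ∀ g ∈ G, (mat g).val.det = D)
    (hσ : ∀ v, (G.filter fun g => firstCol (mat g).val = v).card ≤ σ)
    {Φ : ZMod p × ZMod p → ℝ} {K : ℕ} (hK : 0 < K) {t M R : ℝ} (ht : 0 < t)
    (hM : ∑ z, Φ z ^ (2 * K) ≤ M) (hR : 0 ≤ R)
    (hRM : (G.card : ℝ) ^ 3 * (3 * σ) * M ≤ R ^ 2) :
    ∑ q ∈ (G ×ˢ G).filter (fun q => adjLowerLeft (mat q.1).val (mat q.2).val ≠ 0),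
      |Φ (fixedPointShifts D (mat q.1).val (mat q.2).val)| ≤
        (G.card : ℝ) ^ 2 * t + R / t ^ (K - 1) := by
  have hcard : (((G ×ˢ G).filter fun q =>
      adjLowerLeft (mat q.1).val (mat q.2).val ≠ 0).card : ℝ) ≤ (G.card : ℝ) ^ 2 := by
    rw [pow_two]
    exact_mod_cast (Finset.card_filter_le _ _).trans_eq (Finset.card_product G G)
  have hpow := sum_abs_pow_fixedPointShifts_le hp hdet hσ hM hR hRM
  refine (Finset.sum_le_sum fun q _ => abs_le_add_abs_pow_div _ ht hK).trans ?_
  rw [Finset.sum_add_distrib, Finset.sum_const, nsmul_eq_mul, ← Finset.sum_div]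
  gcongr

theorem sum_ncard_fixedBy_mul_digitGL_le (hp : p ≠ 2) (hdet : ∀ g ∈ G, (mat g).val.det = D)
    (hσ : ∀ v, (G.filter fun g => firstCol (mat g).val = v).card ≤ σ) {δ : I → ZMod p}
    {K : ℕ} (hK : 0 < K) {t M R : ℝ} (ht : 0 < t) (hR : 0 ≤ R)
    (hM : ∑ z, quadCorrelation (fun i : I × I => δ i.1 - δ i.2) z ^ (2 * K) ≤ M)
    (hRM : (G.card : ℝ) ^ 3 * (3 * σ) * M ≤ R ^ 2) :
    ∑ a ∈ G ×ˢ (Finset.univ : Finset I), ∑ b ∈ G ×ˢ (Finset.univ : Finset I),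
      (((fixedBy (OnePoint (ZMod p))
        ((mat b.1 * digitGL (δ b.2))⁻¹ * (mat a.1 * digitGL (δ a.2)))).ncard : ℝ) - 1) ≤
    (G.card : ℝ) ^ 2 * t + R / t ^ (K - 1) + (Fintype.card I : ℝ) ^ 2 * G.card * (3 * p * σ) := by
  have hlow : (((G ×ˢ G).filter fun q => adjLowerLeft (mat q.1).val (mat q.2).val = 0).card : ℝ) ≤
      G.card * (p * σ) := by
    have hle := card_filter_adjLowerLeft_eq_zero_le (mat := fun g => (mat g).val)
      (fun g _ => (mat g).det_ne_zero) hσ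
    rw [ZMod.card] at hle
    exact_mod_cast hle
  have hcol : (((G ×ˢ G).filter fun q => firstCol (mat q.2).val = firstCol (mat q.1).val ∨
      firstCol (mat q.2).val = -firstCol (mat q.1).val).card : ℝ) ≤ G.card * (2 * σ) := by
    exact_mod_cast card_filter_firstCol_eq_or_eq_neg_product_le (mat := fun g => (mat g).val) hσ
  have hsum := sum_abs_fixedPointShifts_le hp hdet hσ hK ht hM hR hRM
  have hpair : ∀ q ∈ G ×ˢ G, _ := fun q hq =>
    sum_ncard_fixedBy_digitGL_sub_one_le hp (hdet _ (Finset.mem_product.mp hq).2)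
      (hdet _ (Finset.mem_product.mp hq).1) δ
  calc _ = ∑ q ∈ G ×ˢ G, ∑ i : I × I, (((fixedBy (OnePoint (ZMod p))
        ((mat q.1 * digitGL (δ i.2))⁻¹ * (mat q.2 * digitGL (δ i.1)))).ncard : ℝ) - 1) := by
        simp only [Finset.sum_product, Fintype.sum_prod_type]
        rw [Finset.sum_comm' (t' := G) (s' := fun _ => G) (by simp)]
        refine Finset.sum_congr rfl fun a _ => ?_
        rw [Finset.sum_comm]
    _ ≤ _ := Finset.sum_le_sum hpair
    _ ≤ ((G.card : ℝ) ^ 2 * t + R / t ^ (K - 1)) +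
        G.card * (p * σ) * (Fintype.card I : ℝ) ^ 2 +
        G.card * (2 * σ) * (p * (Fintype.card I : ℝ) ^ 2) := by
        rw [Finset.sum_add_distrib, Finset.sum_add_distrib, ← Finset.sum_filter,
          ← Finset.sum_filter, ← Finset.sum_filter, Finset.sum_const, Finset.sum_const,
          nsmul_eq_mul, nsmul_eq_mul]
        gcongr
    _ = _ := by ring

end HilbertSchmidt

/-! ### Averages of permutation operators -/

section PermAvg

variable {Γ X ι : Type*} [Group Γ] [MulAction Γ X] [Fintype ι]

variable (X) in
/-- The average of the permutation operators of the group elements `g i`. -/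
noncomputable def permAvg (g : ι → Γ) : Module.End ℝ (X → ℝ) :=
  (Fintype.card ι : ℝ)⁻¹ • ∑ i, permRep Γ X (g i)

variable (X) in
/-- The operator `A* w A`, where `A` averages the `g i` and `w` is a group element. It is
self-adjoint when `w` is an involution. -/
noncomputable def sandwichAvg (g : ι → Γ) (w : Γ) : Module.End ℝ (X → ℝ) :=
  permAvg X g⁻¹ * permRep Γ X w * permAvg X g

lemma permAvg_apply (g : ι → Γ) (f : X → ℝ) (x : X) :
    permAvg X g f x = (Fintype.card ι : ℝ)⁻¹ * ∑ i, f ((g i)⁻¹ • x) := by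
  simp [permAvg, permRep_apply]

lemma permAvg_const [Nonempty ι] (g : ι → Γ) (c : ℝ) :
    permAvg X g (fun _ => c) = fun _ => c := by
  ext x
  simp [permAvg_apply]

lemma permAvg_mul_permAvg_inv_mul_permRep (g : ι → Γ) (w : Γ) :
    permAvg X g * permAvg X g⁻¹ * permRep Γ X w =
      ((Fintype.card ι : ℝ) ^ 2)⁻¹ • ∑ i : ι × ι, permRep Γ X (g i.1 * (g i.2)⁻¹ * w) := by
  rw [permAvg, permAvg, smul_mul_smul_comm, smul_mul_assoc, ← mul_inv, ← pow_two,
    Finset.sum_mul_sum, Fintype.sum_prod_type]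
  simp only [Finset.sum_mul, map_mul, Pi.inv_apply]

lemma sandwichAvg_pow_succ (g : ι → Γ) (w : Γ) (k : ℕ) :
    sandwichAvg X g w ^ (k + 1) = permAvg X g⁻¹ * permRep Γ X w *
      (permAvg X g * permAvg X g⁻¹ * permRep Γ X w) ^ k * permAvg X g := by
  induction k with
  | zero => simp [sandwichAvg]
  | succ k ih =>
    rw [pow_succ, ih, pow_succ, sandwichAvg]
    simp only [mul_assoc]

variable [Fintype X]

lemma permAvg_dotProduct (g : ι → Γ) (f h : X → ℝ) :
    permAvg X g f ⬝ᵥ h = f ⬝ᵥ permAvg X g⁻¹ h := by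
  simp only [permAvg, LinearMap.smul_apply, LinearMap.sum_apply, smul_dotProduct, dotProduct_smul,
    sum_dotProduct, dotProduct_sum, permRep_dotProduct, Pi.inv_apply]

lemma sum_permAvg [Nonempty ι] (g : ι → Γ) (f : X → ℝ) : ∑ x, permAvg X g f x = ∑ x, f x := by
  have h := permAvg_dotProduct g f fun _ => 1
  rw [permAvg_const] at h
  simpa [dotProduct] using h

lemma sqNorm_permAvg_le [Nonempty ι] (g : ι → Γ) (f : X → ℝ) :
    sqNorm (permAvg X g f) ≤ sqNorm f := by
  rw [permAvg, LinearMap.smul_apply, sqNorm_smul]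
  calc _ ≤ ((Fintype.card ι : ℝ)⁻¹) ^ 2 * ((Fintype.card ι : ℝ) ^ 2 * sqNorm f) := by
        gcongr
        exact sqNorm_sum_permRep_le Finset.univ g f
    _ = sqNorm f := by field_simp

lemma sandwichAvg_dotProduct {w : Γ} (hw : w⁻¹ = w) (g : ι → Γ) (f h : X → ℝ) :
    sandwichAvg X g w f ⬝ᵥ h = f ⬝ᵥ sandwichAvg X g w h := by
  simp only [sandwichAvg, Module.End.mul_apply]
  rw [permAvg_dotProduct, permRep_dotProduct, permAvg_dotProduct, inv_inv, hw]

lemma sqNorm_sandwichAvg_pow_succ_le [Nonempty ι] {g : ι → Γ} {w : Γ} {k : ℕ} {D : ℝ} (hD0 : 0 ≤ D)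
    (hD : ∀ f : X → ℝ, ∑ x, f x = 0 →
      sqNorm (((∑ i : ι × ι, permRep Γ X (g i.1 * (g i.2)⁻¹ * w)) ^ k) f) ≤
        D * (Fintype.card ι : ℝ) ^ (4 * k) * sqNorm f) {f : X → ℝ} (hf : ∑ x, f x = 0) :
    sqNorm ((sandwichAvg X g w ^ (k + 1)) f) ≤ D * sqNorm f := by
  rw [sandwichAvg_pow_succ, permAvg_mul_permAvg_inv_mul_permRep, smul_pow]
  simp only [Module.End.mul_apply]
  refine (sqNorm_permAvg_le _ _).trans ?_
  rw [sqNorm_permRep, LinearMap.smul_apply, sqNorm_smul]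
  calc _ ≤ ((((Fintype.card ι : ℝ) ^ 2)⁻¹) ^ k) ^ 2 *
        (D * (Fintype.card ι : ℝ) ^ (4 * k) * sqNorm f) := by
        gcongr
        refine (hD _ ((sum_permAvg g f).trans hf)).trans ?_
        gcongr
        exact sqNorm_permAvg_le g f
    _ = D * sqNorm f := by
        rw [show 4 * k = 2 * k * 2 by ring, pow_mul, pow_mul, inv_pow]
        field_simp

lemma sqNorm_sandwichAvg_pow_le [Nonempty ι] {g : ι → Γ} {w : Γ} (hw : w⁻¹ = w) {k s : ℕ}
    (hk : k + 1 = 2 ^ s) {D : ℝ} (hD0 : 0 ≤ D)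
    (hD : ∀ f : X → ℝ, ∑ x, f x = 0 →
      sqNorm (((∑ i : ι × ι, permRep Γ X (g i.1 * (g i.2)⁻¹ * w)) ^ k) f) ≤
        D * (Fintype.card ι : ℝ) ^ (4 * k) * sqNorm f) {f : X → ℝ} (hf : ∑ x, f x = 0) :
    sqNorm (sandwichAvg X g w f) ^ (k + 1) ≤ D * sqNorm f ^ (k + 1) := by
  rcases (sqNorm_nonneg f).eq_or_lt' with hzero | hpos
  · rw [sqNorm_eq_zero_iff.mp hzero, map_zero, sqNorm_zero, zero_pow k.succ_ne_zero, mul_zero]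
  have hpow := sqNorm_pow_two_pow_mul_le (sandwichAvg_dotProduct hw g) f s
  rw [← hk] at hpow
  refine le_of_mul_le_mul_right ?_ hpos
  calc _ ≤ _ := hpow
    _ ≤ D * sqNorm f * sqNorm f ^ (k + 1) := by
        gcongr
        exact sqNorm_sandwichAvg_pow_succ_le hD0 hD hf
    _ = D * sqNorm f ^ (k + 1) * sqNorm f := by ring

lemma sqNorm_sum_permRep_le_of_card_compl_le [DecidableEq ι] [Nonempty X] (S : Finset ι)
    (g : ι → Γ) {H c : ℝ}
    (hH : ∑ i ∈ S, ∑ j ∈ S, ((fixedBy X ((g j)⁻¹ * g i)).ncard - 1 : ℝ) ≤ H)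
    (hc : (Sᶜ.card : ℝ) ≤ c) {f : X → ℝ} (hf : ∑ x, f x = 0) :
    sqNorm ((∑ i, permRep Γ X (g i)) f) ≤ (2 * H + 2 * c ^ 2) * sqNorm f := by
  have hf0 := sqNorm_nonneg f
  rw [← Finset.sum_add_sum_compl S, LinearMap.add_apply]
  calc _ ≤ _ := sqNorm_add_le _ _
    _ ≤ 2 * (H * sqNorm f) + 2 * (c ^ 2 * sqNorm f) := by
        gcongr
        · exact (sqNorm_sum_permRep_le_sum_fixedBy S g hf).trans (by gcongr)
        · exact (sqNorm_sum_permRep_le Sᶜ g f).trans (by gcongr)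
    _ = (2 * H + 2 * c ^ 2) * sqNorm f := by ring

end PermAvg

/-! ### Words in the digit matrices -/

section Words

variable {p : ℕ} [Fact p.Prime] {I : Type*} [Fintype I] {m : ℕ}

variable (p) in
/-- The product of the digit matrices of a word, whose first column holds its continuants. -/
def wordGL : {m : ℕ} → (Fin m → ℤ) → GL (Fin 2) (ZMod p)
  | 0, _ => 1
  | _ + 1, x => digitGL (x 0 : ZMod p) * wordGL (Fin.tail x)

lemma firstCol_wordGL (x : Fin m → ℤ) : firstCol (wordGL p x).val = continuantsMod p x := by
  induction m with
  | zero => simp [wordGL, firstCol, continuantsMod, continuants]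
  | succ m ih =>
    obtain ⟨hfst, hsnd⟩ := Prod.mk.inj (ih (Fin.tail x))
    rw [wordGL, firstCol, Units.val_mul, digitGL_val]
    simp [Matrix.mul_apply, Fin.sum_univ_two, hfst, hsnd, continuantsMod, continuants]

lemma det_wordGL (x : Fin m → ℤ) : (wordGL p x).val.det = (-1) ^ m := by
  induction m with
  | zero => simp [wordGL]
  | succ m ih =>
    rw [wordGL, Units.val_mul, Matrix.det_mul, ih, digitGL_val, Matrix.det_fin_two_of, pow_succ']
    ring

lemma sum_permRep_digitGL_pow (dig : I → ℤ) :
    (∑ i, permRep _ (OnePoint (ZMod p)) (digitGL (dig i : ZMod p))) ^ m =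
      ∑ w : Fin m → I, permRep _ (OnePoint (ZMod p)) (wordGL p (dig ∘ w)) := by
  induction m with
  | zero => simp [wordGL]
  | succ m ih =>
    rw [pow_succ', ih, ← Equiv.sum_comp (Fin.consEquiv fun _ => I), Fintype.sum_prod_type,
      Finset.sum_mul_sum]
    simp only [← map_mul]
    rfl

lemma sum_permRep_digitGL_pow_succ (dig : I → ℤ) :
    (∑ i, permRep _ (OnePoint (ZMod p)) (digitGL (dig i : ZMod p))) ^ (m + 1) =
      ∑ a : (Fin m → I) × I, permRep _ (OnePoint (ZMod p))
        (wordGL p (dig ∘ a.1) * digitGL (dig a.2 : ZMod p)) := by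
  rw [pow_succ, sum_permRep_digitGL_pow, Finset.sum_mul_sum, Fintype.sum_prod_type]
  simp only [map_mul]

lemma card_filter_tail (P : (Fin m → I) → Prop) [DecidablePred P] :
    (Finset.univ.filter fun w : Fin (m + 1) → I => P (Fin.tail w)).card =
      Fintype.card I * (Finset.univ.filter P).card := by
  rw [← Finset.card_univ, ← Finset.card_product]
  refine Finset.card_equiv (Fin.consEquiv fun _ => I).symm fun w => ?_
  simp [Fin.consEquiv]

lemma add_add_le_mul_sq_mul_sq {n W g P υ θ ρ : ℝ} {K : ℕ} (hK : 0 < K) (hn : 0 < n) (hθ : 0 < θ)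
    (hg0 : 0 ≤ g) (hg : g ≤ W) (hP0 : 0 ≤ P) (hP : P ≤ υ * W) :
    g ^ 2 * (n ^ 2 * θ) + W ^ 2 * (n ^ 2) ^ K * ρ / (n ^ 2 * θ) ^ (K - 1) + n ^ 2 * g * (3 * P) ≤
      (θ + ρ / θ ^ (K - 1) + 3 * υ) * (W * n) ^ 2 := by
  have hmid : W ^ 2 * (n ^ 2) ^ K * ρ / (n ^ 2 * θ) ^ (K - 1) =
      ρ / θ ^ (K - 1) * (W * n) ^ 2 := by
    rw [← mul_pow_sub_one hK.ne' (n ^ 2), mul_pow (n ^ 2) θ]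
    field_simp
  calc _ ≤ W ^ 2 * (n ^ 2 * θ) + ρ / θ ^ (K - 1) * (W * n) ^ 2 + n ^ 2 * W * (3 * (υ * W)) := by
        rw [hmid]
        gcongr
        exact mul_nonneg (sq_nonneg n) (hg0.trans hg)
    _ = (θ + ρ / θ ^ (K - 1) + 3 * υ) * (W * n) ^ 2 := by ring

variable {dig : I → ℤ} {P : (Fin m → I) → Prop} [DecidablePred P] {σ K : ℕ} {β υ ρ θ E : ℝ}

lemma sum_ncard_fixedBy_wordGL_le [Nonempty I] (hp : p ≠ 2)
    (hσ : ∀ v, (Finset.univ.filter fun w : Fin (m + 1) → I =>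
      P (Fin.tail w) ∧ continuantsMod p (dig ∘ w) = v).card ≤ σ)
    (hυ : p * σ ≤ υ * (Fintype.card I : ℝ) ^ (m + 1)) (hK : 0 < K)
    (hM : ∑ z, quadCorrelation (fun i : I × I => (dig i.1 - dig i.2 : ZMod p)) z ^ (2 * K) ≤
      (((Fintype.card I : ℝ) ^ 2) ^ K) ^ 2 * (p * E))
    (hρ0 : 0 ≤ ρ) (hρ : 3 * υ * E ≤ ρ ^ 2) (hθ : 0 < θ) (hE : 0 ≤ E) :
    let G := Finset.univ.filter fun w : Fin (m + 1) → I => P (Fin.tail w)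
    ∑ a ∈ G ×ˢ (Finset.univ : Finset I), ∑ b ∈ G ×ˢ (Finset.univ : Finset I),
      (((fixedBy (OnePoint (ZMod p))
        ((wordGL p (dig ∘ b.1) * digitGL (dig b.2 : ZMod p))⁻¹ *
          (wordGL p (dig ∘ a.1) * digitGL (dig a.2 : ZMod p)))).ncard : ℝ) - 1) ≤
    (θ + ρ / θ ^ (K - 1) + 3 * υ) * ((Fintype.card I : ℝ) ^ (m + 2)) ^ 2 := by
  intro G
  set n : ℝ := (Fintype.card I : ℝ)
  have hn : 0 < n := by simp [n, Fintype.card_pos]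
  have : 0 ≤ υ := nonneg_of_mul_nonneg_left (hυ.trans' (by positivity)) (by positivity)
  have hG : (G.card : ℝ) ≤ n ^ (m + 1) := by
    have hle := Finset.card_le_univ G
    rw [Fintype.card_fun, Fintype.card_fin] at hle
    simpa only [n, Nat.cast_pow] using (Nat.cast_le (α := ℝ)).2 hle
  have hσ' (v) : (G.filter fun w => firstCol (wordGL p (dig ∘ w)).val = v).card ≤ σ := by
    simpa only [G, Finset.filter_filter, firstCol_wordGL] using hσ v
  have hR : (G.card : ℝ) ^ 3 * (3 * σ) * (((n ^ 2) ^ K) ^ 2 * (p * E)) ≤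
      ((n ^ (m + 1)) ^ 2 * (n ^ 2) ^ K * ρ) ^ 2 := by
    calc _ = (G.card : ℝ) ^ 3 * ((n ^ 2) ^ K) ^ 2 * (p * σ) * (3 * E) := by ring
      _ ≤ (n ^ (m + 1)) ^ 3 * ((n ^ 2) ^ K) ^ 2 * (υ * n ^ (m + 1)) * (3 * E) := by gcongr
      _ = (n ^ (m + 1)) ^ 4 * ((n ^ 2) ^ K) ^ 2 * (3 * υ * E) := by ring
      _ ≤ (n ^ (m + 1)) ^ 4 * ((n ^ 2) ^ K) ^ 2 * ρ ^ 2 := by gcongr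
      _ = _ := by ring
  refine (sum_ncard_fixedBy_mul_digitGL_le hp (fun w _ => det_wordGL (dig ∘ w)) hσ'
    (δ := fun i => (dig i : ZMod p)) hK (t := n ^ 2 * θ) (by positivity) (by positivity)
    hM hR).trans ?_
  rw [mul_assoc 3, pow_succ n (m + 1)]
  exact add_add_le_mul_sq_mul_sq hK hn hθ (by positivity) hG (by positivity) hυ

theorem sqNorm_sum_permRep_digitGL_pow_le [Nonempty I] (hp : p ≠ 2)
    (hσ : ∀ v, (Finset.univ.filter fun w : Fin (m + 1) → I =>
      P (Fin.tail w) ∧ continuantsMod p (dig ∘ w) = v).card ≤ σ)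
    (hβ : ((Finset.univ.filter fun w => ¬P w).card : ℝ) ≤ β * (Fintype.card I : ℝ) ^ m)
    (hυ : p * σ ≤ υ * (Fintype.card I : ℝ) ^ (m + 1)) (hK : 0 < K)
    (hM : ∑ z, quadCorrelation (fun i : I × I => (dig i.1 - dig i.2 : ZMod p)) z ^ (2 * K) ≤
      (((Fintype.card I : ℝ) ^ 2) ^ K) ^ 2 * (p * E))
    (hρ0 : 0 ≤ ρ) (hρ : 3 * υ * E ≤ ρ ^ 2) (hθ : 0 < θ) (hE : 0 ≤ E)
    {f : OnePoint (ZMod p) → ℝ} (hf : ∑ x, f x = 0) :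
    sqNorm (((∑ i, permRep _ (OnePoint (ZMod p)) (digitGL (dig i : ZMod p))) ^ (m + 2)) f) ≤
      (2 * (θ + ρ / θ ^ (K - 1) + 3 * υ) + 2 * β ^ 2) *
        ((Fintype.card I : ℝ) ^ (m + 2)) ^ 2 * sqNorm f := by
  classical
  set n : ℝ := (Fintype.card I : ℝ)
  set G := Finset.univ.filter fun w : Fin (m + 1) → I => P (Fin.tail w)
  have hbad : ((G ×ˢ (Finset.univ : Finset I))ᶜ.card : ℝ) ≤ β * n ^ (m + 2) := by
    have hcompl : (G ×ˢ (Finset.univ : Finset I))ᶜ =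
        (Finset.univ.filter fun w : Fin (m + 1) → I => ¬P (Fin.tail w)) ×ˢ Finset.univ := by
      ext a
      simp [G]
    rw [hcompl, Finset.card_product, card_filter_tail fun w => ¬P w, Finset.card_univ]
    push_cast
    calc _ ≤ n * (β * n ^ m) * n := by gcongr
      _ = β * n ^ (m + 2) := by ring
  have hle := sqNorm_sum_permRep_le_of_card_compl_le (G ×ˢ (Finset.univ : Finset I))
    (fun a => wordGL p (dig ∘ a.1) * digitGL (dig a.2 : ZMod p))
    (sum_ncard_fixedBy_wordGL_le hp hσ hυ hK hM hρ0 hρ hθ hE) hbad hf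
  rw [sum_permRep_digitGL_pow_succ]
  exact hle.trans_eq (by ring)

end Words

/-! ### The spectral gap of inversion on intervals -/

section DigitDiff

variable {N : ℕ}

/-- The difference of two elements of `{0, …, N - 1}`. -/
def digitDiff (i : Fin N × Fin N) : ℤ := i.1 - i.2

lemma abs_digitDiff_add_one_le (i : Fin N × Fin N) : |digitDiff i| + 1 ≤ N := by
  rw [digitDiff]
  grind

lemma card_filter_digitDiff_eq_le (d : ℤ) :
    (Finset.univ.filter fun i : Fin N × Fin N => digitDiff i = d).card ≤ N := by
  suffices h : (Finset.univ.filter fun i : Fin N × Fin N => digitDiff i = d).card ≤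
      (Finset.univ : Finset (Fin N)).card by simpa using h
  refine Finset.card_le_card_of_injOn Prod.fst (fun _ _ => Finset.mem_univ _) ?_
  rintro ⟨a, b⟩ hb ⟨a', c⟩ hc (rfl : a = a')
  have hbc := (Finset.mem_filter.mp hb).2.trans (Finset.mem_filter.mp hc).2.symm
  exact Prod.ext rfl (Fin.ext (by simpa [digitDiff] using hbc))

variable {p : ℕ}

lemma card_filter_digitDiff_sub_digitDiff_eq_le (hN : N ≤ p) (y : ZMod p) :
    (Finset.univ.filter fun q : (Fin N × Fin N) × (Fin N × Fin N) =>
      (digitDiff q.1 - digitDiff q.2 : ZMod p) = y).card ≤ N ^ 3 := by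
  have hcard : (Finset.univ : Finset (Fin N × Fin N × Fin N)).card = N ^ 3 := by
    simp [pow_succ, mul_assoc]
  rw [← hcard]
  refine Finset.card_le_card_of_injOn (fun q => (q.1.1, q.2)) (fun _ _ => Finset.mem_univ _) ?_
  rintro ⟨⟨a, b⟩, q⟩ hb ⟨⟨a', c⟩, q'⟩ hc heq
  obtain ⟨rfl, rfl⟩ := Prod.mk.inj heq
  have hbc := (Finset.mem_filter.mp hb).2.trans (Finset.mem_filter.mp hc).2.symm
  have hcast : ((b : ℕ) : ZMod p) = (c : ℕ) := by
    simpa [digitDiff] using hbc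
  rw [ZMod.natCast_eq_natCast_iff', Nat.mod_eq_of_lt (by omega), Nat.mod_eq_of_lt (by omega)]
    at hcast
  rw [Fin.ext hcast]

variable [Fact p.Prime] {K : ℕ}

lemma sum_quadCorrelation_digitDiff_pow_le (hN0 : 0 < N) (hN : N ≤ p) (hK : 0 < K)
    (hbig : 200 * K ≤ p.sqrt) :
    ∑ z, quadCorrelation (fun i : (Fin N × Fin N) × (Fin N × Fin N) =>
        (digitDiff i.1 - digitDiff i.2 : ZMod p)) z ^ (2 * K) ≤
      (((Fintype.card (Fin N × Fin N) : ℝ) ^ 2) ^ K) ^ 2 *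
        (p * (p * (4 * K ^ 2 / N : ℝ) ^ K + (80 * K) ^ 2)) := by
  classical
  set S : Finset (ZMod p) := (Finset.Ioo (-(2 * N : ℤ)) (2 * N)).image fun d : ℤ => (d : ZMod p)
  have hS : ((S.card : ℕ) : ℝ) ≤ 4 * N := by
    have : S.card ≤ 4 * N := Finset.card_image_le.trans (by rw [Int.card_Ioo]; omega)
    exact_mod_cast this
  have hmem (i : (Fin N × Fin N) × (Fin N × Fin N)) :
      (digitDiff i.1 - digitDiff i.2 : ZMod p) ∈ S := by
    have h₁ := abs_digitDiff_add_one_le i.1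
    have h₂ := abs_digitDiff_add_one_le i.2
    refine Finset.mem_image.mpr ⟨digitDiff i.1 - digitDiff i.2, Finset.mem_Ioo.mpr ?_, by simp⟩
    grind
  have hmoment := moment_correlation_le hmem (card_filter_digitDiff_sub_digitDiff_eq_le hN) hK hbig
  simp only [quadCorrelation]
  rw [Fintype.sum_prod_type]
  calc _ ≤ _ := hmoment
    _ ≤ (p : ℝ) ^ 2 * ((4 * N : ℝ) ^ K * K ^ (2 * K) * ((N ^ 3 : ℕ) : ℝ) ^ (2 * K)) +
        (Fintype.card ((Fin N × Fin N) × (Fin N × Fin N)) : ℝ) ^ (2 * K) * ((80 * K) ^ 2 * p) := by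
        gcongr
    _ = _ := by
        simp only [Fintype.card_prod, Fintype.card_fin, Nat.cast_mul, Nat.cast_pow, pow_mul,
          mul_pow, div_pow]
        field_simp
        ring

end DigitDiff

section InversionAvg

variable {p : ℕ} [Fact p.Prime] {N : ℕ}

variable (p N) in
/-- The operator on functions on the projective line over `ZMod p` that averages over the
translations by `0, …, N - 1`, inverts, and averages over the opposite translations. -/
noncomputable def inversionAvg : Module.End ℝ (OnePoint (ZMod p) → ℝ) :=
  sandwichAvg (OnePoint (ZMod p)) (fun i : Fin N => upperRightHom ((i : ℕ) : ZMod p)) swapGL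

lemma upperRightHom_mul_inv_mul_swapGL (i : Fin N × Fin N) :
    upperRightHom ((i.1 : ℕ) : ZMod p) * (upperRightHom ((i.2 : ℕ) : ZMod p))⁻¹ * swapGL =
      digitGL (digitDiff i : ZMod p) := by
  rw [digitGL, digitDiff, ← AddChar.map_neg_eq_inv, ← AddChar.map_add_eq_mul]
  push_cast
  rw [sub_eq_add_neg]

open Classical in
theorem sqNorm_inversionAvg_pow_le {m s s₀ B K : ℕ} {β υ ρ θ : ℝ} (hp : p ≠ 2) (hm : m + 3 = 2 ^ s)
    (hN : 0 < N) (hNm : 2 * N ^ m < p) (hNp : N ≤ p) (hs₀ : 4 ≤ s₀) (hK : 0 < K)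
    (hbig : 200 * K ≤ p.sqrt)
    (hβ : ((Finset.univ.filter fun w : Fin m → Fin N × Fin N =>
      ¬IsGoodWord p s₀ B (digitDiff ∘ w)).card : ℝ) ≤ β * ((N : ℝ) ^ 2) ^ m)
    (hυ : (p : ℝ) * (N ^ (m + 1) * (2 * N / (B + 1) + 1) : ℕ) ≤ υ * ((N : ℝ) ^ 2) ^ (m + 1))
    (hρ0 : 0 ≤ ρ) (hρ : 3 * υ * (p * (4 * K ^ 2 / N : ℝ) ^ K + (80 * K) ^ 2) ≤ ρ ^ 2) (hθ : 0 < θ)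
    {f : OnePoint (ZMod p) → ℝ} (hf : ∑ x, f x = 0) :
    sqNorm (inversionAvg p N f) ^ (m + 3) ≤
      (2 * (θ + ρ / θ ^ (K - 1) + 3 * υ) + 2 * β ^ 2) * sqNorm f ^ (m + 3) := by
  have : NeZero N := ⟨hN.ne'⟩
  have hcard : (Fintype.card (Fin N × Fin N) : ℝ) = (N : ℝ) ^ 2 := by simp [pow_two]
  have hυ0 : 0 ≤ υ := nonneg_of_mul_nonneg_left (hυ.trans' (by positivity)) (by positivity)
  refine sqNorm_sandwichAvg_pow_le swapGL_inv hm (by positivity) (fun f hf => ?_) hf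
  simp only [upperRightHom_mul_inv_mul_swapGL]
  refine (sqNorm_sum_permRep_digitGL_pow_le (K := K)
    (P := fun w => IsGoodWord p s₀ B (digitDiff ∘ w)) hp ?_ (hcard ▸ hβ) (hcard ▸ hυ) hK
    (sum_quadCorrelation_digitDiff_pow_le hN hNp hK hbig) hρ0 hρ hθ (by positivity) hf).trans_eq ?_
  · intro v
    exact card_filter_isGoodWord_continuantsMod_le card_filter_digitDiff_eq_le
      abs_digitDiff_add_one_le hNm hs₀ v
  · rw [hcard, Fintype.card_fin]
    ring

end InversionAvg

/-! ### The size of the spectral gap -/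

section Parameters

variable {p N m u : ℕ}

lemma natCast_four_mul_div_sub_one_add_one_le {v : ℕ} (hv : 2 ≤ v) (hN : v ≤ N) :
    ((4 * N / (v - 1) + 1 : ℕ) : ℝ) ≤ 9 * N / v := by
  have hvR : (2 : ℝ) ≤ v := by exact_mod_cast hv
  have hNR : (v : ℝ) ≤ N := by exact_mod_cast hN
  have hdiv : ((4 * N / (v - 1) : ℕ) : ℝ) ≤ 8 * N / v := by
    refine Nat.cast_div_le.trans ?_
    push_cast [Nat.cast_sub (by omega : 1 ≤ v)]
    rw [div_le_div_iff₀ (by linarith) (by linarith)]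
    nlinarith
  have hone : (1 : ℝ) ≤ N / v := (one_le_div (by linarith)).mpr hNR
  calc ((4 * N / (v - 1) + 1 : ℕ) : ℝ) ≤ 8 * N / v + N / v := by
        rw [Nat.cast_add, Nat.cast_one]
        exact add_le_add hdiv hone
    _ = 9 * N / v := by ring

lemma badWordBound_le (hm : 2 * (m + 1) ≤ u) (hN : u ^ 8 ≤ N) :
    ((m + 1) * (N * (2 * u ^ 4) * (N ^ 2) ^ m) +
      N * (u * (2 * u + 1) * (4 * N / (u ^ 4 - 1) + 1)) * (N ^ 2) ^ m : ℕ) ≤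
        28 / (u : ℝ) ^ 2 * ((N : ℝ) ^ 2) ^ (m + 1) := by
  have hu : 1 < u := by omega
  have hu2 : 2 ≤ u ^ 4 := hu.trans_le (Nat.le_self_pow (by norm_num) u)
  have hu4 : u ^ 4 ≤ N := (Nat.pow_le_pow_right (by omega) (by norm_num)).trans hN
  have hu1 : (1 : ℝ) ≤ u := by exact_mod_cast hu.le
  have hmR : 2 * ((m : ℝ) + 1) ≤ u := by exact_mod_cast hm
  have hNR : (u : ℝ) ^ 8 ≤ N := by exact_mod_cast hN
  have hshort : ((m : ℝ) + 1) * (2 * (u : ℝ) ^ 4) ≤ N / u ^ 2 := by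
    rw [le_div_iff₀ (by positivity)]
    calc ((m : ℝ) + 1) * (2 * (u : ℝ) ^ 4) * u ^ 2 = 2 * ((m : ℝ) + 1) * (u : ℝ) ^ 6 := by ring
      _ ≤ u * (u : ℝ) ^ 6 := by gcongr
      _ = (u : ℝ) ^ 7 := by ring
      _ ≤ (u : ℝ) ^ 8 := pow_le_pow_right₀ hu1 (by norm_num)
      _ ≤ N := hNR
  have hlong : (u : ℝ) * (2 * u + 1) * ((4 * N / (u ^ 4 - 1) + 1 : ℕ) : ℝ) ≤ 27 * N / u ^ 2 := by
    calc _ ≤ (u : ℝ) * (2 * u + u) * (9 * N / (u ^ 4 : ℕ)) := by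
          gcongr
          exact natCast_four_mul_div_sub_one_add_one_le hu2 hu4
      _ = 27 * N / u ^ 2 := by
          push_cast
          field_simp
          ring
  calc _ = (((m : ℝ) + 1) * (2 * (u : ℝ) ^ 4) +
        u * (2 * u + 1) * ((4 * N / (u ^ 4 - 1) + 1 : ℕ) : ℝ)) * (N * ((N : ℝ) ^ 2) ^ m) := by
        push_cast
        ring
    _ ≤ (N / u ^ 2 + 27 * N / u ^ 2) * (N * ((N : ℝ) ^ 2) ^ m) := by gcongr
    _ = 28 / (u : ℝ) ^ 2 * ((N : ℝ) ^ 2) ^ (m + 1) := by ring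

lemma mul_continuantMultiplicity_le (hu : 0 < u) (hN : u ≤ N) (hp : p ≤ 4 * N ^ m) :
    (p : ℝ) * (N ^ (m + 1) * (2 * N / (u + 1) + 1) : ℕ) ≤ 12 / u * ((N : ℝ) ^ 2) ^ (m + 1) := by
  have hpR : (p : ℝ) ≤ 4 * (N : ℝ) ^ m := by exact_mod_cast hp
  have hone : (1 : ℝ) ≤ N / u := (one_le_div (by positivity)).mpr (by exact_mod_cast hN)
  have hdiv : ((2 * N / (u + 1) : ℕ) : ℝ) ≤ 2 * N / u := by
    refine Nat.cast_div_le.trans ?_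
    push_cast
    gcongr
    linarith
  push_cast
  calc (p : ℝ) * (N ^ (m + 1) * (((2 * N / (u + 1) : ℕ) : ℝ) + 1))
      ≤ 4 * (N : ℝ) ^ m * (N ^ (m + 1) * (2 * N / u + N / u)) := by gcongr
    _ = 12 / u * ((N : ℝ) ^ 2) ^ (m + 1) := by ring

lemma mul_div_pow_two_mul_le_one {c : ℝ} (hm : m ≠ 0) (hN0 : 0 < N) (hc : 4 * c ^ 2 ≤ N)
    (hp : p ≤ 4 * N ^ m) : p * (c / N) ^ (2 * m) ≤ 1 := by
  have hpR : (p : ℝ) ≤ 4 * (N : ℝ) ^ m := by exact_mod_cast hp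
  have hbase : 4 * c ^ 2 / N ≤ 1 := div_le_one_of_le₀ hc (by positivity)
  calc p * (c / N) ^ (2 * m) ≤ 4 * (N : ℝ) ^ m * (c / N) ^ (2 * m) := by
        gcongr
        exact (even_two_mul m).pow_nonneg _
    _ = 4 * (c ^ 2 / N) ^ m := by
        rw [pow_mul, mul_assoc, ← mul_pow]
        congr 2
        field_simp
    _ ≤ 4 ^ m * (c ^ 2 / N) ^ m := by
        gcongr
        exact le_self_pow₀ (by norm_num) hm
    _ = (4 * c ^ 2 / N) ^ m := by rw [← mul_pow, mul_div_assoc]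
    _ ≤ 1 := pow_le_one₀ (by positivity) hbase

lemma three_mul_momentBound_le (hm : m ≠ 0) (hN0 : 0 < N) (hN : 4 * (16 * m ^ 2) ^ 2 ≤ N)
    (hp : p ≤ 4 * N ^ m) :
    3 * (12 / u : ℝ) * (p * (4 * (2 * m : ℕ) ^ 2 / N : ℝ) ^ (2 * m) + (80 * (2 * m : ℕ)) ^ 2) ≤
      (280 * m * √(12 / u)) ^ 2 := by
  have hm1 : (1 : ℝ) ≤ m := by exact_mod_cast Nat.one_le_iff_ne_zero.mpr hm
  have hone : p * (4 * (2 * m : ℕ) ^ 2 / N : ℝ) ^ (2 * m) ≤ 1 := by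
    refine mul_div_pow_two_mul_le_one hm hN0 ?_ hp
    have : (4 : ℝ) * (16 * m ^ 2) ^ 2 ≤ N := by exact_mod_cast hN
    refine this.trans_eq' ?_
    push_cast
    ring
  rw [mul_pow _ (√_), Real.sq_sqrt (by positivity)]
  calc _ ≤ 3 * (12 / u : ℝ) * (m ^ 2 + (80 * (2 * m : ℕ)) ^ 2) := by
        gcongr
        exact hone.trans (one_le_pow₀ hm1)
    _ = 76803 * (12 / u : ℝ) * m ^ 2 := by
        push_cast
        ring
    _ ≤ 78400 * (12 / u : ℝ) * m ^ 2 := by gcongr; norm_num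
    _ = (280 * m) ^ 2 * (12 / u) := by ring

lemma spectralBound_le {W : ℝ} (hm : m ≠ 0) (hW : 1 ≤ W)
    (hu : 940800 * (m : ℝ) ^ 2 * (8 * W) ^ (4 * m) ≤ u) :
    2 * (1 / (8 * W) + 280 * m * √(12 / u) / (1 / (8 * W)) ^ (2 * m - 1) + 3 * (12 / u)) +
      2 * (28 / (u : ℝ) ^ 2) ^ 2 ≤ 1 / W := by
  set θ : ℝ := 1 / (8 * W) with hθ
  have : 0 < θ := by positivity
  have hm1 : (1 : ℝ) ≤ m := by exact_mod_cast Nat.one_le_iff_ne_zero.mpr hm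
  have huW : 940800 * (8 * W) ≤ u := by
    refine hu.trans' ?_
    gcongr
    · exact le_mul_of_one_le_right (by norm_num) (one_le_pow₀ hm1)
    · exact le_self_pow₀ (by linarith) (by omega)
  have hu1 : (1 : ℝ) ≤ u := by linarith
  have hρ : 280 * m * √(12 / u) / θ ^ (2 * m - 1) ≤ θ := by
    rw [div_le_iff₀ (by positivity), mul_pow_sub_one (by omega)]
    refine le_of_sq_le_sq ?_ (by positivity)
    rw [mul_pow, Real.sq_sqrt (by positivity), hθ, ← pow_mul, div_pow, one_pow, mul_div_assoc',
      div_le_div_iff₀ (by positivity) (by positivity), one_mul]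
    exact hu.trans_eq' (by ring)
  have hυ : 3 * (12 / u) ≤ θ := by
    rw [hθ, mul_div_assoc', div_le_div_iff₀ (by positivity) (by positivity)]
    linarith
  have hβ : (28 / (u : ℝ) ^ 2) ^ 2 ≤ θ := by
    rw [hθ, div_pow, div_le_div_iff₀ (by positivity) (by positivity)]
    have : (u : ℝ) ≤ (u ^ 2) ^ 2 := by
      rw [← pow_mul]
      exact le_self_pow₀ hu1 (by norm_num)
    linarith
  calc _ ≤ 2 * (θ + θ + θ) + 2 * θ := by gcongr
    _ = 1 / W := by
        rw [hθ]
        field_simp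
        norm_num

lemma mul_sq_mul_pow_le_pow {n : ℕ} (hn : 8 ≤ n) :
    940800 * n ^ 2 * (8 * n ^ (2 * n)) ^ (4 * n) ≤ n ^ (16 * n ^ 2) := by
  have hbase : 8 * n ^ (2 * n) ≤ n ^ (3 * n) := by
    calc 8 * n ^ (2 * n) ≤ n * n ^ (2 * n) := by gcongr
      _ = n ^ (2 * n + 1) := by ring
      _ ≤ n ^ (3 * n) := Nat.pow_le_pow_right (by omega) (by omega)
  have hconst : 940800 ≤ n ^ 7 := (Nat.pow_le_pow_left hn 7).trans' (by norm_num)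
  calc 940800 * n ^ 2 * (8 * n ^ (2 * n)) ^ (4 * n)
      ≤ n ^ 7 * n ^ 2 * (n ^ (3 * n)) ^ (4 * n) := by gcongr
    _ = n ^ (9 + 3 * n * (4 * n)) := by rw [← pow_mul]; ring
    _ ≤ n ^ (16 * n ^ 2) := Nat.pow_le_pow_right (by omega) (by nlinarith)

open Classical in
lemma card_filter_not_isGoodWord_digitDiff_le (hm0 : m ≠ 0) (hm : 2 * m ≤ u)
    (hu : 4 ≤ u ^ 4) (hN : u ^ 8 ≤ N) (hNp : 2 * N ^ m < p) :
    ((Finset.univ.filter fun w : Fin m → Fin N × Fin N =>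
      ¬IsGoodWord p (u ^ 4) u (digitDiff ∘ w)).card : ℝ) ≤
        28 / (u : ℝ) ^ 2 * ((N : ℝ) ^ 2) ^ m := by
  obtain ⟨m, rfl⟩ := Nat.exists_eq_succ_of_ne_zero hm0
  refine le_trans (Nat.cast_le.mpr ?_) (badWordBound_le hm hN)
  have hcard := card_filter_not_isGoodWord_le (B := u) card_filter_digitDiff_eq_le
    abs_digitDiff_add_one_le hNp hu
  rwa [Fintype.card_prod, Fintype.card_fin, ← pow_two] at hcard

theorem sqNorm_inversionAvg_le [Fact p.Prime] {n s : ℕ} (hn : 8 ≤ n) (hs : n = 2 ^ s)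
    (hm : m + 3 = n) (hN : (n ^ (16 * n ^ 2)) ^ 8 ≤ N) (hNp : 2 * N ^ m < p)
    (hpN : p ≤ 4 * N ^ m) {f : OnePoint (ZMod p) → ℝ} (hf : ∑ x, f x = 0) :
    sqNorm (inversionAvg p N f) ≤ 1 / (n : ℝ) ^ 2 * sqNorm f := by
  classical
  have hu := mul_sq_mul_pow_le_pow hn
  have hW : 1 ≤ 8 * n ^ (2 * n) := Nat.mul_pos (by norm_num) (Nat.pow_pos (by omega))
  set u := n ^ (16 * n ^ 2)
  have hmu : 940800 * m ^ 2 * (8 * n ^ (2 * n)) ^ (4 * m) ≤ u := 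
    hu.trans' (by gcongr <;> omega)
  have hnu : 940800 * n ^ 2 ≤ u := hu.trans' (Nat.le_mul_of_pos_right _ (by positivity))
  have hmu' : 32 * m ^ 2 ≤ u := by nlinarith
  have hu8 : u ^ 2 ≤ u ^ 8 := Nat.pow_le_pow_right (by positivity) (by norm_num)
  have hu0 : 200 * (2 * m) ≤ u := by nlinarith
  have huN : u ≤ N := (Nat.le_self_pow (by norm_num) u).trans hN
  have hNm : N ^ 2 ≤ N ^ m := Nat.pow_le_pow_right (by omega) (by omega)
  have hu4 : 4 ≤ u ^ 4 := (Nat.le_self_pow (by norm_num) u).trans' (by omega)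
  have hsqrt : 200 * (2 * m) ≤ p.sqrt := by
    rw [Nat.le_sqrt']
    have : (200 * (2 * m)) ^ 2 ≤ N ^ 2 := Nat.pow_le_pow_left (hu0.trans huN) 2
    omega
  have hρ := three_mul_momentBound_le (p := p) (N := N) (m := m) (u := u) (by omega) (by omega)
    (by linarith [Nat.pow_le_pow_left hmu' 2, hu8]) hpN
  have hpow := sqNorm_inversionAvg_pow_le (by nlinarith) (hm.trans hs) (by omega) hNp (by nlinarith)
    hu4 (by omega) hsqrt
    (card_filter_not_isGoodWord_digitDiff_le (by omega) (by omega) hu4 hN hNp)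
    (mul_continuantMultiplicity_le (by omega) huN hpN) (by positivity) hρ
    (θ := 1 / (8 * (n : ℝ) ^ (2 * n))) (by positivity) hf
  refine le_of_pow_le_pow_left₀ (n := m + 3) (by omega)
    (mul_nonneg (by positivity) (sqNorm_nonneg f)) (hpow.trans ?_)
  rw [mul_pow, hm, div_pow 1 ((n : ℝ) ^ 2), one_pow, ← pow_mul]
  refine mul_le_mul_of_nonneg_right ?_ (pow_nonneg (sqNorm_nonneg f) _)
  exact spectralBound_le (by omega) (one_le_pow₀ (by exact_mod_cast (by omega : 1 ≤ n)))
    (by exact_mod_cast hmu)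

end Parameters

/-! ### Expansion on the projective line -/

section Mixing

variable {Γ X ι : Type*} [Group Γ] [MulAction Γ X] [Fintype ι]

lemma sandwichAvg_const [Nonempty ι] (g : ι → Γ) (w : Γ) (c : ℝ) :
    sandwichAvg X g w (fun _ => c) = fun _ => c := by
  rw [sandwichAvg, Module.End.mul_apply, permAvg_const, Module.End.mul_apply]
  exact permAvg_const _ c

lemma permAvg_mem_Icc [Nonempty ι] (g : ι → Γ) {F : X → ℝ} (hF : ∀ x, F x ∈ Set.Icc 0 1) (x : X) :
    permAvg X g F x ∈ Set.Icc 0 1 := by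
  rw [permAvg_apply]
  refine ⟨mul_nonneg (by positivity) (Finset.sum_nonneg fun i _ => (hF _).1), ?_⟩
  rw [inv_mul_le_one₀ (by positivity)]
  exact (Finset.sum_le_sum fun i _ => (hF _).2).trans_eq (by simp)

lemma exists_ne_zero_of_permAvg_ne_zero {g : ι → Γ} {F : X → ℝ} {x : X}
    (hx : permAvg X g F x ≠ 0) : ∃ i, F ((g i)⁻¹ • x) ≠ 0 := by
  rw [permAvg_apply] at hx
  obtain ⟨i, -, hi⟩ := Finset.exists_ne_zero_of_sum_ne_zero (right_ne_zero_of_mul hx)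
  exact ⟨i, hi⟩

variable [Fintype X]

lemma sq_sum_div_card_sub_le_dotProduct {T : Module.End ℝ (X → ℝ)}
    (hT : ∀ f h, T f ⬝ᵥ h = f ⬝ᵥ T h) (hconst : ∀ c : ℝ, T (fun _ => c) = fun _ => c) {η : ℝ}
    (hη : 0 ≤ η) (hgap : ∀ f, ∑ x, f x = 0 → sqNorm (T f) ≤ η ^ 2 * sqNorm f) (F : X → ℝ) :
    (∑ x, F x) ^ 2 / Fintype.card X - η * sqNorm F ≤ F ⬝ᵥ T F := by
  rcases isEmpty_or_nonempty X with hX | hX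
  · simp [sqNorm]
  set c : ℝ := (∑ x, F x) / Fintype.card X with hc
  set e : X → ℝ := fun _ => c with he
  set f := F - e with hf
  have hcard : (Fintype.card X : ℝ) * c = ∑ x, F x := by rw [hc]; field_simp
  have hsum : ∑ x, f x = 0 := by simp [hf, he, hcard]
  have hfe : f ⬝ᵥ e = 0 := by rw [dotProduct, ← Finset.sum_mul, hsum, zero_mul]
  have hee : e ⬝ᵥ e = (∑ x, F x) ^ 2 / Fintype.card X := by
    rw [dotProduct, he, Finset.sum_const, Finset.card_univ, nsmul_eq_mul, ← mul_assoc, hcard, hc]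
    ring
  have hF : F = f + e := (sub_add_cancel F e).symm
  have hnorm : sqNorm F = sqNorm f + e ⬝ᵥ e := by
    rw [← dotProduct_self_eq_sqNorm, ← dotProduct_self_eq_sqNorm, hF, add_dotProduct,
      dotProduct_add, dotProduct_add, dotProduct_comm e f, hfe]
    ring
  have hTe : T e = e := hconst c
  have hform : F ⬝ᵥ T F = f ⬝ᵥ T f + e ⬝ᵥ e := by
    rw [hF, map_add, hTe, add_dotProduct, dotProduct_add, dotProduct_add, ← hT e, hTe,
      dotProduct_comm e f, hfe]
    ring
  have hCS : |f ⬝ᵥ T f| ≤ η * sqNorm f := by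
    refine abs_le_of_sq_le_sq ?_ (mul_nonneg hη (sqNorm_nonneg f))
    calc (f ⬝ᵥ T f) ^ 2 ≤ sqNorm f * sqNorm (T f) := dotProduct_sq_le _ _
      _ ≤ sqNorm f * (η ^ 2 * sqNorm f) :=
        mul_le_mul_of_nonneg_left (hgap f hsum) (sqNorm_nonneg f)
      _ = (η * sqNorm f) ^ 2 := by ring
  have hle : sqNorm f ≤ sqNorm F := by
    rw [hnorm, dotProduct_self_eq_sqNorm]
    exact le_add_of_nonneg_right (sqNorm_nonneg e)
  rw [hform, hee]
  linarith [(abs_le.mp hCS).1, mul_le_mul_of_nonneg_left hle hη]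

lemma card_sq_div_card_sub_le_card [Nonempty ι] {g : ι → Γ} {w : Γ} (hw : w⁻¹ = w) {η : ℝ}
    (hη : 0 ≤ η)
    (hgap : ∀ f : X → ℝ, ∑ x, f x = 0 → sqNorm (sandwichAvg X g w f) ≤ η ^ 2 * sqNorm f)
    {A S : Finset X} (hS : ∀ x i j, (g i)⁻¹ • x ∈ A → (g j)⁻¹ • w • x ∈ A → x ∈ S) :
    (A.card : ℝ) ^ 2 / Fintype.card X - η * A.card ≤ S.card := by
  classical
  set F : X → ℝ := fun x => if x ∈ A then 1 else 0 with hF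
  have hF01 : ∀ x, F x ∈ Set.Icc (0 : ℝ) 1 := fun x => by simp only [hF]; split_ifs <;> simp
  have hsum : ∑ x, F x = A.card := by simp [hF]
  have hnorm : sqNorm F = A.card := by simp [hF, sqNorm]
  have hmem : ∀ x, permAvg X g F x ≠ 0 → ∃ i, (g i)⁻¹ • x ∈ A := fun x hx =>
    (exists_ne_zero_of_permAvg_ne_zero hx).imp fun i hi => by simpa [hF] using hi
  have hmix := sq_sum_div_card_sub_le_dotProduct (sandwichAvg_dotProduct hw g)
    (sandwichAvg_const g w) hη hgap F
  rw [hsum, hnorm] at hmix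
  refine hmix.trans ?_
  rw [sandwichAvg, mul_assoc, Module.End.mul_apply, ← permAvg_dotProduct, Finset.cast_card,
    dotProduct, ← Finset.sum_subset S.subset_univ]
  · refine Finset.sum_le_sum fun x _ => ?_
    have hx := permAvg_mem_Icc g hF01 x
    have hwx := permAvg_mem_Icc g hF01 (w • x)
    rw [Module.End.mul_apply, permRep_apply, hw]
    exact mul_le_one₀ hx.2 hwx.1 hwx.2
  · intro x _ hxS
    by_contra hx
    rw [Module.End.mul_apply, permRep_apply, hw] at hx
    obtain ⟨i, hi⟩ := hmem x (left_ne_zero_of_mul hx)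
    obtain ⟨j, hj⟩ := hmem (w • x) (right_ne_zero_of_mul hx)
    exact hxS (hS x i j hi hj)

end Mixing

section ProjectiveLine

variable {K : Type*}

/-- The inclusion of the affine line into the projective line. -/
def affineEmbedding : K ↪ OnePoint K := ⟨(↑), OnePoint.coe_injective⟩

variable [Field K] [DecidableEq K] {A : Finset K}

lemma upperRightHom_smul_coe (d x : K) :
    upperRightHom d • (x : OnePoint K) = ((x + d : K) : OnePoint K) := by
  simp [OnePoint.smul_some_eq_ite]

lemma upperRightHom_smul_infty (d : K) :
    upperRightHom d • (OnePoint.infty : OnePoint K) = OnePoint.infty := by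
  simp [OnePoint.smul_infty_eq_self_iff]

lemma swapGL_smul_coe {x : K} (hx : x ≠ 0) :
    (swapGL : GL (Fin 2) K) • (x : OnePoint K) = ((x⁻¹ : K) : OnePoint K) := by
  simp [OnePoint.smul_some_eq_ite, swapGL, hx]

lemma swapGL_smul_zero : (swapGL : GL (Fin 2) K) • ((0 : K) : OnePoint K) = OnePoint.infty := by
  simp [OnePoint.smul_some_eq_ite, swapGL]

lemma upperRightHom_inv_smul_coe_mem {d x : K} :
    (upperRightHom d)⁻¹ • (x : OnePoint K) ∈ A.map affineEmbedding ↔ x - d ∈ A := by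
  rw [← AddChar.map_neg_eq_inv, upperRightHom_smul_coe, ← sub_eq_add_neg]
  exact Finset.mem_map' _

lemma upperRightHom_inv_smul_infty_notMem (d : K) :
    (upperRightHom d)⁻¹ • (OnePoint.infty : OnePoint K) ∉ A.map affineEmbedding := by
  rw [← AddChar.map_neg_eq_inv, upperRightHom_smul_infty, Finset.mem_map]
  rintro ⟨a, -, ha⟩
  exact OnePoint.coe_ne_infty a ha

end ProjectiveLine

section Expansion

variable {p : ℕ} [Fact p.Prime] {N : ℕ}

theorem card_sq_div_le_card (hp : 3 ≤ p) (hN : 0 < N) {A S : Finset (ZMod p)}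
    (hgap : ∀ f : OnePoint (ZMod p) → ℝ, ∑ x, f x = 0 →
      sqNorm (inversionAvg p N f) ≤ (A.card / (4 * p) : ℝ) ^ 2 * sqNorm f)
    (hS : ∀ x : ZMod p, x ≠ 0 → ∀ i < N, ∀ j < N, x - (i : ℕ) ∈ A → x⁻¹ - (j : ℕ) ∈ A →
      x ∈ S) : (A.card : ℝ) ^ 2 / (2 * p) ≤ S.card := by
  have : NeZero N := ⟨hN.ne'⟩
  have hpR : (3 : ℝ) ≤ p := by exact_mod_cast hp
  have hcard : (Fintype.card (OnePoint (ZMod p)) : ℝ) = p + 1 := by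
    rw [show Fintype.card (OnePoint (ZMod p)) = p + 1 from
      (Fintype.card_option).trans (by rw [ZMod.card]), Nat.cast_succ]
  have hmain : (A.card : ℝ) ^ 2 / (2 * p) ≤
      (A.card : ℝ) ^ 2 / (p + 1) - A.card / (4 * p) * A.card := by
    have : 1 / (2 * p : ℝ) + 1 / (4 * p) ≤ 1 / (p + 1) := by
      rw [div_add_div _ _ (by positivity) (by positivity),
        div_le_div_iff₀ (by positivity) (by positivity)]
      nlinarith
    calc (A.card : ℝ) ^ 2 / (2 * p)
        = (A.card : ℝ) ^ 2 * (1 / (2 * p) + 1 / (4 * p)) - A.card / (4 * p) * A.card := by ring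
      _ ≤ (A.card : ℝ) ^ 2 * (1 / (p + 1)) - A.card / (4 * p) * A.card := by gcongr
      _ = _ := by ring
  refine hmain.trans ?_
  have hmix := card_sq_div_card_sub_le_card (A := A.map affineEmbedding)
    (S := S.map affineEmbedding) swapGL_inv (by positivity) hgap fun x i j hi hj => ?_
  · rwa [Finset.card_map, Finset.card_map, hcard] at hmix
  induction x using OnePoint.rec with
  | infty => exact absurd hi (upperRightHom_inv_smul_infty_notMem _)
  | coe x =>
    have hx : x ≠ 0 := by
      rintro rfl
      rw [swapGL_smul_zero] at hj
      exact upperRightHom_inv_smul_infty_notMem _ hj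
    rw [swapGL_smul_coe hx, upperRightHom_inv_smul_coe_mem] at hj
    rw [upperRightHom_inv_smul_coe_mem] at hi
    exact Finset.mem_map_of_mem _ (hS x hx i i.2 j j.2 hi hj)

end Expansion

/-! ### Badly approximable residues and bounded partial quotients -/

section BadlyApproximable

variable {p X M : ℕ} {r : ZMod p}

/-- The residue `r` modulo `p` is badly approximable by fractions of denominator at most `X`:
`x * |y| ≥ p / M` whenever `y ≡ r * x` modulo `p` and `0 < x ≤ X`. -/
def IsBadlyApproximable (X M : ℕ) (r : ZMod p) : Prop :=
  ∀ x : ℕ, 0 < x → x ≤ X → ∀ y : ℤ, (y : ZMod p) = r * x → p ≤ M * x * y.natAbs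

lemma IsBadlyApproximable.neg (h : IsBadlyApproximable X M r) : IsBadlyApproximable X M (-r) := by
  intro x hx hxX y hy
  simpa using h x hx hxX (-y) (by simp [hy])

lemma isCFOf_singleton {c : ℕ} (hc : 2 ≤ c) : IsCFOf (1 / c) [c] := by
  refine ⟨?_, ?_, ?_⟩
  · simp only [List.mem_singleton, forall_eq]
    omega
  · simpa using hc
  · simp [cfVal]

lemma isCFOf_cons {x : ℚ} {c : ℕ} {l : List ℕ} (hc : 1 ≤ c) (hl : l ≠ []) (h : IsCFOf x l) :
    IsCFOf (1 / (c + x)) (c :: l) := by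
  obtain ⟨hpos, hlast, hval⟩ := h
  refine ⟨List.forall_mem_cons.mpr ⟨hc, hpos⟩, fun _ => ?_, ?_⟩
  · rw [List.getLast_cons hl]
    exact hlast hl
  · rw [← hval]
    rfl

/- One Euclidean step replaces `(r, r', q, q', a)` by `(r' % r, r, r' / r * q + q', q, -a)`, so
throughout `q` is the denominator of a convergent, and `a * q ≡ r` is its approximation error. -/
lemma exists_isCFOf_of_mul_add_mul_eq {r : ℕ} :
    ∀ {r' q q' : ℕ} {a : ZMod p}, IsBadlyApproximable (p - 1) M a → 0 < r → r < r' →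
      r.Coprime r' → 0 < q → q * r' + q' * r = p → (r : ZMod p) = a * q → (r' : ZMod p) = -a * q' →
      ∃ l ≠ [], IsCFOf (r / r') l ∧ ∀ c ∈ l, c ≤ M := by
  induction r using Nat.strong_induction_on with
  | _ r ih =>
  intro r' q q' a ha hr hrr hco hq hp hrq hrq'
  have hqp : q < p := by nlinarith
  have happrox : p ≤ M * q * r := ha q hq (by omega) r (by rw [Int.cast_natCast, hrq])
  have hdiv : r * (r' / r) + r' % r = r' := Nat.div_add_mod r' r
  set c := r' / r
  set r'' := r' % r
  have hcM : c ≤ M := by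
    refine Nat.le_of_mul_le_mul_right (c := q * r) ?_ (by positivity)
    calc c * (q * r) = q * (r * c) := by ring
      _ ≤ q * r' := by gcongr; omega
      _ ≤ M * (q * r) := by rw [← mul_assoc]; omega
  have hc : 1 ≤ c := (Nat.one_le_div_iff hr).mpr hrr.le
  rcases eq_or_ne r 1 with rfl | hr1
  · refine ⟨[r'], by simp, ?_, ?_⟩
    · rw [Nat.cast_one]
      exact isCFOf_singleton hrr
    · simpa [c] using hcM
  · have hco' : r''.Coprime r := by rwa [Nat.Coprime, ← Nat.gcd_rec]
    have hr'' : 0 < r'' := Nat.pos_of_ne_zero fun h => hr1 (by simpa [h] using hco')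
    have hcast : (r : ZMod p) * c + r'' = r' := by
      exact_mod_cast congrArg (Nat.cast (R := ZMod p)) hdiv
    obtain ⟨l, hl, hcf, hle⟩ := ih r'' (Nat.mod_lt _ hr) (r' := r) (q := c * q + q') (q' := q)
      ha.neg hr'' (Nat.mod_lt _ hr) hco' (by positivity) (by rw [← hp, ← hdiv]; ring)
      (by push_cast; linear_combination hcast + hrq' - c * hrq) (by rw [neg_neg, hrq])
    refine ⟨c :: l, List.cons_ne_nil _ _, ?_, List.forall_mem_cons.mpr ⟨hcM, hle⟩⟩
    convert isCFOf_cons hc hl hcf using 1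
    rw [← hdiv]
    push_cast
    field_simp

theorem exists_isCFOf_of_isBadlyApproximable {a : ℕ} (ha : 0 < a) (hap : a < p)
    (hco : a.Coprime p) (h : IsBadlyApproximable (p - 1) M (a : ZMod p)) :
    ∃ l, IsCFOf (a / p) l ∧ ∀ c ∈ l, c ≤ M := by
  obtain ⟨l, -, hl⟩ := exists_isCFOf_of_mul_add_mul_eq (q := 1) (q' := 0) h ha hap hco
    one_pos (by simp) (by simp) (by simp)
  exact ⟨l, hl⟩

end BadlyApproximable

section MiddleRange

lemma sum_Ioc_one_div_le_log {X Y : ℕ} (hX : 0 < X) (hXY : X ≤ Y) :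
    ∑ x ∈ Finset.Ioc X Y, (1 : ℝ) / x ≤ Real.log (Y / X) := by
  induction Y, hXY using Nat.le_induction with
  | base =>
    have : (X : ℝ) ≠ 0 := by positivity
    simp [this]
  | succ Y hXY ih =>
    have hY : (0 : ℝ) < Y := by exact_mod_cast hX.trans_le hXY
    have hstep := Real.one_sub_inv_le_log_of_pos (x := ((Y + 1 : ℕ) : ℝ) / Y) (by positivity)
    calc ∑ x ∈ Finset.Ioc X (Y + 1), (1 : ℝ) / x
        = ∑ x ∈ Finset.Ioc X Y, (1 : ℝ) / x + 1 / (Y + 1 : ℕ) :=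
          Finset.sum_Ioc_succ_top (by omega) _
      _ = ∑ x ∈ Finset.Ioc X Y, (1 : ℝ) / x + (1 - (((Y + 1 : ℕ) : ℝ) / Y)⁻¹) := by
          push_cast
          field_simp
          ring
      _ ≤ Real.log (Y / X) + Real.log ((Y + 1 : ℕ) / Y) := add_le_add ih hstep
      _ = Real.log ((Y + 1 : ℕ) / X) := by
          rw [← Real.log_mul (by positivity) (by positivity)]
          congr 1
          field_simp

variable {p : ℕ} [Fact p.Prime] {X M : ℕ}

open Classical in
variable (p) in
/-- The residues modulo `p` with an approximation `y ≡ r * x` for which `x * |y| < p / M` while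
both `x` and `|y|` exceed `X`. -/
noncomputable def midrangeApproximable (X M : ℕ) : Finset (ZMod p) :=
  Finset.univ.filter fun r => ∃ x : ℕ, ∃ y : ℤ,
    X < x ∧ x < p ∧ X < y.natAbs ∧ M * x * y.natAbs < p ∧ (y : ZMod p) = r * x

lemma natCast_ne_zero_of_pos_of_lt {x : ℕ} (hx : 0 < x) (hxp : x < p) : (x : ZMod p) ≠ 0 := by
  rw [Ne, ZMod.natCast_eq_zero_iff]
  exact Nat.not_dvd_of_pos_of_lt hx hxp

open Classical in
lemma midrangeApproximable_subset (hX : 0 < X) (hM : 0 < M) :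
    midrangeApproximable p X M ⊆ (Finset.Ioc X (p / X)).biUnion fun x =>
      ((Finset.Icc (-(p / (M * x) : ℕ) : ℤ) (p / (M * x) : ℕ)).erase 0).image
        fun y : ℤ => (y : ZMod p) * (x : ZMod p)⁻¹ := by
  intro r hr
  obtain ⟨x, y, hx, hxp, hy, hxy, hyr⟩ := (Finset.mem_filter.mp hr).2
  have hx0 := natCast_ne_zero_of_pos_of_lt (p := p) (by omega) hxp
  simp only [Finset.mem_biUnion, Finset.mem_image, Finset.mem_erase, Finset.mem_Icc,
    Finset.mem_Ioc]
  refine ⟨x, ⟨hx, ?_⟩, y, ⟨?_, ?_⟩, ?_⟩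
  · rw [Nat.le_div_iff_mul_le hX]
    calc x * X ≤ x * y.natAbs := by gcongr
      _ ≤ M * (x * y.natAbs) := Nat.le_mul_of_pos_left _ hM
      _ ≤ p := by rw [← mul_assoc]; exact hxy.le
  · rintro rfl
    simp at hy
  · have : y.natAbs ≤ p / (M * x) := by
      rw [Nat.le_div_iff_mul_le (Nat.mul_pos hM (by omega)), mul_comm]
      exact hxy.le
    omega
  · rw [hyr, mul_inv_cancel_right₀ hx0]

lemma card_Icc_neg_erase_zero (k : ℕ) : ((Finset.Icc (-k : ℤ) k).erase 0).card = 2 * k := by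
  rw [Finset.card_erase_of_mem (by simp), Int.card_Icc]
  omega

lemma card_midrangeApproximable_le (hX : 0 < X) (hM : 0 < M) (hXp : X ^ 2 ≤ p) :
    ((midrangeApproximable p X M).card : ℝ) ≤ 2 * p / M * Real.log (p / X ^ 2) := by
  classical
  have : (0 : ℝ) < X := by exact_mod_cast hX
  have hXpX : X ≤ p / X := by rwa [Nat.le_div_iff_mul_le hX, ← pow_two]
  have hpX : (0 : ℝ) < (p / X : ℕ) := by exact_mod_cast hX.trans_le hXpX
  have hcard : ∀ x ∈ Finset.Ioc X (p / X),
      ((((Finset.Icc (-(p / (M * x) : ℕ) : ℤ) (p / (M * x) : ℕ)).erase 0).image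
        fun y : ℤ => (y : ZMod p) * (x : ZMod p)⁻¹).card : ℝ) ≤ 2 * p / M * (1 / x) := by
    intro x _
    calc _ ≤ (((Finset.Icc (-(p / (M * x) : ℕ) : ℤ) (p / (M * x) : ℕ)).erase 0).card : ℝ) := by
          exact_mod_cast Finset.card_image_le
      _ = 2 * ((p / (M * x) : ℕ) : ℝ) := by
          exact_mod_cast card_Icc_neg_erase_zero _
      _ ≤ 2 * ((p : ℝ) / (M * x : ℕ)) := by gcongr; exact Nat.cast_div_le
      _ = 2 * p / M * (1 / x) := by push_cast; ring
  calc ((midrangeApproximable p X M).card : ℝ)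
      ≤ ∑ x ∈ Finset.Ioc X (p / X), 2 * p / M * (1 / (x : ℝ)) := by
        refine (Nat.cast_le.mpr ((Finset.card_le_card (midrangeApproximable_subset hX hM)).trans
          Finset.card_biUnion_le)).trans ?_
        rw [Nat.cast_sum]
        exact Finset.sum_le_sum hcard
    _ ≤ 2 * p / M * Real.log ((p / X : ℕ) / X) := by
        rw [← Finset.mul_sum]
        gcongr
        exact sum_Ioc_one_div_le_log hX hXpX
    _ ≤ 2 * p / M * Real.log (p / X ^ 2) := by
        rw [pow_two, ← div_div]
        gcongr
        exact Nat.cast_div_le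

lemma isBadlyApproximable_of_notMem_midrangeApproximable {r : ZMod p} (hr : r ≠ 0)
    (h : IsBadlyApproximable X M r) (hinv : IsBadlyApproximable X M r⁻¹)
    (hmid : r ∉ midrangeApproximable p X M) : IsBadlyApproximable (p - 1) M r := by
  intro x hx hxp y hy
  rcases le_or_gt x X with hxX | hxX
  · exact h x hx hxX y hy
  have hx0 := natCast_ne_zero_of_pos_of_lt (p := p) hx (by omega)
  rcases le_or_gt y.natAbs X with hyX | hyX
  · have hy0 : y ≠ 0 := by
      rintro rfl
      exact mul_ne_zero hr hx0 (by simpa using hy.symm)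
    have hle := hinv y.natAbs (Int.natAbs_pos.mpr hy0) hyX (y.sign * x) ?_
    · rw [Int.natAbs_mul, Int.natAbs_sign_of_ne_zero hy0, one_mul, Int.natAbs_natCast] at hle
      rwa [mul_right_comm]
    · rw [← Int.cast_natCast (R := ZMod p) y.natAbs, ← Int.sign_mul_self_eq_natAbs]
      push_cast
      rw [hy]
      field_simp
  · classical
    by_contra! hlt
    refine hmid (Finset.mem_filter.mpr ⟨Finset.mem_univ _, x, y, hxX, ?_, hyX, hlt, hy⟩)
    omega

end MiddleRange

/-! ### Real numbers with bounded partial quotients -/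

section ConvergentPair

open MeasureTheory

/-- Two consecutive convergents `prevNum / prevDen` and `num / den` of a real number, the data
that determine a cylinder set of the Gauss map. -/
structure ConvergentPair where
  num : ℤ
  prevNum : ℤ
  den : ℤ
  prevDen : ℤ
  den_pos : 0 < den
  prevDen_nonneg : 0 ≤ prevDen
  prevDen_le_den : prevDen ≤ den
  det_sq : (prevNum * den - num * prevDen) ^ 2 = 1

namespace ConvergentPair

/-- The pair `1 / 0`, `0 / 1` of convergents from which every expansion `[0; c₁, …]` starts. -/
def start : ConvergentPair := ⟨0, 1, 1, 0, by simp, by simp, by simp, by simp⟩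

variable (v : ConvergentPair) (c : ℕ) (α : ℝ) {x u : ℤ}

/-- The pair obtained by appending the partial quotient `c + 1`; the shift by one makes every
`c : ℕ` admissible. -/
def next : ConvergentPair where
  num := (c + 1) * v.num + v.prevNum
  prevNum := v.num
  den := (c + 1) * v.den + v.prevDen
  prevDen := v.den
  den_pos := add_pos_of_pos_of_nonneg (mul_pos (by positivity) v.den_pos) v.prevDen_nonneg
  prevDen_nonneg := v.den_pos.le
  prevDen_le_den := by nlinarith [mul_nonneg c.cast_nonneg v.den_pos.le, v.prevDen_nonneg]
  det_sq := by linear_combination v.det_sq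

/-- The determinant `±1` of the pair, i.e. the sign of `α - num / den` for `α` in the cylinder. -/
def sign : ℤ := v.prevNum * v.den - v.num * v.prevDen

/-- The distance `|den * α - num|`, for `α` in the cylinder. -/
def err : ℝ := v.sign * (v.den * α - v.num)

/-- The distance `|prevDen * α - prevNum|`, for `α` in the cylinder. -/
def prevErr : ℝ := v.sign * (v.prevNum - v.prevDen * α)

/-- The real numbers whose continued fraction expansion begins with the convergents `v`. -/
def cylinder : Set ℝ := {α | 0 < v.err α ∧ v.err α < v.prevErr α}

lemma den_next : (v.next c).den = (c + 1) * v.den + v.prevDen := rfl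

lemma prevDen_next : (v.next c).prevDen = v.den := rfl

lemma sign_next : (v.next c).sign = -v.sign := by
  simp only [sign, next]
  ring

lemma err_next : (v.next c).err α = v.prevErr α - (c + 1) * v.err α := by
  simp only [err, prevErr, sign_next]
  simp only [next]
  push_cast
  ring

lemma prevErr_next : (v.next c).prevErr α = v.err α := by
  simp only [err, prevErr, sign_next]
  simp only [next]
  push_cast
  ring

lemma sq_sign : (v.sign : ℝ) ^ 2 = 1 := by exact_mod_cast v.det_sq

lemma sign_ne_zero : (v.sign : ℝ) ≠ 0 := by
  intro h
  simpa [h] using v.sq_sign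

lemma abs_sign : |(v.sign : ℝ)| = 1 := by
  rw [← sq_eq_sq₀ (abs_nonneg _) zero_le_one, sq_abs, v.sq_sign, one_pow]

lemma err_mul_prevDen_add_prevErr_mul_den :
    v.err α * v.prevDen + v.prevErr α * v.den = 1 := by
  have hsign : (v.sign : ℝ) = v.prevNum * v.den - v.num * v.prevDen := by simp [sign]
  simp only [err, prevErr]
  linear_combination v.sq_sign - v.sign * hsign

variable {v c α}

lemma cylinder_eq_preimage_err :
    v.cylinder = v.err ⁻¹' Set.Ioo 0 (1 / (v.den + v.prevDen : ℝ)) := by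
  ext α
  have hden : (0 : ℝ) < v.den := by exact_mod_cast v.den_pos
  have hprev : (0 : ℝ) ≤ v.prevDen := by exact_mod_cast v.prevDen_nonneg
  have hone := v.err_mul_prevDen_add_prevErr_mul_den α
  rw [Set.mem_preimage, Set.mem_Ioo, lt_div_iff₀ (by positivity)]
  refine and_congr_right fun _ => ?_
  rw [← mul_lt_mul_iff_left₀ hden]
  constructor <;> intro <;> linarith

lemma mem_cylinder_start : α ∈ start.cylinder ↔ α ∈ Set.Ioo 0 1 := by
  simp [cylinder_eq_preimage_err, err, sign, start]

lemma volume_cylinder :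
    volume v.cylinder = ENNReal.ofReal (1 / (v.den * (v.den + v.prevDen))) := by
  have hden : (0 : ℝ) < v.den := by exact_mod_cast v.den_pos
  have hpreimage : v.cylinder = (v.sign * v.den * · : ℝ → ℝ) ⁻¹'
      ((· + -(v.sign * v.num : ℝ)) ⁻¹' Set.Ioo 0 (1 / (v.den + v.prevDen : ℝ))) := by
    rw [cylinder_eq_preimage_err, ← Set.preimage_comp]
    congr 1 with α
    simp only [err, Function.comp_apply]
    ring
  have hsd : (v.sign * v.den : ℝ) ≠ 0 := mul_ne_zero v.sign_ne_zero hden.ne'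
  rw [hpreimage, Real.volume_preimage_mul_left hsd, measure_preimage_add_right, Real.volume_Ioo,
    ← ENNReal.ofReal_mul (abs_nonneg _), abs_inv, abs_mul, v.abs_sign, abs_of_pos hden]
  congr 1
  field_simp
  simp

lemma measurableSet_cylinder : MeasurableSet v.cylinder := by
  have : Measurable v.err := by
    unfold err
    fun_prop
  rw [cylinder_eq_preimage_err]
  exact this measurableSet_Ioo

lemma cylinder_next_subset : (v.next c).cylinder ⊆ v.cylinder := by
  rintro α ⟨hpos, hlt⟩
  rw [prevErr_next] at hlt
  have herr := hpos.trans hlt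
  rw [err_next] at hpos
  exact ⟨herr, by nlinarith [mul_nonneg (c.cast_nonneg (α := ℝ)) herr.le]⟩

lemma disjoint_cylinder_next {d : ℕ} (hcd : c < d) :
    Disjoint (v.next c).cylinder (v.next d).cylinder := by
  rw [Set.disjoint_left]
  rintro α ⟨-, hlt⟩ ⟨hpos, hlt'⟩
  rw [prevErr_next] at hlt hlt'
  have := hpos.trans hlt'
  rw [err_next] at hlt hpos
  have : (c : ℝ) + 1 ≤ d := by exact_mod_cast hcd
  nlinarith

lemma prevErr_le_abs_mul_sub (hα : α ∈ v.cylinder) (hx : 0 < x) (hxden : x < v.den) :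
    v.prevErr α ≤ |x * α - u| := by
  obtain ⟨herr, hlt⟩ := hα
  have hprev := v.prevDen_nonneg
  have := v.den_pos
  obtain ⟨m, hm⟩ : ∃ m, m = v.sign * (u * v.den - x * v.num) := ⟨_, rfl⟩
  obtain ⟨n, hn⟩ : ∃ n, n = v.sign * (x * v.prevNum - u * v.prevDen) := ⟨_, rfl⟩
  have hxmn : x = m * v.prevDen + n * v.den := by
    rw [hm, hn]
    unfold sign
    linear_combination -x * v.det_sq
  have habs : |x * α - u| = |m * v.prevErr α - n * v.err α| := by
    have hsign : (v.sign : ℝ) = v.prevNum * v.den - v.num * v.prevDen := by simp [sign]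
    have hcomb : m * v.prevErr α - n * v.err α = -(v.sign * (x * α - u)) := by
      rw [hm, hn, err, prevErr]
      push_cast
      linear_combination (v.sign * (u - x * α)) * v.sq_sign - (v.sign ^ 2 * (u - x * α)) * hsign
    rw [hcomb, abs_neg, abs_mul, v.abs_sign, one_mul]
  rw [habs]
  rcases lt_trichotomy m 0 with hneg | rfl | hpos
  · have hn0 : 0 ≤ n := by nlinarith
    have : (m : ℝ) ≤ -1 := by exact_mod_cast Int.le_sub_one_of_lt hneg
    have : (0 : ℝ) ≤ n := by exact_mod_cast hn0
    exact le_abs.mpr (.inr (by nlinarith))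
  · exfalso
    have : 0 < n := by nlinarith
    nlinarith
  · have hn0 : n ≤ 0 := by
      by_contra!
      nlinarith
    have : (1 : ℝ) ≤ m := by exact_mod_cast hpos
    have : (n : ℝ) ≤ 0 := by exact_mod_cast hn0
    exact le_abs.mpr (.inl (by nlinarith))

/-- The numbers in the cylinder of `v` whose next `k` partial quotients are at most `M`. -/
def boundedDigits (M : ℕ) : ℕ → ConvergentPair → Set ℝ
  | 0, v => v.cylinder
  | k + 1, v => ⋃ c ∈ Finset.range M, boundedDigits M k (v.next c)

variable {M k : ℕ}

lemma boundedDigits_subset_cylinder : boundedDigits M k v ⊆ v.cylinder := by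
  induction k generalizing v with
  | zero => exact subset_rfl
  | succ k ih => exact Set.iUnion₂_subset fun c _ => ih.trans cylinder_next_subset

lemma measurableSet_boundedDigits : MeasurableSet (boundedDigits M k v) := by
  induction k generalizing v with
  | zero => exact measurableSet_cylinder
  | succ k ih => exact Finset.measurableSet_biUnion _ fun c _ => ih

lemma pairwiseDisjoint_boundedDigits_next :
    (Finset.range M : Set ℕ).PairwiseDisjoint fun c => boundedDigits M k (v.next c) := by
  intro c _ d _ hcd
  rcases hcd.lt_or_gt with h | h
  · exact (disjoint_cylinder_next h).mono boundedDigits_subset_cylinder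
      boundedDigits_subset_cylinder
  · exact (disjoint_cylinder_next h).symm.mono boundedDigits_subset_cylinder
      boundedDigits_subset_cylinder

lemma sum_range_one_div_mul_add {a b : ℝ} (ha : 0 < a) (hb : 0 ≤ b) :
    ∑ c ∈ Finset.range M, 1 / (((c + 1) * a + b) * ((c + 1) * a + b + a)) =
      M / ((a + b) * ((M + 1) * a + b)) := by
  induction M with
  | zero => simp
  | succ M ih =>
    rw [Finset.sum_range_succ, ih]
    have : 0 < (M + 1) * a + b := by positivity
    push_cast
    field_simp
    ring

lemma le_volume_boundedDigits :
    ENNReal.ofReal (((M : ℝ) / (M + 2)) ^ k * (1 / (v.den * (v.den + v.prevDen)))) ≤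
      volume (boundedDigits M k v) := by
  induction k generalizing v with
  | zero => simp [boundedDigits, volume_cylinder]
  | succ k ih =>
    have hden : (0 : ℝ) < v.den := by exact_mod_cast v.den_pos
    have hprev : (0 : ℝ) ≤ v.prevDen := by exact_mod_cast v.prevDen_nonneg
    have hle : (v.prevDen : ℝ) ≤ v.den := by exact_mod_cast v.prevDen_le_den
    calc ENNReal.ofReal (((M : ℝ) / (M + 2)) ^ (k + 1) * (1 / (v.den * (v.den + v.prevDen))))
        ≤ ENNReal.ofReal (((M : ℝ) / (M + 2)) ^ k *
            (M / ((v.den + v.prevDen) * ((M + 1) * v.den + v.prevDen)))) := by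
          refine ENNReal.ofReal_le_ofReal ?_
          rw [pow_succ, mul_assoc, div_mul_div_comm, mul_one]
          gcongr _ * (M / ?_)
          calc (v.den + v.prevDen : ℝ) * ((M + 1) * v.den + v.prevDen)
              ≤ (v.den + v.prevDen) * ((M + 1) * v.den + v.den) := by gcongr
            _ = (M + 2) * (v.den * (v.den + v.prevDen)) := by ring
      _ = ∑ c ∈ Finset.range M, ENNReal.ofReal (((M : ℝ) / (M + 2)) ^ k *
            (1 / ((v.next c).den * ((v.next c).den + (v.next c).prevDen)))) := by
          rw [← ENNReal.ofReal_sum_of_nonneg, ← Finset.mul_sum,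
            ← sum_range_one_div_mul_add hden hprev]
          · simp only [den_next, prevDen_next]
            push_cast
            rfl
          · intro c _
            simp only [den_next, prevDen_next]
            push_cast
            positivity
      _ ≤ ∑ c ∈ Finset.range M, volume (boundedDigits M k (v.next c)) :=
          Finset.sum_le_sum fun c _ => ih
      _ = volume (boundedDigits M (k + 1) v) :=
          (measure_biUnion_finset pairwiseDisjoint_boundedDigits_next
            fun c _ => measurableSet_boundedDigits).symm

lemma one_le_mul_abs_mul_sub_of_lt_den_next {c : ℕ} (hc : c < M) (hα : α ∈ (v.next c).cylinder)
    (hx : v.den ≤ x) (hxden : x < (v.next c).den) : 1 ≤ (M + 2 : ℝ) * x * |x * α - u| := by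
  have herr : v.err α ≤ |x * α - u| := by
    rw [← v.prevErr_next c]
    exact prevErr_le_abs_mul_sub hα (v.den_pos.trans_le hx) hxden
  obtain ⟨hpos, hlt⟩ := hα
  have hone := (v.next c).err_mul_prevDen_add_prevErr_mul_den α
  rw [prevErr_next] at hone hlt
  rw [den_next, prevDen_next] at hone
  push_cast at hone
  have hden : (0 : ℝ) < v.den := by exact_mod_cast v.den_pos
  have hle : (v.prevDen : ℝ) ≤ v.den := by exact_mod_cast v.prevDen_le_den
  have hcM : (c : ℝ) + 1 ≤ M := by exact_mod_cast hc
  calc 1 = (v.next c).err α * v.den + v.err α * ((c + 1) * v.den + v.prevDen) := hone.symm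
    _ ≤ v.err α * v.den + v.err α * (M * v.den + v.den) := by
        gcongr
        exact (hpos.trans hlt).le
    _ = v.err α * ((M + 2) * v.den) := by ring
    _ ≤ |x * α - u| * ((M + 2) * x) := by
        gcongr
    _ = (M + 2) * x * |x * α - u| := by ring

lemma one_le_mul_abs_mul_sub (hα : α ∈ boundedDigits M k v) (hx : v.den ≤ x)
    (hxk : 2 * x ^ 2 < 2 ^ k * (v.den * (v.den + v.prevDen))) :
    1 ≤ (M + 2 : ℝ) * x * |x * α - u| := by
  induction k generalizing v with
  | zero => nlinarith [v.den_pos, v.prevDen_le_den]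
  | succ k ih =>
    simp only [boundedDigits, Set.mem_iUnion, Finset.mem_range, exists_prop] at hα
    obtain ⟨c, hc, hα⟩ := hα
    by_cases hxden : (v.next c).den ≤ x
    · refine ih hα hxden (hxk.trans_le ?_)
      have hden := v.den_pos
      have hprev := v.prevDen_nonneg
      have hnext : v.den + v.prevDen ≤ (v.next c).den := by
        rw [den_next]
        nlinarith [mul_nonneg c.cast_nonneg hden.le]
      calc 2 ^ (k + 1) * (v.den * (v.den + v.prevDen))
          = 2 ^ k * ((v.den + v.prevDen) * (v.den + v.den)) := by ring
        _ ≤ 2 ^ k * ((v.next c).den * ((v.next c).den + (v.next c).prevDen)) := by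
          rw [prevDen_next]
          gcongr <;> linarith
    · exact one_le_mul_abs_mul_sub_of_lt_den_next hc (boundedDigits_subset_cylinder hα) hx
        (not_le.mp hxden)

end ConvergentPair

end ConvergentPair

section BoundedDigitResidues

open MeasureTheory

variable (p M K : ℕ)

open Classical in
/-- The residues `a` modulo `p` for which `[a / p, (a + 1) / p)` contains a number whose first `K`
partial quotients are at most `M`. -/
noncomputable def boundedDigitResidues [NeZero p] : Finset (ZMod p) :=
  Finset.univ.filter fun a => ∃ α ∈ ConvergentPair.start.boundedDigits M K, ⌊α * p⌋₊ = a.val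

lemma mul_pow_le_card_boundedDigitResidues [NeZero p] :
    (p : ℝ) * ((M : ℝ) / (M + 2)) ^ K ≤ (boundedDigitResidues p M K).card := by
  have hp : (0 : ℝ) < p := by exact_mod_cast NeZero.pos p
  have hcover : ConvergentPair.start.boundedDigits M K ⊆ ⋃ a ∈ boundedDigitResidues p M K,
      Set.Ico ((a.val : ℝ) / p) ((a.val + 1) / p) := by
    intro α hα
    obtain ⟨hα0, hα1⟩ :=
      ConvergentPair.mem_cylinder_start.mp (ConvergentPair.boundedDigits_subset_cylinder hα)
    have hαp : 0 ≤ α * p := by positivity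
    have hval : ((⌊α * p⌋₊ : ℕ) : ZMod p).val = ⌊α * p⌋₊ :=
      ZMod.val_natCast_of_lt ((Nat.floor_lt hαp).mpr (mul_lt_of_lt_one_left hp hα1))
    refine Set.mem_biUnion (x := ((⌊α * p⌋₊ : ℕ) : ZMod p)) ?_ ?_
    · simpa [boundedDigitResidues, hval] using ⟨α, hα, rfl⟩
    · rw [hval, Set.mem_Ico, div_le_iff₀ hp, lt_div_iff₀ hp]
      exact ⟨Nat.floor_le hαp, Nat.lt_floor_add_one _⟩
  have hvolume : ENNReal.ofReal (((M : ℝ) / (M + 2)) ^ K) ≤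
      ENNReal.ofReal ((boundedDigitResidues p M K).card / p) := by
    calc ENNReal.ofReal (((M : ℝ) / (M + 2)) ^ K)
        ≤ volume (ConvergentPair.start.boundedDigits M K) := by
          simpa [ConvergentPair.start] using
            ConvergentPair.le_volume_boundedDigits (v := ConvergentPair.start) (M := M) (k := K)
      _ ≤ ∑ a ∈ boundedDigitResidues p M K,
            volume (Set.Ico ((a.val : ℝ) / p) ((a.val + 1) / p)) :=
          (measure_mono hcover).trans (measure_biUnion_finset_le _ _)
      _ = ENNReal.ofReal ((boundedDigitResidues p M K).card / p) := by
          simp only [Real.volume_Ico, ← sub_div, add_sub_cancel_left, Finset.sum_const]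
          rw [← ENNReal.ofReal_nsmul, nsmul_eq_mul, mul_one_div]
  rw [ENNReal.ofReal_le_ofReal_iff (by positivity), le_div_iff₀ hp] at hvolume
  rwa [mul_comm]

variable {p M K} {N X : ℕ}

lemma mul_abs_mul_sub_le_natAbs_add {x : ℕ} {b y u : ℤ} {α : ℝ} (hb : |α * p - b| ≤ N)
    (hu : b * x - y = p * u) : p * |x * α - u| ≤ y.natAbs + x * N := by
  have huR : (b : ℝ) * x - y = p * u := by exact_mod_cast hu
  calc p * |x * α - u| = |y + x * (α * p - b)| := by
        rw [show y + x * (α * p - b) = p * (x * α - u) by linear_combination -huR, abs_mul,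
          Nat.abs_cast]
    _ ≤ |(y : ℝ)| + |x * (α * p - b)| := abs_add_le _ _
    _ = y.natAbs + x * |α * p - b| := by
        rw [abs_mul, Nat.abs_cast, Nat.cast_natAbs, Int.cast_abs]
    _ ≤ y.natAbs + x * N := by gcongr

variable [Fact p.Prime]

lemma isBadlyApproximable_of_sub_mem_boundedDigitResidues (hX : 2 * X ^ 2 < 2 ^ K)
    (hXN : 2 * (M + 2) * N * X ^ 2 ≤ p) {r : ZMod p} {i : ℕ} (hi : i < N)
    (hr : r - (i : ℕ) ∈ boundedDigitResidues p M K) : IsBadlyApproximable X (2 * (M + 2)) r := by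
  classical
  intro x hx hxX y hy
  obtain ⟨α, hα, hfloor⟩ := (Finset.mem_filter.mp hr).2
  obtain ⟨hα0, -⟩ :=
    ConvergentPair.mem_cylinder_start.mp (ConvergentPair.boundedDigits_subset_cylinder hα)
  have hnear : |α * p - ((⌊α * p⌋₊ + i : ℕ) : ℤ)| ≤ N := by
    have hiN : (i : ℝ) + 1 ≤ N := by exact_mod_cast hi
    have hfloor_le : (⌊α * p⌋₊ : ℝ) ≤ α * p := Nat.floor_le (by positivity)
    have hlt_floor := Nat.lt_floor_add_one (α * p)
    push_cast
    rw [abs_le]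
    constructor <;> linarith [(Nat.cast_nonneg i : (0 : ℝ) ≤ i)]
  obtain ⟨u, hu⟩ : (p : ℤ) ∣ ((⌊α * p⌋₊ + i : ℕ) : ℤ) * x - y := by
    rw [← ZMod.intCast_zmod_eq_zero_iff_dvd]
    push_cast
    rw [hy, hfloor, ZMod.natCast_zmod_val, sub_add_cancel, sub_self]
  have happrox : 1 ≤ (M + 2 : ℝ) * x * |x * α - u| := by
    have hxK : 2 * x ^ 2 < 2 ^ K := lt_of_le_of_lt (by gcongr) hX
    refine ConvergentPair.one_le_mul_abs_mul_sub (x := x) hα (Int.natCast_pos.mpr hx) ?_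
    simpa [ConvergentPair.start] using mod_cast hxK
  have hsmall : 2 * ((M : ℝ) + 2) * N * x ^ 2 ≤ p := by
    exact_mod_cast le_trans (by gcongr) hXN
  have : (p : ℝ) ≤ (M + 2) * x * (y.natAbs + x * N) := by
    calc (p : ℝ) ≤ p * ((M + 2) * x * |x * α - u|) :=
          le_mul_of_one_le_right (by positivity) happrox
      _ = (M + 2) * x * (p * |x * α - u|) := by ring
      _ ≤ (M + 2) * x * (y.natAbs + x * N) := by
          gcongr
          exact mul_abs_mul_sub_le_natAbs_add hnear hu
  have : (p : ℝ) ≤ 2 * (M + 2) * x * y.natAbs := by linarith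
  exact_mod_cast this

end BoundedDigitResidues

/-! ### Existence of bounded partial quotients -/

section Existence

lemma card_midrangeApproximable_lt_of_log_lt {p : ℕ} [Fact p.Prime] {M X : ℕ} {δ : ℝ}
    (hX : 0 < X) (hXp : X ^ 2 ≤ p) (hlog : Real.log (p / X ^ 2) < M * δ ^ 2 / 2) :
    ((midrangeApproximable p X (2 * (M + 2))).card : ℝ) < (δ * p) ^ 2 / (2 * p) := by
  have hp0 : (0 : ℝ) < p := by exact_mod_cast NeZero.pos p
  calc ((midrangeApproximable p X (2 * (M + 2))).card : ℝ)
      ≤ 2 * p / (2 * (M + 2) : ℕ) * Real.log (p / X ^ 2) :=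
        card_midrangeApproximable_le hX (by omega) hXp
    _ < 2 * p / (2 * (M + 2) : ℕ) * ((M + 2) * δ ^ 2 / 2) := by
        gcongr
        refine hlog.trans_le ?_
        gcongr
        linarith
    _ = (δ * p) ^ 2 / (2 * p) := by
        push_cast
        field_simp

lemma exists_isCFOf_of_sqNorm_inversionAvg_le {p : ℕ} [Fact p.Prime] {K M N X : ℕ} {δ : ℝ}
    (hp : 3 ≤ p) (hN : 0 < N) (hX : 0 < X) (hXK : 2 * X ^ 2 < 2 ^ K)
    (hXN : 2 * (M + 2) * N * X ^ 2 ≤ p) (hδ : 0 ≤ δ) (hδM : δ ≤ ((M : ℝ) / (M + 2)) ^ K)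
    (hgap : ∀ f : OnePoint (ZMod p) → ℝ, ∑ x, f x = 0 →
      sqNorm (inversionAvg p N f) ≤ (δ / 4) ^ 2 * sqNorm f)
    (hlog : Real.log (p / X ^ 2) < M * δ ^ 2 / 2) :
    ∃ a : ℕ, 1 ≤ a ∧ a < p ∧ Nat.gcd a p = 1 ∧
      ∃ l : List ℕ, IsCFOf ((a : ℚ) / p) l ∧ ∀ c ∈ l, c ≤ 2 * (M + 2) := by
  classical
  have hp0 : (0 : ℝ) < p := by exact_mod_cast NeZero.pos p
  set A := boundedDigitResidues p M K
  have hA : δ ≤ A.card / p := by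
    rw [le_div_iff₀ hp0, mul_comm]
    exact (by gcongr : p * δ ≤ _).trans (mul_pow_le_card_boundedDigitResidues p M K)
  set S := Finset.univ.filter fun r : ZMod p => r ≠ 0 ∧
    IsBadlyApproximable X (2 * (M + 2)) r ∧ IsBadlyApproximable X (2 * (M + 2)) r⁻¹
  have hcardS : (A.card : ℝ) ^ 2 / (2 * p) ≤ S.card := by
    refine card_sq_div_le_card hp hN (fun f hf => (hgap f hf).trans ?_) ?_
    · rw [mul_comm 4 (p : ℝ), ← div_div]
      gcongr
      exact sqNorm_nonneg f
    · intro r hr i hi j hj hrA hrA'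
      exact Finset.mem_filter.mpr ⟨Finset.mem_univ r, hr,
        isBadlyApproximable_of_sub_mem_boundedDigitResidues hXK hXN hi hrA,
        isBadlyApproximable_of_sub_mem_boundedDigitResidues hXK hXN hj hrA'⟩
  have hmid : (midrangeApproximable p X (2 * (M + 2))).card < S.card := by
    rw [← Nat.cast_lt (α := ℝ)]
    refine (card_midrangeApproximable_lt_of_log_lt hX ?_ hlog).trans_le (le_trans ?_ hcardS)
    · exact (Nat.le_mul_of_pos_left _ (by positivity)).trans hXN
    · gcongr
      rwa [← le_div_iff₀ hp0]
  obtain ⟨r, hrS, hrmid⟩ := Finset.exists_mem_notMem_of_card_lt_card hmid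
  obtain ⟨-, hr, hgood, hinv⟩ := Finset.mem_filter.mp hrS
  have hval : 0 < r.val := Nat.pos_of_ne_zero ((ZMod.val_ne_zero r).mpr hr)
  have hco : r.val.Coprime p := (Nat.coprime_of_lt_prime hval.ne' r.val_lt Fact.out).symm
  refine ⟨r.val, hval, r.val_lt, hco, exists_isCFOf_of_isBadlyApproximable hval r.val_lt hco ?_⟩
  rw [ZMod.natCast_zmod_val]
  exact isBadlyApproximable_of_notMem_midrangeApproximable hr hgood hinv hrmid

lemma add_one_pow_le_two_mul_pow {m N : ℕ} (h : 2 * m ≤ N + 1) : (N + 1) ^ m ≤ 2 * N ^ m := by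
  have hN1 : (0 : ℝ) < N + 1 := by positivity
  have hm : (m : ℝ) / (N + 1) ≤ 1 / 2 := by
    rw [div_le_div_iff₀ hN1 two_pos]
    exact_mod_cast (by omega : m * 2 ≤ 1 * (N + 1))
  have hbernoulli : 1 + (m : ℝ) * -(1 / (N + 1)) ≤ (1 + -(1 / ((N : ℝ) + 1))) ^ m := by
    refine one_add_mul_le_pow ?_ m
    have : 1 / ((N : ℝ) + 1) ≤ 1 := (div_le_one hN1).mpr (by simp)
    linarith
  have hbase : 1 + -(1 / ((N : ℝ) + 1)) = N / (N + 1) := by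
    field_simp
    ring
  rw [hbase, div_pow, mul_neg, mul_one_div] at hbernoulli
  have hhalf : (1 : ℝ) / 2 ≤ N ^ m / (N + 1) ^ m := by linarith
  rw [div_le_div_iff₀ two_pos (by positivity), one_mul, mul_comm] at hhalf
  exact_mod_cast hhalf

lemma exists_two_mul_pow_lt_and_le_four_mul_pow {m p T : ℕ} (hm : m ≠ 0) (hmT : 2 * m ≤ T + 1)
    (hT : 2 * T ^ m < p) : ∃ N, T ≤ N ∧ 2 * N ^ m < p ∧ p ≤ 4 * N ^ m := by
  have hle : ∀ x, 2 * x ^ m < p → x ≤ p := fun x hx => by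
    have := Nat.le_self_pow hm x
    omega
  set N := Nat.findGreatest (fun x => 2 * x ^ m < p) p
  have hTN : T ≤ N := Nat.le_findGreatest (hle T hT) hT
  have hmax : p ≤ 2 * (N + 1) ^ m := by
    by_contra! hlt
    have := Nat.le_findGreatest (P := fun x => 2 * x ^ m < p) (hle _ hlt) hlt
    omega
  have hstep := add_one_pow_le_two_mul_pow (by omega : 2 * m ≤ N + 1)
  exact ⟨N, hTN, Nat.findGreatest_spec (P := fun x => 2 * x ^ m < p) (hle T hT) hT, by omega⟩

variable {n m p : ℕ} {L δ : ℝ}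

lemma two_mul_pow_lt_of_pow_four_le_log (hn : 8 ≤ n) (hm : m ≤ n) (hp : 0 < p)
    (hnp : (n : ℝ) ^ 4 ≤ Real.log p) (hlog : Real.log n ≤ n / 4096) :
    2 * ((n ^ (16 * n ^ 2)) ^ 8) ^ m < p := by
  have hnR : (8 : ℝ) ≤ n := by exact_mod_cast hn
  rw [← Nat.cast_lt (α := ℝ), ← Real.log_lt_log_iff (by positivity) (by positivity)]
  push_cast
  rw [Real.log_mul two_ne_zero (by positivity), ← pow_mul, ← pow_mul, Real.log_pow]
  push_cast
  have hlog2 : Real.log 2 ≤ 1 := by linarith [Real.log_two_lt_d9]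
  have hn4 : (8 : ℝ) ^ 4 ≤ n ^ 4 := by gcongr
  calc Real.log 2 + 16 * (n : ℝ) ^ 2 * (8 * m) * Real.log n
      ≤ 1 + 16 * (n : ℝ) ^ 2 * (8 * n) * (n / 4096) := by gcongr
    _ = 1 + (n : ℝ) ^ 4 / 32 := by ring
    _ < n ^ 4 := by linarith
    _ ≤ Real.log p := hnp

lemma exists_interval_length (hn : 8 ≤ n) (hm : m + 3 = n) (hp : 0 < p)
    (hnp : (n : ℝ) ^ 4 ≤ Real.log p) (hlog : Real.log n ≤ n / 4096) :
    ∃ N : ℕ, (n ^ (16 * n ^ 2)) ^ 8 ≤ N ∧ 2 * N ^ m < p ∧ p ≤ 4 * N ^ m := by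
  refine exists_two_mul_pow_lt_and_le_four_mul_pow (by omega) ?_
    (two_mul_pow_lt_of_pow_four_le_log hn (by omega) hp hnp hlog)
  have : n ^ 2 ≤ (n ^ (16 * n ^ 2)) ^ 8 := by
    rw [← pow_mul]
    exact Nat.pow_le_pow_right (by omega) (by nlinarith)
  nlinarith

lemma exists_mul_sq_le_and_le_sq {N : ℕ} (hN : 0 < N) (hNp : N ^ 2 ≤ p) :
    ∃ X, 0 < X ∧ (N * X) ^ 2 ≤ p ∧ p ≤ (2 * N * X) ^ 2 := by
  have hX : 0 < p.sqrt / N := Nat.div_pos (Nat.le_sqrt'.mpr hNp) hN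
  refine ⟨p.sqrt / N, hX, Nat.le_sqrt'.mp (Nat.mul_div_le _ _), ?_⟩
  have hlt : p.sqrt < N * (p.sqrt / N + 1) := Nat.lt_mul_div_succ _ hN
  exact (Nat.sqrt_lt'.mp (hlt.trans_le (by nlinarith))).le

lemma log_div_sq_le {N X : ℕ} (hn : 8 ≤ n) (hm : m + 3 = n) (hX : 0 < X) (hN : 0 < N)
    (hp : 0 < p) (hNp : N ^ m ≤ p) (hpX : p ≤ (2 * N * X) ^ 2)
    (hpn : Real.log p ≤ 16 * (n : ℝ) ^ 4) : Real.log (p / X ^ 2) ≤ 66 * (n : ℝ) ^ 3 := by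
  have hnR : (8 : ℝ) ≤ n := by exact_mod_cast hn
  have hlogN : Real.log N ≤ 32 * n ^ 3 := by
    have hmlog : m * Real.log N ≤ Real.log p := by
      rw [← Real.log_pow]
      exact Real.log_le_log (by positivity) (by exact_mod_cast hNp)
    have hhalf : (n : ℝ) / 2 ≤ m := by
      have : (m : ℝ) + 3 = n := by exact_mod_cast hm
      linarith
    have : (n : ℝ) / 2 * Real.log N ≤ n / 2 * (32 * n ^ 3) :=
      calc (n : ℝ) / 2 * Real.log N ≤ m * Real.log N := by gcongr
        _ ≤ 16 * n ^ 4 := hmlog.trans hpn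
        _ = n / 2 * (32 * n ^ 3) := by ring
    exact le_of_mul_le_mul_left this (by positivity)
  have hn3 : (8 : ℝ) ^ 3 ≤ n ^ 3 := by gcongr
  calc Real.log (p / X ^ 2) ≤ Real.log ((2 * N) ^ 2) := by
        refine Real.log_le_log (by positivity) ?_
        rw [div_le_iff₀ (by positivity), ← mul_pow]
        exact_mod_cast hpX
    _ = 2 * (Real.log 2 + Real.log N) := by
        rw [Real.log_pow, Real.log_mul two_ne_zero (by positivity)]
        norm_num
    _ ≤ 66 * n ^ 3 := by linarith [Real.log_two_lt_d9]

lemma four_div_le_of_one_div_le_pow (hn : 8 ≤ n) (hδ : 0 ≤ δ) (hL : 0 < L)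
    (hLn : L ≤ 16 * (n : ℝ) ^ 4) (h : 1 / L ≤ δ ^ 16) : 4 / (n : ℝ) ≤ δ := by
  have hnR : (8 : ℝ) ≤ n := by exact_mod_cast hn
  refine le_of_pow_le_pow_left₀ (n := 16) (by norm_num) hδ (le_trans ?_ h)
  rw [div_pow, div_le_div_iff₀ (by positivity) hL]
  calc (4 : ℝ) ^ 16 * L ≤ 4 ^ 16 * (16 * (n : ℝ) ^ 4) := by gcongr
    _ = 8 ^ 12 * (n : ℝ) ^ 4 := by ring
    _ ≤ (n : ℝ) ^ 12 * n ^ 4 := by gcongr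
    _ = 1 * (n : ℝ) ^ 16 := by ring

lemma mul_log_div_lt_sq_of_one_div_le_pow (hn : 8 ≤ n) (hL : 0 < L)
    (hLn : L ≤ 16 * (n : ℝ) ^ 4) (hlog : Real.log n ^ 2 ≤ n / 4096) (h : 1 / L ≤ δ ^ 16) :
    32 * Real.log n / n < δ ^ 2 := by
  have : (8 : ℝ) ≤ n := by exact_mod_cast hn
  refine lt_of_pow_lt_pow_left₀ 8 (by positivity) (lt_of_lt_of_le ?_ (h.trans_eq (pow_mul δ 2 8)))
  rw [div_pow, div_lt_div_iff₀ (by positivity) hL]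
  calc (32 * Real.log n) ^ 8 * L ≤ (32 * Real.log n) ^ 8 * (16 * n ^ 4) := by gcongr
    _ = 2 ^ 44 * (Real.log n ^ 2) ^ 4 * n ^ 4 := by ring
    _ ≤ 2 ^ 44 * (n / 4096) ^ 4 * n ^ 4 := by gcongr
    _ = 1 / 16 * n ^ 8 := by ring
    _ < 1 * n ^ 8 := by
        gcongr
        norm_num

lemma cube_lt_mul_sq_of_one_div_le_pow {M : ℝ} (hn : 8 ≤ n) (hL : 1 < L)
    (hnL : (n : ℝ) ^ 4 ≤ L) (hLn : L ≤ 16 * (n : ℝ) ^ 4) (hlog : Real.log n ^ 2 ≤ n / 4096)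
    (h : 1 / L ≤ δ ^ 16) (hM : 64 * L / Real.log L ≤ M) : 66 * (n : ℝ) ^ 3 < M * δ ^ 2 / 2 := by
  have hnR : (8 : ℝ) ≤ n := by exact_mod_cast hn
  have hlogL : 0 < Real.log L := Real.log_pos hL
  have hlogn : 0 < Real.log n := Real.log_pos (by linarith)
  have hδ2 := mul_log_div_lt_sq_of_one_div_le_pow hn (by linarith) hLn hlog h
  have hlogL8 : Real.log L ≤ 8 * Real.log n :=
    calc Real.log L ≤ Real.log ((n : ℝ) ^ 8) := by
          refine Real.log_le_log (by linarith) (hLn.trans ?_)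
          calc 16 * (n : ℝ) ^ 4 ≤ 8 ^ 4 * (n : ℝ) ^ 4 := by gcongr; norm_num
            _ ≤ (n : ℝ) ^ 4 * n ^ 4 := by gcongr
            _ = (n : ℝ) ^ 8 := by ring
      _ = 8 * Real.log n := by
          rw [Real.log_pow]
          norm_num
  calc 66 * (n : ℝ) ^ 3 < 128 * n ^ 3 := by gcongr; norm_num
    _ = 64 * n ^ 4 / (8 * Real.log n) * (32 * Real.log n / n) / 2 := by
        field_simp
        norm_num
    _ ≤ 64 * L / Real.log L * δ ^ 2 / 2 := by gcongr
    _ ≤ M * δ ^ 2 / 2 := by gcongr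

lemma one_div_le_pow_div_add_two {K M : ℕ} (hL : 1 < L) (hM : 64 * L / Real.log L ≤ M)
    (hK : (K : ℝ) ≤ 2 * L) : 1 / L ≤ (((M : ℝ) / (M + 2)) ^ K) ^ 16 := by
  have hlogL : 0 < Real.log L := Real.log_pos hL
  have hM0 : (0 : ℝ) < M := lt_of_lt_of_le (by positivity) hM
  have hexp : Real.exp (-(2 / M)) ≤ (M : ℝ) / (M + 2) := by
    rw [Real.exp_neg, show (M : ℝ) / (M + 2) = (2 / (M : ℝ) + 1)⁻¹ by field_simp; ring]
    gcongr
    exact Real.add_one_le_exp _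
  have hKM : 32 * (K : ℝ) ≤ M * Real.log L := by
    rw [div_le_iff₀ hlogL] at hM
    linarith
  calc 1 / L = Real.exp (-Real.log L) := by rw [Real.exp_neg, Real.exp_log (by linarith), one_div]
    _ ≤ Real.exp ((K * 16 : ℕ) * -(2 / M)) := by
        rw [Real.exp_le_exp, mul_neg, neg_le_neg_iff, ← mul_div_assoc, div_le_iff₀ hM0]
        push_cast
        linarith
    _ = (Real.exp (-(2 / M)) ^ K) ^ 16 := by rw [Real.exp_nat_mul, pow_mul]
    _ ≤ (((M : ℝ) / (M + 2)) ^ K) ^ 16 := by gcongr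

lemma natLog_two_add_one_le_two_mul_log (hp : 2 ≤ Real.log p) :
    ((Nat.log 2 p + 1 : ℕ) : ℝ) ≤ 2 * Real.log p := by
  have hp0 : p ≠ 0 := by
    rintro rfl
    norm_num at hp
  have hlog : Nat.log 2 p * Real.log 2 ≤ Real.log p := by
    rw [← Real.log_pow]
    exact Real.log_le_log (by positivity) (by exact_mod_cast Nat.pow_log_le_self 2 hp0)
  push_cast
  nlinarith [Real.log_two_gt_d9]

lemma exists_nat_mul_div_log_le (hL : Real.exp 1 ≤ L) :
    ∃ M : ℕ, 64 * L / Real.log L ≤ M ∧ 2 * (M + 2 : ℝ) ≤ 134 * L / Real.log L := by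
  have hL0 : 0 < L := (Real.exp_pos 1).trans_le hL
  have hlogL : 1 ≤ Real.log L := (Real.le_log_iff_exp_le hL0).mpr hL
  refine ⟨⌈64 * L / Real.log L⌉₊, Nat.le_ceil _, ?_⟩
  have hceil := Nat.ceil_lt_add_one (show 0 ≤ 64 * L / Real.log L by positivity)
  have hone : 1 ≤ L / Real.log L := by
    rw [one_le_div (by linarith)]
    linarith [Real.log_le_sub_one_of_pos hL0]
  rw [mul_div_assoc] at hceil
  rw [mul_div_assoc, mul_div_assoc]
  linarith

lemma two_mul_add_two_le_pow_eight {M : ℕ} (hn : 8 ≤ n) (hL : 1 ≤ Real.log L)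
    (hL0 : 0 ≤ L) (hLn : L ≤ 16 * (n : ℝ) ^ 4) (hM : 2 * (M + 2 : ℝ) ≤ 134 * L / Real.log L) :
    2 * (M + 2) ≤ n ^ 8 := by
  have hnR : (8 : ℝ) ≤ n := by exact_mod_cast hn
  rw [← Nat.cast_le (α := ℝ)]
  push_cast
  calc 2 * (M + 2 : ℝ) ≤ 134 * L := hM.trans (div_le_self (by positivity) hL)
    _ ≤ 134 * (16 * n ^ 4) := by gcongr
    _ ≤ 8 ^ 4 * n ^ 4 := by linarith [pow_nonneg n.cast_nonneg 4 (M₀ := ℝ)]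
    _ ≤ (n : ℝ) ^ 4 * n ^ 4 := by gcongr
    _ = (n : ℝ) ^ 8 := by ring

lemma sqNorm_inversionAvg_le_sq_div_four [Fact p.Prime] {N s : ℕ} (hn : 8 ≤ n) (hs : n = 2 ^ s)
    (hm : m + 3 = n) (hN : (n ^ (16 * n ^ 2)) ^ 8 ≤ N) (hNp : 2 * N ^ m < p) (hpN : p ≤ 4 * N ^ m)
    (hδ : 4 / (n : ℝ) ≤ δ) {f : OnePoint (ZMod p) → ℝ} (hf : ∑ x, f x = 0) :
    sqNorm (inversionAvg p N f) ≤ (δ / 4) ^ 2 * sqNorm f := by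
  refine (sqNorm_inversionAvg_le hn hs hm hN hNp hpN hf).trans ?_
  refine mul_le_mul_of_nonneg_right ?_ (sqNorm_nonneg f)
  rw [← one_div_pow]
  refine pow_le_pow_left₀ (by positivity) ?_ 2
  linarith [show 1 / (n : ℝ) = 4 / n / 4 by ring]

lemma exists_isCFOf_of_pow_four_le_log [Fact p.Prime] {s : ℕ} (hn : 8 ≤ n) (hs : n = 2 ^ s)
    (hnp : (n : ℝ) ^ 4 ≤ Real.log p) (hpn : Real.log p ≤ 16 * (n : ℝ) ^ 4)
    (hlog : Real.log n ^ 2 ≤ n / 4096) :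
    ∃ a : ℕ, 1 ≤ a ∧ a < p ∧ Nat.gcd a p = 1 ∧ ∃ l : List ℕ, IsCFOf ((a : ℚ) / p) l ∧
      ∀ c ∈ l, (c : ℝ) ≤ 134 * Real.log p / Real.log (Real.log p) := by
  have hp0 : 0 < p := NeZero.pos p
  have hnR : (8 : ℝ) ≤ n := by exact_mod_cast hn
  have hn4 : (8 : ℝ) ^ 4 ≤ n ^ 4 := by gcongr
  have hexp := Real.exp_one_lt_d9
  have hlogn : 1 ≤ Real.log n := (Real.le_log_iff_exp_le (by linarith)).mpr (by linarith)
  have hloglog : 1 ≤ Real.log (Real.log p) :=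
    (Real.le_log_iff_exp_le (by linarith)).mpr (by linarith)
  obtain ⟨m, hm⟩ : ∃ m, m + 3 = n := ⟨n - 3, by omega⟩
  obtain ⟨N, hN, hNp, hpN⟩ := exists_interval_length hn hm hp0 hnp (by nlinarith)
  have hNn : n ^ 8 ≤ N := le_trans (by gcongr; exact Nat.le_self_pow (by positivity) n) hN
  have hN0 : 0 < N := lt_of_lt_of_le (by positivity) hNn
  have hNsq : N ^ 2 ≤ N ^ m := Nat.pow_le_pow_right hN0 (by omega)
  obtain ⟨X, hX, hXp, hpX⟩ := exists_mul_sq_le_and_le_sq hN0 (by omega : N ^ 2 ≤ p)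
  obtain ⟨M, hM, hM134⟩ := exists_nat_mul_div_log_le (by linarith : Real.exp 1 ≤ Real.log p)
  have hMN : 2 * (M + 2) ≤ N :=
    (two_mul_add_two_le_pow_eight hn hloglog (by linarith) hpn hM134).trans hNn
  have hXN : 2 * (M + 2) * N * X ^ 2 ≤ p :=
    calc 2 * (M + 2) * N * X ^ 2 ≤ N * N * X ^ 2 := by gcongr
      _ = (N * X) ^ 2 := by ring
      _ ≤ p := hXp
  have hXK : 2 * X ^ 2 < 2 ^ (Nat.log 2 p + 1) := by
    refine lt_of_le_of_lt (le_trans ?_ hXN) (Nat.lt_pow_succ_log_self one_lt_two p)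
    gcongr
    nlinarith
  have hδ := one_div_le_pow_div_add_two (by linarith) hM
    (natLog_two_add_one_le_two_mul_log (by linarith))
  set δ := ((M : ℝ) / (M + 2)) ^ (Nat.log 2 p + 1)
  have hδ0 : 0 ≤ δ := by positivity
  have hδn := four_div_le_of_one_div_le_pow hn hδ0 (by linarith) hpn hδ
  have hlogX : Real.log (p / X ^ 2) < M * δ ^ 2 / 2 :=
    (log_div_sq_le hn hm hX hN0 hp0 (by omega) hpX hpn).trans_lt
      (cube_lt_mul_sq_of_one_div_le_pow hn (by linarith) hnp hpn hlog hδ hM)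
  obtain ⟨a, ha, hap, hco, l, hl, hbound⟩ := exists_isCFOf_of_sqNorm_inversionAvg_le
    (by nlinarith) hN0 hX hXK hXN hδ0 le_rfl
    (fun _ => sqNorm_inversionAvg_le_sq_div_four hn hs hm hN hNp hpN hδn) hlogX
  exact ⟨a, ha, hap, hco, l, hl, fun c hc => le_trans (by exact_mod_cast hbound c hc) hM134⟩

lemma exists_two_pow_pow_four_le {L : ℝ} (hL : 1 ≤ L) :
    ∃ s : ℕ, ((2 ^ s : ℕ) : ℝ) ^ 4 ≤ L ∧ L < 16 * ((2 ^ s : ℕ) : ℝ) ^ 4 := by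
  obtain ⟨s, hle, hlt⟩ := exists_nat_pow_near hL (by norm_num : (1 : ℝ) < 16)
  have hs : ((2 ^ s : ℕ) : ℝ) ^ 4 = 16 ^ s := by
    push_cast
    rw [← pow_mul, mul_comm, pow_mul]
    norm_num
  exact ⟨s, hs ▸ hle, by rw [hs, ← pow_succ']; exact hlt⟩

lemma exists_forall_sq_log_le : ∃ n₀ : ℕ, 8 ≤ n₀ ∧ ∀ n ≥ n₀, Real.log n ^ 2 ≤ (n : ℝ) / 4096 := by
  have hlog := (Real.isLittleO_pow_log_id_atTop (n := 2)).bound (by norm_num : (0 : ℝ) < 1 / 4096)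
  obtain ⟨n₁, hn₁⟩ :=
    Filter.eventually_atTop.mp ((tendsto_natCast_atTop_atTop (R := ℝ)).eventually hlog)
  refine ⟨max n₁ 8, le_max_right _ _, fun n hn => ?_⟩
  have := hn₁ n ((le_max_left _ _).trans hn)
  rw [Real.norm_of_nonneg (by positivity), id, Real.norm_of_nonneg (by positivity)] at this
  linarith

end Existence

end Korobov

/-- For all sufficiently large primes `q` there is `a` coprime to `q` whose
partial quotients are all `O(log q / log log q)`. -/
theorem korobov_bound_improved :
    ∃ C : ℝ, 0 < C ∧ ∃ Q₀ : ℕ, ∀ q : ℕ, q.Prime → Q₀ ≤ q →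
      ∃ a : ℕ, 1 ≤ a ∧ a < q ∧ Nat.gcd a q = 1 ∧
        ∃ l : List ℕ, IsCFOf ((a : ℚ) / q) l ∧
          ∀ c ∈ l, (c : ℝ) ≤ C * Real.log q / Real.log (Real.log q) := by
  obtain ⟨n₀, hn₀, hlog⟩ := Korobov.exists_forall_sq_log_le
  refine ⟨134, by norm_num, ⌈Real.exp (16 * (n₀ : ℝ) ^ 4)⌉₊, fun q hq hQ => ?_⟩
  have : Fact q.Prime := ⟨hq⟩
  have hLq : 16 * (n₀ : ℝ) ^ 4 ≤ Real.log q :=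
    (Real.le_log_iff_exp_le (by exact_mod_cast hq.pos)).mpr (Nat.ceil_le.mp hQ)
  have hn₀R : (8 : ℝ) ^ 4 ≤ (n₀ : ℝ) ^ 4 := by gcongr; exact_mod_cast hn₀
  obtain ⟨s, hle, hlt⟩ := Korobov.exists_two_pow_pow_four_le (by linarith : 1 ≤ Real.log q)
  have hn₀s : n₀ ≤ 2 ^ s := by
    have : (n₀ : ℝ) ^ 4 < ((2 ^ s : ℕ) : ℝ) ^ 4 := by linarith
    exact_mod_cast (lt_of_pow_lt_pow_left₀ 4 (by positivity) this).le
  exact Korobov.exists_isCFOf_of_pow_four_le_log (hn₀.trans hn₀s) rfl hle hlt.le (hlog _ hn₀s)
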